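/- arXiv:1509.04689 — 5 statements merged into one kernel-verified Lean document; each statement's English description precedes it below -/
import Mathlib

section
/- Let k ≥ 1 and let X₁, …, X_k be real random variables forming a centered jointly Gaussian vector, i.e. there exist a matrix A ∈ M_{k×m}(ℝ) and independent standard real Gaussian random variables g₁, …, g_m with X_i = Σ_{j=1}^m A_{ij} g_j for every i. If k is odd then E[X₁ X₂ ⋯ X_k] = 0. If k = 2l is even then E[X₁ X₂ ⋯ X_k] = Σ_p Π_{m=1}^{l} E[X_{i_m} X_{j_m}], where the sum runs over all pairings p = {{i₁,j₁}, …, {i_l,j_l}} of the set {1, …, k} into l disjoint unordered pairs. -/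
open MeasureTheory ProbabilityTheory

/-!
Stein's identity `E[(x - μ) f(x)] = v E[f'(x)]` for `N(μ, v)`, applied one coordinate at a time,
becomes a Leibniz rule for polynomials in independent centered Gaussians: multiplying by a linear
form `L` inside an expectation amounts to differentiating in the direction dual to `L`.
Applied to a product of linear forms, this gives
`E[L_a ∏_{i ∈ S} L_i] = ∑_{i ∈ S} E[L_a L_i] E[∏_{l ∈ S \ {i}} L_l]`.
The sum over pairings satisfies the same recursion, by splitting a pairing according to the
partner of `a`.
-/

open Finset Equiv MvPolynomial
open scoped NNReal Matrix

section Pairings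

variable {ι R : Type*} [Fintype ι] [CommSemiring R]

/-- The pairings of a finite set `S`, encoded as the involutions of the ambient type that move
exactly the elements of `S`; the partner of `i ∈ S` is `f i`. -/
def pairings [DecidableEq ι] (S : Finset ι) : Finset (Perm ι) :=
  {f | f * f = 1 ∧ f.support = S}

/-- The weight of a pairing with respect to a matrix of weights of pairs: the product of the
`C i j` over the pairs `{i, j}`, each pair being read off at its smaller element. -/
def pairingWeight [LinearOrder ι] (C : Matrix ι ι R) (f : Perm ι) : R :=
  ∏ i with i < f i, C i (f i)

/-- The hafnian of the principal submatrix of `C` with rows and columns in `S`, i.e. the sum over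
the pairings of `S` of the products of the entries of `C` at the pairs. -/
def hafnian [LinearOrder ι] (C : Matrix ι ι R) (S : Finset ι) : R :=
  ∑ f ∈ pairings S, pairingWeight C f

section DecidableEq

variable [DecidableEq ι] {S : Finset ι} {f : Perm ι} {a : ι}

lemma mem_pairings : f ∈ pairings S ↔ f * f = 1 ∧ f.support = S := by
  simp [pairings]

lemma pairings_empty : pairings (∅ : Finset ι) = {1} := by
  ext f
  rw [mem_pairings, Perm.support_eq_empty_iff, mem_singleton, and_iff_right_iff_imp]
  rintro rfl
  exact mul_one 1

lemma pairings_eq_empty_of_odd_card (hS : Odd #S) : pairings S = ∅ := by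
  refine eq_empty_of_forall_notMem fun f hf => Nat.not_even_iff_odd.2 hS ?_
  obtain ⟨hff, rfl⟩ := mem_pairings.1 hf
  exact even_iff_two_dvd.2 (Perm.two_dvd_card_support ((sq f).trans hff))

lemma apply_mem_erase_of_mem_pairings (hf : f ∈ pairings S) (ha : a ∈ S) :
    f a ∈ S.erase a := by
  obtain ⟨-, rfl⟩ := mem_pairings.1 hf
  exact mem_erase.2 ⟨Perm.mem_support.1 ha, Perm.apply_mem_support.2 ha⟩

lemma disjoint_swap_of_mem_pairings_erase {b : ι} (hf : f ∈ pairings ((S.erase a).erase b)) :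
    Perm.Disjoint (swap a b) f := by
  rcases eq_or_ne a b with rfl | hab
  · rw [swap_self]
    exact Perm.disjoint_one_left f
  · rw [Perm.disjoint_iff_disjoint_support, (mem_pairings.1 hf).2, Perm.support_swap hab]
    simp

lemma swap_mul_mem_pairings {b : ι} (ha : a ∈ S) (hb : b ∈ S.erase a)
    (hf : f ∈ pairings ((S.erase a).erase b)) : swap a b * f ∈ pairings S := by
  have hdisj := disjoint_swap_of_mem_pairings_erase hf
  obtain ⟨hff, hsupp⟩ := mem_pairings.1 hf
  refine mem_pairings.2 ⟨?_, ?_⟩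
  · rw [hdisj.commute.symm.mul_mul_mul_comm, swap_mul_self, hff, one_mul]
  · rw [hdisj.support_mul, hsupp, Perm.support_swap (ne_of_mem_erase hb).symm, insert_union,
      singleton_union, insert_erase hb, insert_erase ha]

lemma swap_apply_mul_mem_pairings (hf : f ∈ pairings S) (a : ι) :
    swap a (f a) * f ∈ pairings ((S.erase a).erase (f a)) := by
  obtain ⟨hff, rfl⟩ := mem_pairings.1 hf
  have hinv (i : ι) : f (f i) = i := by rw [← Perm.mul_apply, hff, Perm.one_apply]
  have hcomm : Commute f (swap a (f a)) := by
    rw [Commute, SemiconjBy, mul_swap_eq_swap_mul, hinv, swap_comm]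
  refine mem_pairings.2 ⟨?_, ?_⟩
  · rw [hcomm.mul_mul_mul_comm, swap_mul_self, hff, one_mul]
  · ext i
    have := hinv i
    have := hinv a
    simp only [Perm.mem_support, Perm.mul_apply, mem_erase, swap_apply_def]
    grind

end DecidableEq

variable [LinearOrder ι] {C : Matrix ι ι R}

lemma pairingWeight_mul_of_disjoint (C : Matrix ι ι R) {f g : Perm ι} (h : f.Disjoint g) :
    pairingWeight C (f * g) = pairingWeight C f * pairingWeight C g := by
  simp only [pairingWeight, prod_filter]
  rw [← prod_mul_distrib]
  refine prod_congr rfl fun i _ => ?_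
  rcases h i with hfi | hgi
  · rw [h.commute.eq, Perm.mul_apply, hfi, if_neg (lt_irrefl i), one_mul]
  · rw [Perm.mul_apply, hgi, if_neg (lt_irrefl i), mul_one]

lemma pairingWeight_swap (hC : C.IsSymm) {a b : ι} (hab : a ≠ b) :
    pairingWeight C (swap a b) = C a b := by
  wlog hlt : a < b generalizing a b
  · rw [swap_comm, this hab.symm (lt_of_le_of_ne (not_lt.1 hlt) hab.symm), hC.apply]
  have hfilter : ({i | i < swap a b i} : Finset ι) = {a} := by
    ext i
    rw [mem_filter_univ, mem_singleton, swap_apply_def]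
    grind
  rw [pairingWeight, hfilter, prod_singleton, swap_apply_left]

lemma hafnian_empty (C : Matrix ι ι R) : hafnian C ∅ = 1 := by
  simp [hafnian, pairings_empty, pairingWeight]

lemma hafnian_eq_zero_of_odd_card (C : Matrix ι ι R) {S : Finset ι} (hS : Odd #S) :
    hafnian C S = 0 := by
  rw [hafnian, pairings_eq_empty_of_odd_card hS, sum_empty]

lemma hafnian_univ (C : Matrix ι ι R) :
    hafnian C univ = ∑ f : Perm ι with f * f = 1 ∧ ∀ i, f i ≠ i, ∏ i with i < f i, C i (f i) := by
  simp only [hafnian, pairings, pairingWeight, Finset.ext_iff, Perm.mem_support, mem_univ, iff_true]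

lemma hafnian_eq_sum_erase (hC : C.IsSymm) {S : Finset ι} {a : ι} (ha : a ∈ S) :
    hafnian C S = ∑ i ∈ S.erase a, C a i * hafnian C ((S.erase a).erase i) := by
  simp only [hafnian, mul_sum]
  rw [sum_sigma']
  refine sum_bij' (fun f _ => ⟨f a, swap a (f a) * f⟩) (fun p _ => swap a p.1 * p.2)
    (fun f hf => ?_) (fun p hp => ?_) (fun f _ => swap_mul_self_mul _ _ _) (fun p hp => ?_)
    (fun f hf => ?_)
  · exact mem_sigma.2 ⟨apply_mem_erase_of_mem_pairings hf ha, swap_apply_mul_mem_pairings hf a⟩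
  · exact swap_mul_mem_pairings ha (mem_sigma.1 hp).1 (mem_sigma.1 hp).2
  · have hfix : p.2 a = a := by
      rw [← Perm.notMem_support, (mem_pairings.1 (mem_sigma.1 hp).2).2]
      simp
    ext1 <;> simp [hfix]
  · have hne : a ≠ f a := (ne_of_mem_erase (apply_mem_erase_of_mem_pairings hf ha)).symm
    have hdisj := disjoint_swap_of_mem_pairings_erase (swap_apply_mul_mem_pairings hf a)
    rw [← pairingWeight_swap hC hne, ← pairingWeight_mul_of_disjoint C hdisj,
      swap_mul_self_mul]

theorem eq_hafnian_of_eq_sum_erase (hC : C.IsSymm) {F : Finset ι → R} (hempty : F ∅ = 1)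
    (hF : ∀ S, ∀ a ∈ S, F S = ∑ i ∈ S.erase a, C a i * F ((S.erase a).erase i))
    (S : Finset ι) : F S = hafnian C S := by
  induction S using Finset.strongInduction with
  | H S ih =>
    rcases S.eq_empty_or_nonempty with rfl | ⟨a, ha⟩
    · rw [hempty, hafnian_empty]
    · rw [hF S a ha, hafnian_eq_sum_erase hC ha]
      refine sum_congr rfl fun i _ => ?_
      rw [ih _ ((erase_subset _ _).trans_ssubset (erase_ssubset ha))]

end Pairings

section Stein

lemma hasDerivAt_gaussianPDFReal (μ : ℝ) (v : ℝ≥0) (x : ℝ) :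
    HasDerivAt (gaussianPDFReal μ v) (-((x - μ) / v) * gaussianPDFReal μ v x) x := by
  have hexponent : HasDerivAt (fun y : ℝ => -(y - μ) ^ 2 / (2 * v)) (-((x - μ) / v)) x :=
    ((((hasDerivAt_id x).sub_const μ).pow 2).neg.div_const (2 * (v : ℝ))).congr_deriv
      (by simp only [id]; field_simp; ring)
  rw [gaussianPDFReal_def]
  exact (hexponent.exp.const_mul (√(2 * Real.pi * v))⁻¹).congr_deriv (by ring)

lemma integrable_gaussianReal_iff {μ : ℝ} {v : ℝ≥0} (hv : v ≠ 0) {f : ℝ → ℝ} :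
    Integrable f (gaussianReal μ v) ↔ Integrable fun x => gaussianPDFReal μ v x * f x := by
  rw [gaussianReal_of_var_ne_zero μ hv, integrable_withDensity_iff_integrable_smul'
    (measurable_gaussianPDF μ v) (ae_of_all _ fun _ => gaussianPDF_lt_top)]
  simp only [toReal_gaussianPDF, smul_eq_mul]

theorem integral_sub_mul_gaussianReal {μ : ℝ} {v : ℝ≥0} {f f' : ℝ → ℝ}
    (hderiv : ∀ x, HasDerivAt f (f' x) x) (hf : Integrable f (gaussianReal μ v))
    (hxf : Integrable (fun x => (x - μ) * f x) (gaussianReal μ v))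
    (hf' : Integrable f' (gaussianReal μ v)) :
    ∫ x, (x - μ) * f x ∂gaussianReal μ v = v * ∫ x, f' x ∂gaussianReal μ v := by
  rcases eq_or_ne v 0 with rfl | hv
  · simp
  rw [integrable_gaussianReal_iff hv] at hf hxf hf'
  have parts := integral_mul_deriv_eq_deriv_mul_of_integrable (fun x _ => hderiv x)
    (fun x _ => hasDerivAt_gaussianPDFReal μ v x)
    (by convert hxf.const_mul (-(v : ℝ)⁻¹) using 2; simp only [Pi.mul_apply]; ring)
    (by convert hf' using 2; exact mul_comm _ _) (by convert hf using 2; exact mul_comm _ _)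
  simp only [integral_gaussianReal_eq_integral_smul hv, smul_eq_mul]
  calc ∫ x, gaussianPDFReal μ v x * ((x - μ) * f x)
      = -v * ∫ x, f x * (-((x - μ) / v) * gaussianPDFReal μ v x) := by
        rw [← integral_const_mul]
        congr with x
        field_simp
    _ = v * ∫ x, f' x * gaussianPDFReal μ v x := by rw [parts]; ring
    _ = v * ∫ x, gaussianPDFReal μ v x * f' x := by simp only [mul_comm]

lemma integrable_pow_gaussianReal (μ : ℝ) (v : ℝ≥0) (n : ℕ) :
    Integrable (fun x => x ^ n) (gaussianReal μ v) :=
  integrable_pow_of_mem_interior_integrableExpSet (X := id) (by simp) n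

lemma integral_pow_succ_gaussianReal (v : ℝ≥0) (n : ℕ) :
    ∫ x, x ^ (n + 1) ∂gaussianReal 0 v = v * (n * ∫ x, x ^ (n - 1) ∂gaussianReal 0 v) := by
  rw [← integral_const_mul, ← integral_sub_mul_gaussianReal (hasDerivAt_pow n)
    (integrable_pow_gaussianReal 0 v n) _ ((integrable_pow_gaussianReal 0 v _).const_mul _)]
  · simp only [sub_zero, pow_succ']
  · simpa only [sub_zero, pow_succ'] using integrable_pow_gaussianReal 0 v (n + 1)

end Stein

section GaussianExpectation

variable {κ : Type*} [Fintype κ] (v : κ → ℝ≥0)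

lemma eval_monomial_eq_mul_prod (s : κ →₀ ℕ) (c : ℝ) (x : κ → ℝ) :
    eval x (monomial s c) = c * ∏ j, x j ^ s j := by
  rw [eval_monomial, Finsupp.prod_fintype _ _ fun _ => pow_zero _]

lemma integrable_eval_pi_gaussianReal (p : MvPolynomial κ ℝ) :
    Integrable (fun x => eval x p) (Measure.pi fun j => gaussianReal 0 (v j)) := by
  induction p using MvPolynomial.induction_on' with
  | monomial s c =>
    simp only [eval_monomial_eq_mul_prod]
    exact (Integrable.fintype_prod fun j =>
      integrable_pow_gaussianReal 0 (v j) (s j)).const_mul c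
  | add p q hp hq =>
    simp only [map_add]
    exact hp.add hq

/-- The expectation `E[p(x)]` of a polynomial `p` in independent variables `x j ∼ N(0, v j)`, as a
linear functional of `p`. -/
noncomputable def gaussianExpectation : MvPolynomial κ ℝ →ₗ[ℝ] ℝ where
  toFun p := ∫ x, eval x p ∂Measure.pi fun j => gaussianReal 0 (v j)
  map_add' p q := by
    simp only [map_add]
    exact integral_add (integrable_eval_pi_gaussianReal v p) (integrable_eval_pi_gaussianReal v q)
  map_smul' c p := by
    simp only [smul_eval, integral_const_mul, RingHom.id_apply, smul_eq_mul]

lemma gaussianExpectation_apply (p : MvPolynomial κ ℝ) :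
    gaussianExpectation v p = ∫ x, eval x p ∂Measure.pi fun j => gaussianReal 0 (v j) :=
  rfl

lemma gaussianExpectation_C (c : ℝ) : gaussianExpectation v (C c) = c := by
  simp [gaussianExpectation_apply]

lemma gaussianExpectation_monomial (s : κ →₀ ℕ) (c : ℝ) :
    gaussianExpectation v (monomial s c) = c * ∏ j, ∫ x, x ^ s j ∂gaussianReal 0 (v j) := by
  simp only [gaussianExpectation_apply, eval_monomial_eq_mul_prod, integral_const_mul]
  rw [integral_fintype_prod_eq_prod fun j x => x ^ s j]

theorem gaussianExpectation_X_mul (j : κ) (p : MvPolynomial κ ℝ) :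
    gaussianExpectation v (X j * p) = v j * gaussianExpectation v (pderiv j p) := by
  classical
  induction p using MvPolynomial.induction_on' with
  | monomial s c =>
    have hadd : ∀ i ∈ univ.erase j, (Finsupp.single j 1 + s : κ →₀ ℕ) i = s i :=
      fun i hi => by simp [ne_of_mem_erase hi]
    have hsub : ∀ i ∈ univ.erase j, (s - Finsupp.single j 1 : κ →₀ ℕ) i = s i :=
      fun i hi => by simp [ne_of_mem_erase hi]
    rw [pderiv_monomial, X, monomial_mul, gaussianExpectation_monomial,
      gaussianExpectation_monomial, ← mul_prod_erase _ _ (mem_univ j),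
      ← mul_prod_erase univ (fun i => ∫ x, x ^ (s - Finsupp.single j 1 : κ →₀ ℕ) i ∂_) (mem_univ j),
      prod_congr rfl fun i hi => congrArg (fun n => ∫ x, x ^ n ∂gaussianReal 0 (v i)) (hadd i hi),
      prod_congr rfl fun i hi => congrArg (fun n => ∫ x, x ^ n ∂gaussianReal 0 (v i)) (hsub i hi)]
    simp only [Finsupp.add_apply, Finsupp.tsub_apply, Finsupp.single_eq_same]
    rw [add_comm 1, integral_pow_succ_gaussianReal]
    ring
  | add p q hp hq => simp only [mul_add, map_add, hp, hq]

end GaussianExpectation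

section LinearForms

lemma derivation_apply_prod {ι R A M : Type*} [DecidableEq ι] [CommSemiring R] [CommSemiring A]
    [AddCommMonoid M] [Algebra R A] [Module A M] [Module R M] (D : Derivation R A M)
    (S : Finset ι) (f : ι → A) :
    D (∏ i ∈ S, f i) = ∑ i ∈ S, (∏ l ∈ S.erase i, f l) • D (f i) := by
  induction S using Finset.induction_on with
  | empty => simp
  | insert a S ha ih =>
    rw [prod_insert ha, D.leibniz, ih, sum_insert ha, erase_insert ha, add_comm, smul_sum]
    congr 1
    refine sum_congr rfl fun i hi => ?_
    have hai : a ≠ i := fun h => ha (h ▸ hi)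
    rw [erase_insert_of_ne hai, prod_insert (mt mem_of_mem_erase ha), mul_smul]

variable {ι κ : Type*} [Fintype κ]

lemma pderiv_toMvPolynomial {R : Type*} [CommSemiring R] (A : Matrix ι κ R) (i : ι) (j : κ) :
    pderiv j (A.toMvPolynomial i) = C (A i j) := by
  classical
  simp only [Matrix.toMvPolynomial, ← C_mul_X_eq_monomial, map_sum, pderiv_C_mul, pderiv_X]
  rw [sum_eq_single j] <;> simp +contextual [eq_comm]

variable (v : κ → ℝ≥0) (A : Matrix ι κ ℝ)

/-- The covariance matrix of the linear forms `∑ j, A i j * x j` in centered Gaussians. -/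
noncomputable def formCovariance : Matrix ι ι ℝ :=
  Matrix.of fun a b => gaussianExpectation v (A.toMvPolynomial a * A.toMvPolynomial b)

lemma formCovariance_isSymm : (formCovariance v A).IsSymm := by
  ext a b
  simp [formCovariance, mul_comm]

lemma gaussianExpectation_toMvPolynomial_mul (a : ι) (p : MvPolynomial κ ℝ) :
    gaussianExpectation v (A.toMvPolynomial a * p) =
      ∑ j, A a j * (v j * gaussianExpectation v (pderiv j p)) := by
  simp only [Matrix.toMvPolynomial, ← C_mul_X_eq_monomial, sum_mul, map_sum,
    ← smul_eq_C_mul, smul_mul_assoc, map_smul, gaussianExpectation_X_mul, smul_eq_mul]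

lemma formCovariance_apply (a b : ι) :
    formCovariance v A a b = ∑ j, A a j * (v j * A b j) := by
  simp only [formCovariance, Matrix.of_apply, gaussianExpectation_toMvPolynomial_mul,
    pderiv_toMvPolynomial, gaussianExpectation_C]

theorem gaussianExpectation_toMvPolynomial_mul_prod [DecidableEq ι] (a : ι) (S : Finset ι) :
    gaussianExpectation v (A.toMvPolynomial a * ∏ i ∈ S, A.toMvPolynomial i) =
      ∑ i ∈ S, formCovariance v A a i *
        gaussianExpectation v (∏ l ∈ S.erase i, A.toMvPolynomial l) := by
  simp only [gaussianExpectation_toMvPolynomial_mul, derivation_apply_prod, map_sum,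
    pderiv_toMvPolynomial, smul_eq_mul, mul_comm _ (C _), ← smul_eq_C_mul, map_smul,
    formCovariance_apply, mul_sum, sum_mul]
  rw [sum_comm]
  simp only [mul_assoc]

theorem gaussianExpectation_prod_toMvPolynomial [Fintype ι] [LinearOrder ι] (S : Finset ι) :
    gaussianExpectation v (∏ i ∈ S, A.toMvPolynomial i) = hafnian (formCovariance v A) S := by
  refine eq_hafnian_of_eq_sum_erase
    (F := fun T => gaussianExpectation v (∏ i ∈ T, A.toMvPolynomial i))
    (formCovariance_isSymm v A) ?_ (fun T a ha => ?_) S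
  · rw [prod_empty, ← C_1, gaussianExpectation_C]
  · rw [← mul_prod_erase T _ ha, gaussianExpectation_toMvPolynomial_mul_prod]

end LinearForms

section Wick

variable {Ω κ : Type*} [MeasurableSpace Ω] {P : Measure Ω} [Fintype κ] {v : κ → ℝ≥0}
  {g : κ → Ω → ℝ}

lemma integral_eval_eq_gaussianExpectation (hindep : iIndepFun g P)
    (hgauss : ∀ j, HasLaw (g j) (gaussianReal 0 (v j)) P) (p : MvPolynomial κ ℝ) :
    ∫ ω, eval (fun j => g j ω) p ∂P = gaussianExpectation v p :=
  (hindep.hasLaw_pi hgauss).integral_comp (MvPolynomial.continuous_eval p).aestronglyMeasurable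

theorem wick_formula_general {ι : Type*} [Fintype ι] [LinearOrder ι] {X : ι → Ω → ℝ}
    {A : Matrix ι κ ℝ} (hindep : iIndepFun g P)
    (hgauss : ∀ j, HasLaw (g j) (gaussianReal 0 (v j)) P)
    (hX : ∀ i, X i = fun ω => ∑ j, A i j * g j ω) (S : Finset ι) :
    ∫ ω, ∏ i ∈ S, X i ω ∂P = hafnian (Matrix.of fun i j => ∫ ω, X i ω * X j ω ∂P) S := by
  have hform (i : ι) (ω : Ω) : X i ω = eval (fun j => g j ω) (A.toMvPolynomial i) := by
    rw [hX, A.toMvPolynomial_eval_eq_apply, Matrix.mulVec, dotProduct]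
  have hcov : Matrix.of (fun i j => ∫ ω, X i ω * X j ω ∂P) = formCovariance v A := by
    ext i j
    simp only [Matrix.of_apply, formCovariance, hform, ← map_mul,
      integral_eval_eq_gaussianExpectation hindep hgauss]
  rw [hcov, ← gaussianExpectation_prod_toMvPolynomial,
    ← integral_eval_eq_gaussianExpectation hindep hgauss]
  simp only [map_prod, hform]

end Wick

/-- **Wick's lemma**: if `X₁, …, X_k` form a centered jointly Gaussian vector (i.e. each `X i` is a
linear combination of independent standard real Gaussians), then the expectation of their product
vanishes when `k` is odd, and equals the sum over all pairings of the products of covariances when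
`k` is even.  Pairings of `{1,…,k}` are encoded as fixed-point-free involutions `f` of `Fin k`,
and the product over the pairs `{i, f i}` is taken over the representatives `i < f i`. -/
theorem wick_formula
    {Ω : Type*} [MeasurableSpace Ω] (P : Measure Ω) [IsProbabilityMeasure P]
    (k : ℕ) (hk : 1 ≤ k) (X : Fin k → Ω → ℝ)
    (m : ℕ) (A : Matrix (Fin k) (Fin m) ℝ) (g : Fin m → Ω → ℝ)
    (hmeas : ∀ j, Measurable (g j))
    (hindep : iIndepFun g P)
    (hgauss : ∀ j, Measure.map (g j) P = gaussianReal 0 1)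
    (hX : ∀ i, X i = fun ω => ∑ j, A i j * g j ω) :
    (Odd k → ∫ ω, ∏ i, X i ω ∂P = 0) ∧
    (Even k →
      ∫ ω, ∏ i, X i ω ∂P =
        ∑ f ∈ Finset.univ.filter
            (fun f : Equiv.Perm (Fin k) => f * f = 1 ∧ ∀ i, f i ≠ i),
          ∏ i ∈ Finset.univ.filter (fun i : Fin k => (i : ℕ) < ((f i : Fin k) : ℕ)),
            ∫ ω, X i ω * X (f i) ω ∂P) := by
  have wick := wick_formula_general hindep
    (fun j => ⟨(hmeas j).aemeasurable, hgauss j⟩) hX Finset.univ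
  exact ⟨fun hodd => wick.trans (hafnian_eq_zero_of_odd_card _ (by simpa using hodd)),
    fun _ => wick.trans (by convert hafnian_univ _ <;> rfl)⟩
end

section
/- For all integers p ≥ 1 and n ≥ p, the element Σ_{σ ∈ S_p} n^{#σ} · σ of the complex group algebra ℂ[S_p] of the symmetric group S_p is invertible, where #σ denotes the number of cycles of the permutation σ (fixed points counted as cycles of length one). -/
/-- The number of cycles of a permutation of `Fin p`, counting fixed points as cycles of
length one. -/
def Equiv.Perm.cycleCount {p : ℕ} (σ : Equiv.Perm (Fin p)) : ℕ :=
  (Finset.univ.filter fun x => σ x = x).card + σ.cycleType.card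

/-!
`n ^ #σ` counts the colourings `Fin p → Fin n` fixed by `σ`, so the element in question is
`∑ g, |X^g| · g` for the action of `G = S_p` on the set `X` of colourings. For any finite group `G`
acting on a finite set `X`, the matrix `(|X^(σ⁻¹ τ)|)` of right multiplication by this element is
the Gram matrix `M Mᴴ`, where `M σ (x, y) = 1` if `σ x = y` and `0` otherwise. Over an ordered
field, `M Mᴴ` and `M` have the same left kernel, and the rows of `M` are linearly independent as
soon as `X` contains a point `x` with trivial stabilizer, since the entries `M σ (x, τ x)` form the
identity matrix. An injective colouring is such a point; it exists because `p ≤ n`.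
-/

open MulAction Matrix

section GroupAlgebra

variable (R G X : Type*) [Group G] [MulAction G X]

/-- The element `∑ g, |X^g| · g` of the group algebra `R[G]`, that is, the character of the
permutation representation of `G` on `X` viewed as an element of `R[G]`. -/
noncomputable def fixedPointElement [Semiring R] [Fintype G] : MonoidAlgebra R G :=
  ∑ g, MonoidAlgebra.single g (Nat.card (fixedBy X g) : R)

/-- The matrix over `R` whose row `g` is the indicator function of the graph of `x ↦ g • x`, or
equivalently the permutation matrix of `g` acting on `X`, flattened to a vector. -/
def actionMatrix [Zero R] [One R] [DecidableEq X] : Matrix G (X × X) R :=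
  of fun g xy => if g • xy.1 = xy.2 then 1 else 0

variable {R G X}

theorem coeff_fixedPointElement [Semiring R] [Fintype G] (g : G) :
    (fixedPointElement R G X).coeff g = Nat.card (fixedBy X g) := by
  classical
  simp [fixedPointElement, MonoidAlgebra.coeff_sum, Finsupp.finsetSum_apply, Finsupp.single_apply]

theorem map_fixedPointElement {S : Type*} [Semiring R] [Semiring S] [Fintype G] (f : R →+* S) :
    MonoidAlgebra.mapRingHom G f (fixedPointElement R G X) = fixedPointElement S G X := by
  simp [fixedPointElement]

theorem actionMatrix_mul_conjTranspose_apply [Semiring R] [StarRing R] [Fintype X] [DecidableEq X]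
    (σ τ : G) :
    (actionMatrix R G X * (actionMatrix R G X)ᴴ) σ τ = Nat.card (fixedBy X (σ⁻¹ * τ)) := by
  have smul_eq_smul_iff (x : X) : τ • x = σ • x ↔ x ∈ fixedBy X (σ⁻¹ * τ) := by
    rw [mem_fixedBy, mul_smul, inv_smul_eq_iff]
  calc (actionMatrix R G X * (actionMatrix R G X)ᴴ) σ τ
      = ∑ x : X, ∑ y : X, (if σ • x = y then 1 else 0) * (if τ • x = y then 1 else 0) := by
        simp [actionMatrix, mul_apply, Fintype.sum_prod_type, apply_ite star]
    _ = ∑ x : X, if x ∈ fixedBy X (σ⁻¹ * τ) then 1 else 0 := by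
        simp only [boole_mul, Fintype.sum_ite_eq, smul_eq_smul_iff]
    _ = Nat.card (fixedBy X (σ⁻¹ * τ)) := by
        rw [Finset.sum_boole, Nat.card_eq_fintype_card, Fintype.card_subtype]

theorem coeff_mul_fixedPointElement [Semiring R] [StarRing R] [Fintype G] [Fintype X]
    [DecidableEq X] (a : MonoidAlgebra R G) :
    ⇑(a * fixedPointElement R G X).coeff =
      ⇑a.coeff ᵥ* (actionMatrix R G X * (actionMatrix R G X)ᴴ) := by
  ext τ
  simp only [MonoidAlgebra.coeff_mul_apply_left, coeff_fixedPointElement, vecMul, dotProduct,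
    actionMatrix_mul_conjTranspose_apply]
  exact Finsupp.sum_fintype _ _ fun _ => zero_mul _

theorem vecMul_actionMatrix_apply_smul [Semiring R] [Fintype G] [DecidableEq X] {x : X}
    (hx : stabilizer G x = ⊥) (v : G → R) (g : G) :
    (v ᵥ* actionMatrix R G X) (x, g • x) = v g := by
  classical
  have smul_eq_iff (h : G) : h • x = g • x ↔ h = g := by
    rw [← inv_smul_eq_iff, ← mul_smul, ← mem_stabilizer_iff, hx, Subgroup.mem_bot,
      inv_mul_eq_one, eq_comm]
  simp [vecMul, dotProduct, actionMatrix, smul_eq_iff]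

theorem isUnit_fixedPointElement_of_starOrderedRing {K : Type*} [Field K] [PartialOrder K]
    [StarRing K] [StarOrderedRing K] [Fintype G] [Finite X] {x : X} (hx : stabilizer G x = ⊥) :
    IsUnit (fixedPointElement K G X) := by
  classical
  cases nonempty_fintype X
  have : IsArtinianRing (MonoidAlgebra K G) := .of_finite K _
  rw [IsArtinianRing.isUnit_iff_isRightRegular, isRightRegular_iff_left_eq_zero_of_mul]
  intro a ha
  have gram_kernel : ⇑a.coeff ᵥ* (actionMatrix K G X * (actionMatrix K G X)ᴴ) = 0 := by
    rw [← coeff_mul_fixedPointElement, ha]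
    rfl
  have kernel := (vecMul_self_mul_conjTranspose_eq_zero _ _).1 gram_kernel
  ext g
  rw [← vecMul_actionMatrix_apply_smul hx a.coeff g, kernel]
  rfl

theorem isUnit_fixedPointElement [Semiring R] [Algebra ℚ R] [Fintype G] [Finite X] {x : X}
    (hx : stabilizer G x = ⊥) : IsUnit (fixedPointElement R G X) := by
  rw [← map_fixedPointElement (algebraMap ℚ R)]
  exact (isUnit_fixedPointElement_of_starOrderedRing hx).map _

end GroupAlgebra

section CycleCount

open Equiv.Perm

variable {α : Type*} [Fintype α] [DecidableEq α]

/-- The cycle of `σ` through `x`, with fixed points counted as cycles: since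
`Equiv.Perm.cycleFactorsFinset` omits the trivial cycles, a fixed point labels itself. -/
def cycleLabel (σ : Equiv.Perm α) (x : α) : {x // σ x = x} ⊕ σ.cycleFactorsFinset :=
  if hx : σ x = x then .inl ⟨x, hx⟩
  else .inr ⟨σ.cycleOf x, cycleOf_mem_cycleFactorsFinset_iff.2 (mem_support.2 hx)⟩

theorem cycleLabel_surjective (σ : Equiv.Perm α) : Function.Surjective (cycleLabel σ) := by
  rintro (⟨x, hx⟩ | ⟨c, hc⟩)
  · exact ⟨x, by simp [cycleLabel, hx]⟩
  · obtain ⟨x, hxc⟩ := (mem_cycleFactorsFinset_iff.1 hc).1.nonempty_support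
    have hx : σ x ≠ x := mem_support.1 (mem_cycleFactorsFinset_support_le hc hxc)
    exact ⟨x, by simp [cycleLabel, hx, ← cycle_is_cycleOf hxc hc]⟩

theorem cycleLabel_eq_iff (σ : Equiv.Perm α) (x y : α) :
    cycleLabel σ x = cycleLabel σ y ↔ σ.SameCycle x y := by
  by_cases hx : σ x = x
  · have sameCycle_iff : σ.SameCycle x y ↔ x = y :=
      ⟨fun h => h.eq_of_left hx, fun h => h.sameCycle σ⟩
    by_cases hy : σ y = y
    · simp [cycleLabel, hx, hy, sameCycle_iff]
    · have hxy : x ≠ y := by rintro rfl; exact hy hx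
      simp [cycleLabel, hx, hy, sameCycle_iff, hxy]
  · by_cases hy : σ y = y
    · have not_sameCycle : ¬ σ.SameCycle x y := fun h => hx (h.apply_eq_self_iff.2 hy)
      simp [cycleLabel, hx, hy, not_sameCycle]
    · simp [cycleLabel, hx, hy,
        sameCycle_iff_cycleOf_eq_of_mem_support (mem_support.2 hx) (mem_support.2 hy)]

theorem card_quotient_sameCycle (σ : Equiv.Perm α) :
    Nat.card (Quotient (SameCycle.setoid σ)) =
      Nat.card {x // σ x = x} + σ.cycleType.card := by
  have ker_cycleLabel : Setoid.ker (cycleLabel σ) = SameCycle.setoid σ :=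
    Setoid.ext (cycleLabel_eq_iff σ)
  rw [← ker_cycleLabel,
    Nat.card_congr (Setoid.quotientKerEquivOfSurjective _ (cycleLabel_surjective σ)),
    Nat.card_sum, cycleType_def, Multiset.card_map]
  simp

theorem card_quotient_sameCycle_eq_cycleCount {p : ℕ} (σ : Equiv.Perm (Fin p)) :
    Nat.card (Quotient (SameCycle.setoid σ)) = σ.cycleCount := by
  rw [card_quotient_sameCycle, cycleCount, Nat.card_eq_fintype_card, Fintype.card_subtype]

end CycleCount

section Colorings

open Equiv.Perm

attribute [local instance] arrowAction

variable {α β : Type*}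

theorem mem_fixedBy_coloring_iff (σ : Equiv.Perm α) (f : α → β) :
    f ∈ fixedBy (α → β) σ ↔ SameCycle.setoid σ ≤ Setoid.ker f := by
  constructor
  · rintro hf x _ ⟨i, rfl⟩
    have hfi : f ((σ ^ i)⁻¹ ((σ ^ i) x)) = f ((σ ^ i) x) := congrFun (mem_fixedBy_zpow hf i) _
    rwa [← Equiv.Perm.mul_apply, inv_mul_cancel, one_apply] at hfi
  · intro hf
    ext x
    exact hf (sameCycle_symm_apply_left.2 (.refl σ x))

theorem card_fixedBy_coloring [Finite α] (σ : Equiv.Perm α) :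
    Nat.card (fixedBy (α → β) σ) = Nat.card β ^ Nat.card (Quotient (SameCycle.setoid σ)) := by
  rw [← Nat.card_fun]
  exact Nat.card_congr <|
    (Equiv.subtypeEquivRight (mem_fixedBy_coloring_iff σ)).trans (Setoid.liftEquiv _)

theorem stabilizer_coloring_eq_bot {f : α → β} (hf : Function.Injective f) :
    stabilizer (Equiv.Perm α) f = ⊥ := by
  refine (Subgroup.eq_bot_iff_forall _).2 fun σ hσ => ?_
  have inv_apply (x : α) : σ⁻¹ x = x := hf (congrFun hσ x)
  exact inv_eq_one.1 (Equiv.ext inv_apply)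

theorem weingarten_element_invertible_general (R : Type*) [Semiring R] [Algebra ℚ R] {p n : ℕ}
    (hn : p ≤ n) :
    IsUnit (∑ σ : Equiv.Perm (Fin p), MonoidAlgebra.single σ ((n : R) ^ σ.cycleCount)) := by
  have eq_fixedPointElement :
      ∑ σ : Equiv.Perm (Fin p), MonoidAlgebra.single σ ((n : R) ^ σ.cycleCount) =
        fixedPointElement R (Equiv.Perm (Fin p)) (Fin p → Fin n) := by
    simp only [fixedPointElement, card_fixedBy_coloring, card_quotient_sameCycle_eq_cycleCount,
      Nat.card_fin, Nat.cast_pow]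
  rw [eq_fixedPointElement]
  exact isUnit_fixedPointElement (stabilizer_coloring_eq_bot (Fin.castLE_injective hn))

end Colorings

/-- For `p ≥ 1` and `n ≥ p`, the element `Σ_{σ ∈ S_p} n^{#σ} · σ` of the complex group algebra
`ℂ[S_p]` is invertible, where `#σ` is the number of cycles of `σ` (fixed points included). -/
theorem weingarten_element_invertible (p n : ℕ) (hp : 1 ≤ p) (hn : p ≤ n) :
    IsUnit (∑ σ : Equiv.Perm (Fin p),
      MonoidAlgebra.single (R := ℂ) σ ((n : ℂ) ^ σ.cycleCount)) :=
  weingarten_element_invertible_general ℂ hn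
end

section
/- Let p ≥ 1 and n ≥ p be integers, and let Wg(n,·) : S_p → ℂ be the coefficients of the inverse in the group algebra ℂ[S_p] of the element Σ_{σ ∈ S_p} n^{#σ} · σ (which is invertible since n ≥ p). Let dU denote the Haar probability measure on the unitary group U(n). Then for all tuples i, i', j, j' : {1,…,p} → {1,…,n}: ∫_{U(n)} U_{i₁ j₁} ⋯ U_{i_p j_p} · conj(U_{i'₁ j'₁}) ⋯ conj(U_{i'_p j'_p}) dU = Σ_{σ, τ ∈ S_p} (Π_{m=1}^p δ_{i_m, i'_{σ(m)}}) (Π_{m=1}^p δ_{j_m, j'_{τ(m)}}) Wg(n, τσ⁻¹). -/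
open MeasureTheory

/-!
The integral is an entry of the average `M` of `U^{⊗p} E (U^{⊗p})⁻¹` over the unitary group, where
`E` is the matrix unit at the multi-indices `j`, `j'`. By invariance `M` commutes with `U^{⊗p}` for
every unitary `U`. This is a polynomial identity on unitary diagonal matrices, hence it holds for
all diagonal matrices, for all Hermitian ones by the spectral theorem, and, once more by polynomial
identity, along the real line `t ↦ H + tK` and thus at `H + iK`, that is, for all matrices. Because
`p ≤ n`, a matrix with this commutant property is a combination `∑ c_σ P_σ` of the permutations of
the tensor factors. Pairing `M` with these permutations under the trace leaves `E` in place of `M`,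
and `tr (P_τ⁻¹ P_σ) = n ^ #(σ τ⁻¹)`, so the `c_σ` solve a linear system whose matrix is inverted by
the Weingarten function.
-/

namespace Weingarten

section Cycles

open Equiv Equiv.Perm Function

variable {α β : Type*}

theorem comp_eq_self_iff_sameCycle_le_ker (σ : Perm α) (f : α → β) :
    f ∘ σ = f ↔ SameCycle.setoid σ ≤ Setoid.ker f := by
  refine ⟨fun hf x y hxy => ?_, fun hf => funext fun x => hf (SameCycle.refl σ x).apply_left⟩
  obtain ⟨k, rfl⟩ := hxy
  have hzpow : ∀ k : ℤ, f ∘ (σ ^ k : Perm α) = f := fun k => by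
    induction k with
    | zero => rfl
    | succ k ih => rw [zpow_add_one, coe_mul, ← comp_assoc, ih, hf]
    | pred k ih =>
      rw [zpow_sub_one, coe_mul, ← comp_assoc, ih]
      conv_lhs => rw [← hf, comp_assoc, ← coe_mul, mul_inv_cancel, coe_one, comp_id]
  exact (congrFun (hzpow k) x).symm

variable [Fintype α] [DecidableEq α] (σ : Perm α)

/-- Labels the cycle of `σ` through a point: by the point itself when `σ` fixes it, and otherwise
by the corresponding factor of the cycle decomposition, which omits the trivial cycles. -/
def cycleLabel (x : α) : fixedPoints σ ⊕ σ.cycleFactorsFinset :=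
  if hx : σ x = x then .inl ⟨x, hx⟩
  else .inr ⟨σ.cycleOf x, cycleOf_mem_cycleFactorsFinset_iff.2 (mem_support.2 hx)⟩

theorem cycleLabel_surjective : Surjective (cycleLabel σ) := by
  rintro (⟨x, hx⟩ | ⟨c, hc⟩)
  · exact ⟨x, dif_pos hx⟩
  · obtain ⟨x, hxc⟩ := (mem_cycleFactorsFinset_iff.1 hc).1.nonempty_support
    have hx : σ x ≠ x := mem_support.1 (mem_cycleFactorsFinset_support_le hc hxc)
    refine ⟨x, ?_⟩
    simp only [cycleLabel, hx, dif_neg, not_false_iff, cycle_is_cycleOf hxc hc]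

theorem ker_cycleLabel : Setoid.ker (cycleLabel σ) = SameCycle.setoid σ := by
  ext x y
  change cycleLabel σ x = cycleLabel σ y ↔ σ.SameCycle x y
  by_cases hx : σ x = x <;> by_cases hy : σ y = y <;>
    simp only [cycleLabel, hx, hy, dif_pos, dif_neg, not_false_iff, Sum.inl.injEq, Sum.inr.injEq,
      Subtype.ext_iff, reduceCtorEq, false_iff]
  · exact ⟨fun h => h.sameCycle σ, fun h => h.eq_of_left hx⟩
  · exact fun h => hy (h.apply_eq_self_iff.1 hx)
  · exact fun h => hx (h.apply_eq_self_iff.2 hy)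
  · exact (sameCycle_iff_cycleOf_eq_of_mem_support (mem_support.2 hx) (mem_support.2 hy)).symm

theorem card_quotient_sameCycle :
    Nat.card (Quotient (SameCycle.setoid σ)) =
      Fintype.card (fixedPoints σ) + σ.cycleType.card := by
  rw [← ker_cycleLabel,
    Nat.card_congr (Setoid.quotientKerEquivOfSurjective _ (cycleLabel_surjective σ)),
    Nat.card_eq_fintype_card, Fintype.card_sum, cycleType_def]
  simp

theorem card_comp_eq_self [Finite β] :
    Nat.card {f : α → β // f ∘ σ = f} =
      Nat.card β ^ (Fintype.card (fixedPoints σ) + σ.cycleType.card) := by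
  rw [← card_quotient_sameCycle, ← Nat.card_fun]
  exact Nat.card_congr ((Equiv.subtypeEquivRight (comp_eq_self_iff_sameCycle_le_ker σ)).trans
    (Setoid.liftEquiv (SameCycle.setoid σ)))

end Cycles

open Equiv Function Matrix

section FunctionMatrix

variable {α β γ R : Type*} [DecidableEq β] [CommSemiring R]

variable (R) in
/-- The matrix of the linear map sending the basis vector at `a` to the one at `f a`. -/
def functionMatrix (f : α → β) : Matrix β α R := of fun b a => if b = f a then 1 else 0

theorem functionMatrix_apply (f : α → β) (b : β) (a : α) :
    functionMatrix R f b a = if b = f a then 1 else 0 :=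
  rfl

theorem mul_functionMatrix_apply [Fintype β] (A : Matrix γ β R) (f : α → β) (c : γ) (a : α) :
    (A * functionMatrix R f) c a = A c (f a) := by
  simp [mul_apply, functionMatrix_apply]

theorem functionMatrix_mul_apply [Fintype α] (f : α → β) (A : Matrix α γ R) (b : β) (c : γ) :
    (functionMatrix R f * A) b c = ∑ a, if b = f a then A a c else 0 := by
  simp [mul_apply, functionMatrix_apply]

theorem functionMatrix_mul_functionMatrix [DecidableEq γ] [Fintype β] (g : β → γ) (f : α → β) :
    functionMatrix R g * functionMatrix R f = functionMatrix R (g ∘ f) := by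
  ext c a
  exact mul_functionMatrix_apply _ _ _ _

theorem trace_functionMatrix [Fintype β] (f : β → β) :
    (functionMatrix R f).trace = Nat.card {b // f b = b} := by
  simp [trace, functionMatrix_apply, Nat.card_eq_fintype_card, Fintype.card_subtype,
    eq_comm (b := f _)]

end FunctionMatrix

section KroneckerPower

variable {ι κ R S : Type*} [Fintype ι] [DecidableEq κ] [CommSemiring R]
  [CommSemiring S]

variable (κ R) in
/-- The action of `σ` on tensors that permutes the tensor factors, in coordinates. It is
contravariant in `σ`. -/
def permuteFactors (σ : Perm ι) : Matrix (ι → κ) (ι → κ) R := functionMatrix R (· ∘ σ)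

theorem permuteFactors_apply (σ : Perm ι) (I J : ι → κ) :
    permuteFactors κ R σ I J = if I = J ∘ σ then 1 else 0 :=
  rfl

theorem prod_ite_apply_eq (I J : ι → κ) :
    (∏ m, if I m = J m then (1 : R) else 0) = if I = J then 1 else 0 := by
  simp [Finset.prod_ite_zero, funext_iff]

variable (ι) in
/-- The action `A ↦ A^{⊗ι}` of matrices on tensors, in coordinates: the basis vectors of
`(R^κ)^{⊗ι}` are indexed by multi-indices `ι → κ`. -/
def kroneckerPower [DecidableEq ι] [Fintype κ] : Matrix κ κ R →* Matrix (ι → κ) (ι → κ) R where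
  toFun A := of fun I J => ∏ m, A (I m) (J m)
  map_one' := by
    ext I J
    simp only [one_apply, of_apply, prod_ite_apply_eq]
  map_mul' A B := by
    ext I J
    simp only [of_apply, mul_apply, Fintype.prod_sum, Finset.prod_mul_distrib]

variable [DecidableEq ι] [Fintype κ]

theorem kroneckerPower_apply (A : Matrix κ κ R) (I J : ι → κ) :
    kroneckerPower ι A I J = ∏ m, A (I m) (J m) :=
  rfl

theorem kroneckerPower_map (f : R →+* S) (A : Matrix κ κ R) :
    kroneckerPower ι (A.map f) = (kroneckerPower ι A).map f := by
  ext I J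
  simp [kroneckerPower_apply]

theorem kroneckerPower_diagonal (d : κ → R) :
    kroneckerPower ι (diagonal d) = diagonal fun I => ∏ m, d (I m) := by
  ext I J
  simp [kroneckerPower_apply, diagonal_apply, Finset.prod_ite_zero, funext_iff]

theorem kroneckerPower_functionMatrix (f : κ → κ) :
    kroneckerPower ι (functionMatrix R f) = functionMatrix R (f ∘ ·) := by
  ext I J
  exact prod_ite_apply_eq I (f ∘ J)

theorem permuteFactors_mul (σ τ : Perm ι) :
    permuteFactors κ R σ * permuteFactors κ R τ = permuteFactors κ R (τ * σ) :=
  functionMatrix_mul_functionMatrix _ _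

theorem commute_kroneckerPower_permuteFactors (A : Matrix κ κ R) (σ : Perm ι) :
    Commute (kroneckerPower ι A) (permuteFactors κ R σ) := by
  ext I J
  have hI : ∀ K, I = K ∘ σ ↔ K = I ∘ σ.symm := fun K => by
    rw [σ.eq_comp_symm, eq_comm]
  rw [permuteFactors, mul_functionMatrix_apply, functionMatrix_mul_apply]
  simp only [hI, Finset.sum_ite_eq', Finset.mem_univ, if_true, kroneckerPower_apply]
  exact Fintype.prod_equiv σ _ _ fun m => by simp

theorem trace_permuteFactors (σ : Perm ι) :
    (permuteFactors κ R σ).trace =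
      (Fintype.card κ : R) ^ (Fintype.card (fixedPoints σ) + σ.cycleType.card) := by
  rw [permuteFactors, trace_functionMatrix, card_comp_eq_self, Nat.card_eq_fintype_card,
    Nat.cast_pow]

theorem trace_permuteFactors_eq_pow_cycleCount {p : ℕ} (σ : Perm (Fin p)) :
    (permuteFactors κ R σ).trace = (Fintype.card κ : R) ^ σ.cycleCount := by
  have hfixed : Fintype.card (fixedPoints σ) = (Finset.univ.filter fun x => σ x = x).card :=
    Fintype.card_of_subtype _ fun _ => by
      rw [Finset.mem_filter_univ, mem_fixedPoints_iff]
  rw [trace_permuteFactors, hfixed, Perm.cycleCount]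

theorem trace_permuteFactors_inv_mul_single (τ : Perm ι) (J J' : ι → κ) :
    (permuteFactors κ R τ⁻¹ * single J J' 1).trace = if J = J' ∘ τ then 1 else 0 := by
  have hτ : J' = J ∘ τ.symm ↔ J = J' ∘ τ := by rw [τ.eq_comp_symm, eq_comm]
  simp [trace_mul_single, permuteFactors_apply, Perm.inv_def, hτ]

end KroneckerPower

section Commutant

theorem commute_map_eval_of_infinite {ι τ R : Type*} [Fintype ι] [CommRing R] [IsDomain R]
    {s : τ → Set R} (hs : ∀ t, (s t).Infinite) (M : Matrix ι ι (MvPolynomial τ R))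
    (T : Matrix ι ι R) (h : ∀ x ∈ Set.univ.pi s, Commute (M.map (MvPolynomial.eval x)) T)
    (x : τ → R) :
    Commute (M.map (MvPolynomial.eval x)) T := by
  classical
  have heval : ∀ y : τ → R, (T.map MvPolynomial.C).map (MvPolynomial.eval y) = T := fun y => by
    ext
    simp
  have hpoly : Commute M (T.map MvPolynomial.C) := by
    refine Matrix.ext fun i j => MvPolynomial.funext_set s hs fun y hy => ?_
    have hcomm := h y hy
    rw [← heval y] at hcomm
    simpa only [← Matrix.map_mul, map_apply] using congrFun₂ hcomm.eq i j
  simpa only [RingHom.mapMatrix_apply, heval] using hpoly.map (MvPolynomial.eval x).mapMatrix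

theorem exists_perm_eq_comp_of_range_subset {ι κ : Type*} [Finite ι] {e I : ι → κ}
    (he : Injective e) (h : Set.range e ⊆ Set.range I) : ∃ σ : Perm ι, I = e ∘ σ := by
  choose g hg using fun m => h (Set.mem_range_self m)
  have hgI : I ∘ g = e := funext hg
  have hgb : Bijective g := Finite.injective_iff_bijective.1 (hgI ▸ he).of_comp
  exact ⟨(Equiv.ofBijective g hgb).symm, (Equiv.eq_comp_symm _ _ _).2 hgI⟩

variable {ι κ : Type*} [Fintype ι] [DecidableEq ι] [Fintype κ] [DecidableEq κ]

theorem apply_eq_zero_of_commute_kroneckerPower_diagonal {R : Type*} [CommSemiring R]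
    {T : Matrix (ι → κ) (ι → κ) R}
    (hT : ∀ d : κ → R, Commute (kroneckerPower ι (diagonal d)) T) {I J : ι → κ} {m : ι}
    (hm : J m ∉ Set.range I) : T I J = 0 := by
  classical
  let d : κ → R := Set.indicator (Set.range I) 1
  have hentry : (∏ l, d (I l)) * T I J = T I J * ∏ l, d (J l) := by
    simpa only [kroneckerPower_diagonal, diagonal_mul, mul_diagonal]
      using congrFun₂ (hT d).eq I J
  have hdI : ∏ l, d (I l) = 1 := Finset.prod_eq_one fun l _ => by simp [d]
  have hdJ : ∏ l, d (J l) = 0 :=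
    Finset.prod_eq_zero (Finset.mem_univ m) (Set.indicator_of_notMem hm _)
  rwa [hdI, hdJ, one_mul, mul_zero] at hentry

/-- The coefficients are read off the column of `T` at the injective multi-index `e`. That column
determines `T`, since every multi-index `J` is `f ∘ e` for some `f : κ → κ`, and `T` commutes with
the tensor power of the matrix of `f`. -/
theorem eq_sum_smul_permuteFactors {R : Type*} [CommSemiring R] {T : Matrix (ι → κ) (ι → κ) R}
    (hT : ∀ A : Matrix κ κ R, Commute (kroneckerPower ι A) T) {e : ι → κ} (he : Injective e) :
    T = ∑ σ : Perm ι, T (e ∘ σ) e • permuteFactors κ R σ := by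
  ext I J
  let f : κ → κ := extend e J id
  have hfe : f ∘ e = J := extend_comp he J id
  have hcol : T I J = ∑ K, if I = f ∘ K then T K e else 0 := by
    have := congrFun₂ (hT (functionMatrix R f)).eq I e
    rwa [kroneckerPower_functionMatrix, functionMatrix_mul_apply, mul_functionMatrix_apply, hfe,
      eq_comm] at this
  have hsupp : ∀ K ∉ Set.range fun σ : Perm ι => e ∘ σ, (if I = f ∘ K then T K e else 0) = 0 := by
    intro K hK
    have hrange : ¬Set.range e ⊆ Set.range K := fun h =>
      hK ((exists_perm_eq_comp_of_range_subset he h).imp fun _ => Eq.symm)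
    obtain ⟨_, ⟨m, rfl⟩, hm⟩ := Set.not_subset.1 hrange
    simp [apply_eq_zero_of_commute_kroneckerPower_diagonal (fun d => hT (diagonal d)) hm]
  have hinj : Injective fun σ : Perm ι => e ∘ σ :=
    he.comp_left.comp DFunLike.coe_injective
  rw [hcol, ← Fintype.sum_of_injective _ hinj _ _ hsupp fun _ => rfl]
  simp [Matrix.sum_apply, permuteFactors_apply, ← comp_assoc, hfe]

theorem infinite_star_mul_self_eq_one : {z : ℂ | star z * z = 1}.Infinite := by
  have hsphere : {z : ℂ | star z * z = 1} = Metric.sphere 0 1 := by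
    ext z
    rw [Set.mem_ofPred_eq, mem_sphere_zero_iff_norm, RCLike.star_def, Complex.conj_mul']
    exact_mod_cast pow_eq_one_iff_of_nonneg (norm_nonneg z) two_ne_zero
  rw [hsphere]
  refine (isPreconnected_sphere (by simp) _ _).infinite_of_nontrivial ⟨1, ?_, -1, ?_, ?_⟩ <;>
    norm_num

theorem diagonal_mem_unitaryGroup {κ R : Type*} [Fintype κ] [DecidableEq κ] [CommRing R]
    [StarRing R] {d : κ → R} (hd : ∀ k, star (d k) * d k = 1) : diagonal d ∈ unitaryGroup κ R := by
  rw [mem_unitaryGroup_iff', star_eq_conjTranspose, diagonal_conjTranspose, diagonal_mul_diagonal,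
    ← diagonal_one]
  exact congrArg diagonal (funext hd)

variable {T : Matrix (ι → κ) (ι → κ) ℂ}

theorem commute_kroneckerPower_diagonal_of_unitary
    (hT : ∀ U ∈ unitaryGroup κ ℂ, Commute (kroneckerPower ι U) T) (d : κ → ℂ) :
    Commute (kroneckerPower ι (diagonal d)) T := by
  have heval : ∀ x : κ → ℂ, (kroneckerPower ι (diagonal MvPolynomial.X)).map
      (MvPolynomial.eval x) = kroneckerPower ι (diagonal x) := fun x => by
    rw [← kroneckerPower_map, diagonal_map (map_zero _)]
    simp
  rw [← heval]
  refine commute_map_eval_of_infinite (fun _ => infinite_star_mul_self_eq_one) _ T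
    (fun x hx => ?_) d
  rw [heval]
  exact hT _ (diagonal_mem_unitaryGroup fun k => hx k trivial)

theorem commute_kroneckerPower_of_isHermitian
    (hT : ∀ U ∈ unitaryGroup κ ℂ, Commute (kroneckerPower ι U) T)
    {A : Matrix κ κ ℂ} (hA : A.IsHermitian) :
    Commute (kroneckerPower ι A) T := by
  rw [hA.spectral_theorem, Unitary.conjStarAlgAut_apply, map_mul, map_mul]
  exact ((hT _ hA.eigenvectorUnitary.2).mul_left
    (commute_kroneckerPower_diagonal_of_unitary hT _)).mul_left
      (hT _ (star hA.eigenvectorUnitary).2)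

theorem commute_kroneckerPower_of_unitary
    (hT : ∀ U ∈ unitaryGroup κ ℂ, Commute (kroneckerPower ι U) T) (A : Matrix κ κ ℂ) :
    Commute (kroneckerPower ι A) T := by
  let H : Matrix κ κ ℂ := realPart A
  let K : Matrix κ κ ℂ := imaginaryPart A
  let L : Matrix κ κ (MvPolynomial Unit ℂ) :=
    H.map MvPolynomial.C + (MvPolynomial.X () : MvPolynomial Unit ℂ) • K.map MvPolynomial.C
  have heval : ∀ x : Unit → ℂ, (kroneckerPower ι L).map (MvPolynomial.eval x) =
      kroneckerPower ι (H + x () • K) := fun x => by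
    rw [← kroneckerPower_map]
    congr 1
    ext
    simp [L]
  have hreal : (Set.range ((↑) : ℝ → ℂ)).Infinite :=
    Set.infinite_range_of_injective Complex.ofReal_injective
  have hA : A = H + Complex.I • K := (realPart_add_I_smul_imaginaryPart A).symm
  rw [hA, ← heval fun _ => Complex.I]
  refine commute_map_eval_of_infinite (fun _ => hreal) _ T (fun x hx => ?_) _
  obtain ⟨t, ht⟩ := hx () trivial
  rw [heval, ← ht]
  refine commute_kroneckerPower_of_isHermitian hT (IsSelfAdjoint.add (realPart A).2 ?_)
  have htsa : IsSelfAdjoint (t : ℂ) := Complex.conj_ofReal t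
  exact htsa.smul (imaginaryPart A).2

end Commutant

section GroupMatrix

variable {G R : Type*} [Group G] [Semiring R]

/-- The matrix whose `(g, h)` entry is the coefficient of `x` at `g * h⁻¹`, that is, the matrix of
left multiplication by `x` on the group algebra. -/
def groupMatrix (x : MonoidAlgebra R G) : Matrix G G R := of fun g h => x.coeff (g * h⁻¹)

theorem groupMatrix_apply (x : MonoidAlgebra R G) (g h : G) :
    groupMatrix x g h = x.coeff (g * h⁻¹) :=
  rfl

theorem groupMatrix_one [DecidableEq G] : groupMatrix (1 : MonoidAlgebra R G) = 1 := by
  ext g h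
  simp [groupMatrix_apply, MonoidAlgebra.one_def, Finsupp.single_apply, one_apply,
    eq_comm (a := (1 : G)), mul_inv_eq_one]

variable [Fintype G]

theorem groupMatrix_mul (x y : MonoidAlgebra R G) :
    groupMatrix (x * y) = groupMatrix x * groupMatrix y := by
  ext g h
  rw [groupMatrix_apply, MonoidAlgebra.coeff_mul_apply_right, Finsupp.sum_fintype _ _ (by simp),
    mul_apply]
  refine Fintype.sum_equiv (Equiv.mulRight h) _ _ fun k => ?_
  simp [groupMatrix_apply, mul_assoc]

theorem groupMatrix_sum_single_apply (v : G → R) (g h : G) :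
    groupMatrix (∑ k, MonoidAlgebra.single k (v k)) g h = v (g * h⁻¹) := by
  classical
  simp [groupMatrix_apply, MonoidAlgebra.coeff_sum, Finsupp.finsetSum_apply, Finsupp.single_apply]

end GroupMatrix

section Twirl

theorem linearMap_apply_eq_sum {m n R : Type*} [Fintype m] [Fintype n] [DecidableEq m]
    [DecidableEq n] [CommSemiring R] (L : Matrix m n R →ₗ[R] R) (A : Matrix m n R) :
    L A = ∑ i, ∑ j, A i j * L (single i j 1) := by
  conv_lhs => rw [matrix_eq_sum_single A]
  simp only [map_sum, ← smul_eq_mul, ← map_smul, smul_single]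
  simp only [smul_eq_mul, mul_one]

variable {G m 𝕜 : Type*} [Group G] [MeasurableSpace G] [Fintype m] [DecidableEq m] [RCLike 𝕜]

/-- The average of the conjugates of `A` by the matrices of the representation `π`. Integrating
entrywise avoids choosing a norm on matrices. -/
noncomputable def twirl (π : G →* Matrix m m 𝕜) (μ : Measure G) (A : Matrix m m 𝕜) :
    Matrix m m 𝕜 :=
  of fun i j => ∫ g, (π g * A * π g⁻¹) i j ∂μ

theorem twirl_apply (π : G →* Matrix m m 𝕜) (μ : Measure G) (A : Matrix m m 𝕜) (i j : m) :
    twirl π μ A i j = ∫ g, (π g * A * π g⁻¹) i j ∂μ :=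
  rfl

variable [TopologicalSpace G] [IsTopologicalGroup G] [CompactSpace G] {π : G →* Matrix m m 𝕜}
  {μ : Measure G}

theorem map_twirl [OpensMeasurableSpace G] [IsFiniteMeasure μ] (hπ : Continuous π)
    (A : Matrix m m 𝕜) (L : Matrix m m 𝕜 →ₗ[𝕜] 𝕜) :
    L (twirl π μ A) = ∫ g, L (π g * A * π g⁻¹) ∂μ := by
  have hintegrable : ∀ i j, Integrable (fun g => (π g * A * π g⁻¹) i j * L (single i j 1)) μ :=
    fun i j => Continuous.integrable_of_hasCompactSupport (by fun_prop)
      (HasCompactSupport.of_compactSpace _)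
  calc L (twirl π μ A)
      = ∑ i, ∑ j, (∫ g, (π g * A * π g⁻¹) i j ∂μ) * L (single i j 1) :=
        linearMap_apply_eq_sum L _
    _ = ∫ g, ∑ i, ∑ j, (π g * A * π g⁻¹) i j * L (single i j 1) ∂μ := by
        rw [integral_finsetSum _ fun i _ => integrable_finsetSum _ fun j _ => hintegrable i j]
        simp only [integral_finsetSum _ fun j _ => hintegrable _ j, integral_mul_const]
    _ = ∫ g, L (π g * A * π g⁻¹) ∂μ := by simp only [← linearMap_apply_eq_sum]

theorem trace_mul_twirl [OpensMeasurableSpace G] [IsProbabilityMeasure μ] (hπ : Continuous π)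
    (A : Matrix m m 𝕜) {B : Matrix m m 𝕜} (hB : ∀ g, Commute (π g) B) :
    (B * twirl π μ A).trace = (B * A).trace := by
  have hconj : ∀ g, (B * (π g * A * π g⁻¹)).trace = (B * A).trace := fun g =>
    calc (B * (π g * A * π g⁻¹)).trace
        = (π g * (B * A) * π g⁻¹).trace := by simp only [← mul_assoc, (hB g).eq]
      _ = (B * A).trace := by
          rw [trace_mul_comm, ← mul_assoc, ← map_mul, inv_mul_cancel, map_one, one_mul]
  simpa [hconj] using
    map_twirl (μ := μ) hπ A ((traceLinearMap m 𝕜 𝕜).comp (LinearMap.mulLeft 𝕜 B))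

theorem commute_twirl [BorelSpace G] [IsFiniteMeasure μ] [μ.IsMulLeftInvariant]
    (hπ : Continuous π) (h : G) (A : Matrix m m 𝕜) : Commute (π h) (twirl π μ A) := by
  ext i j
  have hconj : ∀ g, π h * (π g * A * π g⁻¹) = π (h * g) * A * π (h * g)⁻¹ * π h := fun g => by
    simp only [map_mul, mul_assoc]
    simp only [← map_mul, _root_.mul_inv_rev, inv_mul_cancel_right]
  calc (π h * twirl π μ A) i j
      = ∫ g, (π h * (π g * A * π g⁻¹)) i j ∂μ :=
        map_twirl hπ A ((entryLinearMap 𝕜 𝕜 i j).comp (LinearMap.mulLeft 𝕜 (π h)))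
    _ = ∫ g, (π (h * g) * A * π (h * g)⁻¹ * π h) i j ∂μ := by simp only [hconj]
    _ = ∫ g, (π g * A * π g⁻¹ * π h) i j ∂μ :=
        integral_mul_left_eq_self (fun g => (π g * A * π g⁻¹ * π h) i j) h
    _ = (twirl π μ A * π h) i j :=
        (map_twirl hπ A ((entryLinearMap 𝕜 𝕜 i j).comp (LinearMap.mulRight 𝕜 (π h)))).symm

end Twirl

section UnitaryGroup

variable {ι κ 𝕜 : Type*} [Fintype κ] [DecidableEq κ] [RCLike 𝕜]

instance compactSpace_unitaryGroup : CompactSpace (unitaryGroup κ 𝕜) := by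
  refine isCompact_iff_compactSpace.1 (IsCompact.of_isClosed_subset
    (isCompact_univ_pi fun _ => isCompact_univ_pi fun _ => isCompact_closedBall (0 : 𝕜) 1)
    isClosed_unitary fun U hU i _ j _ => ?_)
  simpa using entry_norm_bound_of_unitary hU i j

variable [Fintype ι] [DecidableEq ι]

variable (ι κ 𝕜) in
/-- The representation of the unitary group on tensors by `U ↦ U^{⊗ι}`. -/
def unitaryTensorRep : unitaryGroup κ 𝕜 →* Matrix (ι → κ) (ι → κ) 𝕜 :=
  (kroneckerPower ι).comp (unitaryGroup κ 𝕜).subtype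

theorem unitaryTensorRep_apply (U : unitaryGroup κ 𝕜) :
    unitaryTensorRep ι κ 𝕜 U = kroneckerPower ι (U : Matrix κ κ 𝕜) :=
  rfl

theorem continuous_unitaryTensorRep : Continuous (unitaryTensorRep ι κ 𝕜) :=
  continuous_matrix fun _ _ =>
    continuous_finsetProd _ fun _ _ => continuous_subtype_val.matrix_elem _ _

theorem twirl_unitaryTensorRep_single_apply [MeasurableSpace (unitaryGroup κ 𝕜)]
    (μ : Measure (unitaryGroup κ 𝕜)) (I I' J J' : ι → κ) :
    twirl (unitaryTensorRep ι κ 𝕜) μ (single J J' 1) I I' =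
      ∫ U : unitaryGroup κ 𝕜, (∏ m, (U : Matrix κ κ 𝕜) (I m) (J m)) *
        (∏ m, (starRingEnd 𝕜) ((U : Matrix κ κ 𝕜) (I' m) (J' m))) ∂μ := by
  simp only [twirl_apply, single_eq_single_vecMulVec_single, mul_vecMulVec, vecMulVec_mul,
    vecMulVec_apply]
  simp [unitaryTensorRep_apply, kroneckerPower_apply]

end UnitaryGroup

section WeingartenFunction

variable {ι κ R : Type*} [Fintype ι] [DecidableEq ι] [Fintype κ] [DecidableEq κ] [CommRing R]

theorem coeff_eq_sum_trace_mul {w : Perm ι → R}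
    (hw : (∑ σ, MonoidAlgebra.single σ (w σ)) *
      (∑ σ : Perm ι, MonoidAlgebra.single σ (permuteFactors κ R σ).trace) = 1)
    (c : Perm ι → R) (σ : Perm ι) :
    c σ = ∑ τ, (permuteFactors κ R τ⁻¹ * ∑ ρ, c ρ • permuteFactors κ R ρ).trace *
      w (τ * σ⁻¹) := by
  let W := groupMatrix (∑ σ, MonoidAlgebra.single σ (w σ))
  let N := groupMatrix (∑ σ : Perm ι, MonoidAlgebra.single σ (permuteFactors κ R σ).trace)
  have hNW : N * W = 1 := mul_eq_one_comm.1 <| by rw [← groupMatrix_mul, hw, groupMatrix_one]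
  have hcN : ∀ τ, (permuteFactors κ R τ⁻¹ * ∑ ρ, c ρ • permuteFactors κ R ρ).trace =
      (c ᵥ* N) τ := fun τ => by
    simp [N, vecMul, dotProduct, groupMatrix_sum_single_apply, Matrix.mul_sum, trace_sum,
      permuteFactors_mul]
  calc c σ = ((c ᵥ* N) ᵥ* W) σ := by rw [vecMul_vecMul, hNW, vecMul_one]
    _ = ∑ τ, (c ᵥ* N) τ * W τ σ := rfl
    _ = _ := by simp only [hcN, W, groupMatrix_sum_single_apply]

theorem twirl_eq_sum_smul_permuteFactors [MeasurableSpace (unitaryGroup κ ℂ)]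
    [BorelSpace (unitaryGroup κ ℂ)] (μ : Measure (unitaryGroup κ ℂ)) [IsProbabilityMeasure μ]
    [μ.IsMulLeftInvariant] {e : ι → κ} (he : Injective e) {w : Perm ι → ℂ}
    (hw : (∑ σ, MonoidAlgebra.single σ (w σ)) *
      (∑ σ : Perm ι, MonoidAlgebra.single σ (permuteFactors κ ℂ σ).trace) = 1)
    (A : Matrix (ι → κ) (ι → κ) ℂ) :
    twirl (unitaryTensorRep ι κ ℂ) μ A =
      ∑ σ, (∑ τ, (permuteFactors κ ℂ τ⁻¹ * A).trace * w (τ * σ⁻¹)) • permuteFactors κ ℂ σ := by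
  have hcomm : ∀ B, Commute (kroneckerPower ι B) (twirl (unitaryTensorRep ι κ ℂ) μ A) :=
    commute_kroneckerPower_of_unitary fun U hU =>
      commute_twirl continuous_unitaryTensorRep ⟨U, hU⟩ A
  have hsum := eq_sum_smul_permuteFactors hcomm he
  rw [hsum]
  refine Finset.sum_congr rfl fun σ _ => ?_
  rw [coeff_eq_sum_trace_mul hw (fun σ => twirl (unitaryTensorRep ι κ ℂ) μ A (e ∘ σ) e) σ, ← hsum]
  simp only [trace_mul_twirl continuous_unitaryTensorRep A fun U =>
    commute_kroneckerPower_permuteFactors (U : Matrix κ κ ℂ) _]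

end WeingartenFunction

end Weingarten

/-- **The Weingarten integration formula** for the unitary group.  Here `w = Wg(n,·)` is the
Weingarten function, characterized by the fact that `Σ_σ w(σ)·σ` is the inverse of
`Σ_σ n^{#σ}·σ` in the group algebra `ℂ[S_p]` (hypothesis `hw`), and `μ` is the Haar
probability measure on `U(n)`, characterized as a left-invariant Borel probability measure. -/
theorem weingarten_integration_formula
    (p n : ℕ) (hp : 1 ≤ p) (hn : p ≤ n)
    (w : Equiv.Perm (Fin p) → ℂ)
    (hw : (∑ σ : Equiv.Perm (Fin p), MonoidAlgebra.single (R := ℂ) σ (w σ)) *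
          (∑ σ : Equiv.Perm (Fin p),
            MonoidAlgebra.single (R := ℂ) σ ((n : ℂ) ^ σ.cycleCount)) = 1)
    [MeasurableSpace (Matrix.unitaryGroup (Fin n) ℂ)]
    [BorelSpace (Matrix.unitaryGroup (Fin n) ℂ)]
    (μ : Measure (Matrix.unitaryGroup (Fin n) ℂ)) [IsProbabilityMeasure μ]
    (hμ : ∀ V : Matrix.unitaryGroup (Fin n) ℂ,
      Measure.map (fun U => V * U) μ = μ)
    (i i' j j' : Fin p → Fin n) :
    ∫ U : Matrix.unitaryGroup (Fin n) ℂ,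
        (∏ m, (U : Matrix (Fin n) (Fin n) ℂ) (i m) (j m)) *
          (∏ m, (starRingEnd ℂ) ((U : Matrix (Fin n) (Fin n) ℂ) (i' m) (j' m))) ∂μ =
      ∑ σ : Equiv.Perm (Fin p), ∑ τ : Equiv.Perm (Fin p),
        (∏ m, if i m = i' (σ m) then (1 : ℂ) else 0) *
          (∏ m, if j m = j' (τ m) then (1 : ℂ) else 0) * w (τ * σ⁻¹) := by
  have : μ.IsMulLeftInvariant := ⟨hμ⟩
  have hgram : ∀ σ : Equiv.Perm (Fin p),
      (n : ℂ) ^ σ.cycleCount = (Weingarten.permuteFactors (Fin n) ℂ σ).trace := fun σ => by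
    rw [Weingarten.trace_permuteFactors_eq_pow_cycleCount, Fintype.card_fin]
  simp only [hgram] at hw
  have hdelta (x y : Fin p → Fin n) (σ : Equiv.Perm (Fin p)) :
      (∏ m, if x m = y (σ m) then (1 : ℂ) else 0) = if x = y ∘ σ then 1 else 0 :=
    Weingarten.prod_ite_apply_eq x (y ∘ σ)
  rw [← Weingarten.twirl_unitaryTensorRep_single_apply,
    Weingarten.twirl_eq_sum_smul_permuteFactors μ (Fin.castLE_injective hn) hw]
  simp only [Matrix.sum_apply, Matrix.smul_apply, smul_eq_mul, Finset.sum_mul,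
    Weingarten.permuteFactors_apply, Weingarten.trace_permuteFactors_inv_mul_single, hdelta]
  exact Finset.sum_congr rfl fun σ _ => Finset.sum_congr rfl fun τ _ => by ring
end

section
/- Fix an integer p ≥ 1 and a permutation σ ∈ S_p. For n ≥ p let Wg(n,σ) be the unitary Weingarten function. Then lim_{n→∞} n^{p + |σ|} · Wg(n, σ) = Mob(σ), where |σ| = p − #σ and Mob(σ) = Π_{c ∈ Cycles(σ)} (−1)^{ℓ(c)−1} Cat_{ℓ(c)−1}, the product running over the cycles c of σ, ℓ(c) denoting the length of the cycle c, and Cat_i = (2i)!/((i+1)!·i!) the i-th Catalan number. Equivalently, Wg(n,σ) = n^{−(p+|σ|)}(Mob(σ) + O(n^{−2})) as n → ∞. -/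
open Filter Asymptotics

/-- The Möbius function `Mob(σ) = Π_{c ∈ Cycles(σ)} (−1)^{ℓ(c)−1} Cat_{ℓ(c)−1}`.  Cycles of
length one (fixed points) contribute a factor `Cat₀ = 1`, so it suffices to take the product
over the cycle type of `σ` (the multiset of lengths of the nontrivial cycles). -/
noncomputable def Equiv.Perm.mob {p : ℕ} (σ : Equiv.Perm (Fin p)) : ℂ :=
  (σ.cycleType.map fun ℓ => (-1 : ℂ) ^ (ℓ - 1) * (catalan (ℓ - 1) : ℂ)).prod

/-!
Put `v(τ) = z^(p+|τ|) Wg(z,τ)`. Since `|τ| + |στ⁻¹| = |σ| + 2 genus(τ,σ)`, the equation defining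
the Weingarten function becomes the linear system `∑ τ, v(τ) x^genus(τ,σ) = [σ = 1]` with
`x = z⁻²`. Its matrix is polynomial in `x` and unitriangular with respect to `|·|` at `x = 0`, so
its solution is within `O(x)` of the solution at `x = 0`.

That `Mob` solves the system at `x = 0` follows from the Catalan recursion. For `σ b = a ≠ b`, write
every `τ` uniquely as `(a y)π` with `π b = a`. Such a `τ` has genus zero exactly when `π` does and
`y` lies on the cycle of `a` in `π`, and then `(a y)` cuts this cycle in two (or `y = a`): summing
`Mob` over all cuts of a cycle gives zero.
-/

namespace Weingarten

open Equiv Equiv.Perm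
open scoped Matrix

section CycleSplitting

variable {α : Type*} [DecidableEq α]

theorem swap_mul_formPerm_append {x y : α} {l₁ : List α} (l₂ : List α) (hy : y ∉ x :: l₁) :
    swap x y * (x :: l₁ ++ y :: l₂).formPerm = (x :: l₁).formPerm * (y :: l₂).formPerm := by
  induction l₁ generalizing x with
  | nil => simp
  | cons x' l₁ ih =>
    simp only [List.mem_cons, not_or] at hy
    have hswap : swap x y * swap x x' = swap x x' * swap x' y := by
      rw [mul_swap_eq_swap_mul (swap x x'), swap_apply_right, swap_apply_of_ne_of_ne hy.1 hy.2.1]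
    calc swap x y * (x :: x' :: l₁ ++ y :: l₂).formPerm
        = swap x y * swap x x' * (x' :: l₁ ++ y :: l₂).formPerm := by
          simp only [List.cons_append, List.formPerm_cons_cons, mul_assoc]
      _ = swap x x' * (swap x' y * (x' :: l₁ ++ y :: l₂).formPerm) := by rw [hswap, mul_assoc]
      _ = (x :: x' :: l₁).formPerm * (y :: l₂).formPerm := by
          rw [ih (by simp [hy]), List.formPerm_cons_cons, mul_assoc]

theorem sameCycle_swap_mul_of_not_sameCycle [Finite α] {σ : Perm α} {x y : α}
    (h : ¬ σ.SameCycle x y) : (swap x y * σ).SameCycle x y := by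
  by_contra h'
  have hσ (n : ℕ) : (σ ^ n) y ≠ x := fun hn => h (SameCycle.symm ⟨n, by simpa using hn⟩)
  have hτ (n : ℕ) : ((swap x y * σ) ^ n) y ≠ x :=
    fun hn => h' (SameCycle.symm ⟨n, by simpa using hn⟩)
  have hstep (n : ℕ) (hn : ((swap x y * σ) ^ n) y = (σ ^ n) y) :
      ((swap x y * σ) ^ (n + 1)) y = swap x y ((σ ^ (n + 1)) y) := by
    rw [pow_succ', pow_succ', Perm.mul_apply, hn, Perm.mul_apply, Perm.mul_apply]
  have hne (n : ℕ) (hn : ((swap x y * σ) ^ n) y = (σ ^ n) y) : (σ ^ (n + 1)) y ≠ y :=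
    fun hy => hτ (n + 1) (by rw [hstep n hn, hy, swap_apply_right])
  have hpow (n : ℕ) : ((swap x y * σ) ^ n) y = (σ ^ n) y := by
    induction n with
    | zero => rfl
    | succ n ih => rw [hstep n ih, swap_apply_of_ne_of_ne (hσ _) (hne n ih)]
  apply hne (orderOf σ - 1) (hpow _)
  rw [Nat.sub_add_cancel (orderOf_pos σ), pow_orderOf_eq_one, Perm.one_apply]

theorem disjoint_formPerm {l₁ l₂ : List α} (h : l₁.Disjoint l₂) :
    Perm.Disjoint l₁.formPerm l₂.formPerm := fun y => by
  by_cases hy : y ∈ l₁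
  · exact .inr (List.formPerm_apply_of_notMem (h hy))
  · exact .inl (List.formPerm_apply_of_notMem hy)

variable [Fintype α] {σ : Perm α} {x : α}

@[to_additive]
theorem prod_map_cycleType_formPerm {M : Type*} [CommMonoid M] {f : ℕ → M} (hf : f 1 = 1)
    {l : List α} (hl : l.Nodup) (hne : l ≠ []) :
    (l.formPerm.cycleType.map f).prod = f l.length := by
  match l, hne with
  | [y], _ => simp [hf]
  | y :: z :: l, _ =>
    rw [(List.isCycle_formPerm hl (by simp)).cycleType,
      List.support_formPerm_of_nodup _ hl (by simp), List.toFinset_card_of_nodup hl,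
      Multiset.map_singleton, Multiset.prod_singleton]

theorem disjoint_cycleOf_mul_inv_cycleOf (σ : Perm α) (x : α) :
    Perm.Disjoint (σ.cycleOf x) (σ * (σ.cycleOf x)⁻¹) := by
  by_cases hx : σ x = x
  · rw [(cycleOf_eq_one_iff σ).2 hx]
    exact disjoint_one_left _
  · exact (disjoint_mul_inv_of_mem_cycleFactorsFinset
      (cycleOf_mem_cycleFactorsFinset_iff.2 (mem_support.2 hx))).symm

theorem cycleOf_mul_mul_inv_cycleOf (σ : Perm α) (x : α) :
    σ.cycleOf x * (σ * (σ.cycleOf x)⁻¹) = σ := by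
  rw [(disjoint_cycleOf_mul_inv_cycleOf σ x).commute.eq, inv_mul_cancel_right]

theorem cycleType_eq_cons (hx : σ x ≠ x) :
    σ.cycleType = (σ.cycleOf x).support.card ::ₘ (σ * (σ.cycleOf x)⁻¹).cycleType := by
  conv_lhs => rw [← cycleOf_mul_mul_inv_cycleOf σ x]
  rw [(disjoint_cycleOf_mul_inv_cycleOf σ x).cycleType_mul, (isCycle_cycleOf σ hx).cycleType,
    Multiset.singleton_add]

theorem toList_eq_iterate_append {a : ℕ} (ha : a ≤ (σ.cycleOf x).support.card) :
    σ.toList x = List.iterate σ x a ++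
      List.iterate σ ((σ ^ a) x) ((σ.cycleOf x).support.card - a) := by
  rw [← iterate_eq_pow, ← List.iterate_add, Nat.add_sub_cancel' ha, toList]

theorem swap_pow_mul_cycleOf {a : ℕ} (ha : 0 < a) (hak : a < (σ.cycleOf x).support.card) :
    swap x ((σ ^ a) x) * σ.cycleOf x = (List.iterate σ x a).formPerm *
      (List.iterate σ ((σ ^ a) x) ((σ.cycleOf x).support.card - a)).formPerm := by
  have hlist := toList_eq_iterate_append hak.le
  have hnodup := nodup_toList σ x
  obtain ⟨b, rfl⟩ := Nat.exists_eq_succ_of_ne_zero ha.ne'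
  obtain ⟨c, hc⟩ := Nat.exists_eq_succ_of_ne_zero (Nat.sub_ne_zero_of_lt hak)
  rw [hc] at hlist ⊢
  rw [← formPerm_toList, hlist]
  rw [hlist] at hnodup
  exact swap_mul_formPerm_append _ fun hmem =>
    List.disjoint_of_nodup_append hnodup hmem List.mem_cons_self

theorem disjoint_formPerm_of_subset_toList {l : List α} (hl : l ⊆ σ.toList x) :
    Perm.Disjoint l.formPerm (σ * (σ.cycleOf x)⁻¹) := fun y => by
  by_cases hy : y ∈ l
  · have hmem : y ∈ (σ.cycleOf x).support := mem_support_cycleOf_iff.2 (mem_toList_iff.1 (hl hy))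
    exact .inr ((disjoint_cycleOf_mul_inv_cycleOf σ x y).resolve_left (mem_support.1 hmem))
  · exact .inl (List.formPerm_apply_of_notMem hy)

/-- Multiplying by the transposition `(x σᵃx)` cuts the cycle of `x` into cycles of lengths `a`
and `k - a`; since `f 1 = 1`, fixed points created in this way need no separate treatment. -/
@[to_additive]
theorem prod_map_cycleType_swap {M : Type*} [CommMonoid M] {f : ℕ → M} (hf : f 1 = 1)
    {a : ℕ} (ha : 0 < a) (hak : a < (σ.cycleOf x).support.card) :
    ((swap x ((σ ^ a) x) * σ).cycleType.map f).prod =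
      f a * f ((σ.cycleOf x).support.card - a) *
        ((σ * (σ.cycleOf x)⁻¹).cycleType.map f).prod := by
  set l₁ := List.iterate σ x a
  set l₂ := List.iterate σ ((σ ^ a) x) ((σ.cycleOf x).support.card - a)
  have hlist : σ.toList x = l₁ ++ l₂ := toList_eq_iterate_append hak.le
  have hnodup : (l₁ ++ l₂).Nodup := hlist ▸ nodup_toList σ x
  have hdisj : l₁.formPerm.Disjoint l₂.formPerm :=
    disjoint_formPerm (List.disjoint_of_nodup_append hnodup)
  have hmul : swap x ((σ ^ a) x) * σ = l₁.formPerm * l₂.formPerm * (σ * (σ.cycleOf x)⁻¹) := by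
    rw [← swap_pow_mul_cycleOf ha hak, mul_assoc, cycleOf_mul_mul_inv_cycleOf]
  have hdisj' : (l₁.formPerm * l₂.formPerm).Disjoint (σ * (σ.cycleOf x)⁻¹) :=
    .mul_left (disjoint_formPerm_of_subset_toList (hlist ▸ List.subset_append_left l₁ l₂))
      (disjoint_formPerm_of_subset_toList (hlist ▸ List.subset_append_right l₁ l₂))
  rw [hmul, hdisj'.cycleType_mul, hdisj.cycleType_mul, Multiset.map_add, Multiset.map_add,
    Multiset.prod_add, Multiset.prod_add,
    prod_map_cycleType_formPerm hf hnodup.of_append_left (by simpa [l₁] using ha.ne'),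
    prod_map_cycleType_formPerm hf hnodup.of_append_right
      (by simpa [l₂] using Nat.sub_ne_zero_of_lt hak),
    List.length_iterate, List.length_iterate]

theorem exists_pow_apply_eq_of_sameCycle {y : α} (h : σ.SameCycle x y) (hxy : x ≠ y) :
    ∃ a, 0 < a ∧ a < (σ.cycleOf x).support.card ∧ (σ ^ a) x = y := by
  have hx : σ x ≠ x := fun hx => hxy (h.eq_of_left hx)
  obtain ⟨a, hak, rfl⟩ := h.exists_pow_eq_of_mem_support (mem_support.2 hx)
  exact ⟨a, Nat.pos_of_ne_zero (by rintro rfl; simp at hxy), hak, rfl⟩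

theorem sum_filter_sameCycle {M : Type*} [AddCommMonoid M] (F : α → M) (hx : σ x ≠ x) :
    ∑ y with σ.SameCycle x y, F y =
      ∑ a ∈ Finset.range (σ.cycleOf x).support.card, F ((σ ^ a) x) := by
  have hmem : x ∈ (σ.cycleOf x).support := (mem_support_cycleOf_iff' hx).2 (.refl σ x)
  refine (Finset.sum_nbij (fun a => (σ ^ a) x) ?_ ?_ ?_ fun _ _ => rfl).symm
  · exact fun a _ => by simp [SameCycle.refl]
  · intro a ha b hb hab
    exact (((isCycleOn_support_cycleOf σ x).pow_apply_eq_pow_apply hmem).1 hab).eq_of_lt_of_lt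
      (Finset.mem_range.1 ha) (Finset.mem_range.1 hb)
  · intro y hy
    obtain ⟨a, ha, rfl⟩ := SameCycle.exists_pow_eq_of_mem_support
      (Finset.mem_filter.1 hy).2 (mem_support.2 hx)
    exact ⟨a, Finset.mem_range.2 ha, rfl⟩

end CycleSplitting

section ReflectionLength

variable {α : Type*} [DecidableEq α] [Fintype α] {σ : Perm α} {x y : α}

/-- The reflection length `|σ|`, the least number of transpositions with product `σ`, computed
from the lengths of the nontrivial cycles. -/
def reflectionLength (σ : Perm α) : ℕ :=
  (σ.cycleType.map (· - 1)).sum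

@[simp]
theorem reflectionLength_one : reflectionLength (1 : Perm α) = 0 := by
  simp [reflectionLength]

theorem reflectionLength_mul_comm (σ τ : Perm α) :
    reflectionLength (σ * τ) = reflectionLength (τ * σ) := by
  rw [reflectionLength, reflectionLength, ← cycleType_conj (σ := σ * τ) (τ := τ)]
  simp [mul_assoc]

theorem reflectionLength_add_card_cycleType (σ : Perm α) :
    reflectionLength σ + σ.cycleType.card = σ.support.card := by
  have hpred : ∀ ℓ ∈ σ.cycleType, ℓ - 1 + 1 = ℓ := fun ℓ hℓ =>
    Nat.sub_add_cancel (one_lt_of_mem_cycleType hℓ).le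
  calc reflectionLength σ + σ.cycleType.card
      = (σ.cycleType.map fun ℓ => ℓ - 1 + 1).sum := by simp [reflectionLength]
    _ = σ.support.card := by
      rw [Multiset.map_congr rfl hpred, Multiset.map_id', sum_cycleType]

theorem cycleCount_add_reflectionLength {p : ℕ} (σ : Perm (Fin p)) :
    σ.cycleCount + reflectionLength σ = p := by
  have hfix : (Finset.univ.filter fun i => σ i = i).card + σ.support.card = p := by
    simpa [support] using
      Finset.card_filter_add_card_filter_not (s := .univ) fun i => σ i = i
  rw [cycleCount, add_assoc, add_comm σ.cycleType.card, reflectionLength_add_card_cycleType, hfix]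

theorem reflectionLength_swap_mul_add_one (h : σ.SameCycle x y) (hxy : x ≠ y) :
    reflectionLength (swap x y * σ) + 1 = reflectionLength σ := by
  obtain ⟨a, ha, hak, rfl⟩ := exists_pow_apply_eq_of_sameCycle h hxy
  have hx : σ x ≠ x := fun hx => hxy (h.eq_of_left hx)
  rw [reflectionLength, reflectionLength, sum_map_cycleType_swap rfl ha hak,
    cycleType_eq_cons hx, Multiset.map_cons, Multiset.sum_cons]
  omega

theorem reflectionLength_swap_mul_of_not_sameCycle (h : ¬ σ.SameCycle x y) :
    reflectionLength (swap x y * σ) = reflectionLength σ + 1 := by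
  have hxy : x ≠ y := by rintro rfl; exact h (.refl σ x)
  simpa using
    (reflectionLength_swap_mul_add_one (sameCycle_swap_mul_of_not_sameCycle h) hxy).symm

theorem eq_one_of_reflectionLength_eq_zero (h : reflectionLength σ = 0) : σ = 1 := by
  by_contra hσ
  obtain ⟨x, hx⟩ : ∃ x, σ x ≠ x := by simpa [Perm.ext_iff] using hσ
  have := reflectionLength_swap_mul_add_one (sameCycle_apply_right.2 (.refl σ x)) hx.symm
  omega

theorem exists_reflectionLength_add_eq (σ τ : Perm α) :
    ∃ g, reflectionLength σ + reflectionLength τ = reflectionLength (σ * τ) + 2 * g := by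
  induction hn : reflectionLength σ generalizing σ with
  | zero => exact ⟨0, by simp [eq_one_of_reflectionLength_eq_zero hn]⟩
  | succ n ih =>
    have hσ : σ ≠ 1 := by rintro rfl; simp at hn
    obtain ⟨x, hx⟩ : ∃ x, σ x ≠ x := by simpa [Perm.ext_iff] using hσ
    have hlen := reflectionLength_swap_mul_add_one (sameCycle_apply_right.2 (.refl σ x)) hx.symm
    obtain ⟨g, hg⟩ := ih (swap x (σ x) * σ) (by omega)
    rw [mul_assoc] at hg
    by_cases h : (σ * τ).SameCycle x (σ x)
    · have := reflectionLength_swap_mul_add_one h hx.symm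
      exact ⟨g, by omega⟩
    · have := reflectionLength_swap_mul_of_not_sameCycle h
      exact ⟨g + 1, by omega⟩

/-- The genus of the pair `(τ, σ)`, defined by Euler's formula
`|τ| + |στ⁻¹| = |σ| + 2 * genus`. It vanishes exactly when `τ` lies on a geodesic from `1` to `σ`
in the Cayley graph generated by the transpositions. -/
def genus (τ σ : Perm α) : ℕ :=
  (reflectionLength τ + reflectionLength (σ * τ⁻¹) - reflectionLength σ) / 2

theorem reflectionLength_add_reflectionLength_mul_inv (τ σ : Perm α) :
    reflectionLength τ + reflectionLength (σ * τ⁻¹) = reflectionLength σ + 2 * genus τ σ := by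
  obtain ⟨g, hg⟩ := exists_reflectionLength_add_eq (σ * τ⁻¹) τ
  rw [inv_mul_cancel_right] at hg
  rw [genus]
  omega

end ReflectionLength

section CycleWeight

variable {p : ℕ}

/-- The factor `(-1)^(ℓ-1) Cat_(ℓ-1)` that a cycle of length `ℓ` contributes to `Mob`. -/
noncomputable def cycleWeight (ℓ : ℕ) : ℂ :=
  (-1) ^ (ℓ - 1) * catalan (ℓ - 1)

theorem cycleWeight_one : cycleWeight 1 = 1 := by
  simp [cycleWeight]

theorem mob_eq_prod_cycleWeight (σ : Perm (Fin p)) :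
    σ.mob = (σ.cycleType.map cycleWeight).prod :=
  rfl

theorem sum_antidiagonal_cycleWeight_mul_cycleWeight (m : ℕ) :
    ∑ ij ∈ Finset.HasAntidiagonal.antidiagonal m, cycleWeight (ij.1 + 1) * cycleWeight (ij.2 + 1) =
      -cycleWeight (m + 2) := by
  have hterm : ∀ ij ∈ Finset.HasAntidiagonal.antidiagonal m,
      cycleWeight (ij.1 + 1) * cycleWeight (ij.2 + 1) =
        (-1) ^ m * (catalan ij.1 * catalan ij.2 : ℕ) := by
    rintro ⟨i, j⟩ hij
    rw [Finset.HasAntidiagonal.mem_antidiagonal] at hij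
    simp only [cycleWeight, Nat.add_sub_cancel, ← hij, pow_add, Nat.cast_mul]
    ring
  rw [Finset.sum_congr rfl hterm, ← Finset.mul_sum, ← Nat.cast_sum, ← catalan_succ']
  simp [cycleWeight, pow_succ]

/-- Cutting the cycle of `x` in all possible ways turns the Catalan recursion into the vanishing
of this sum. -/
theorem sum_mob_swap_mul {σ : Perm (Fin p)} {x : Fin p} (hx : σ x ≠ x) :
    ∑ y with σ.SameCycle x y, (swap x y * σ).mob = 0 := by
  obtain ⟨m, hm⟩ := Nat.exists_eq_add_of_le' (two_le_card_support_cycleOf_iff.2 hx)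
  set rest := ((σ * (σ.cycleOf x)⁻¹).cycleType.map cycleWeight).prod
  have hcut : ∀ a ∈ Finset.range (m + 1), (swap x ((σ ^ (a + 1)) x) * σ).mob =
      cycleWeight (a + 1) * cycleWeight (m - a + 1) * rest := by
    intro a ha
    rw [Finset.mem_range] at ha
    rw [mob_eq_prod_cycleWeight, prod_map_cycleType_swap cycleWeight_one a.succ_pos
      (by omega), hm, show m + 2 - (a + 1) = m - a + 1 by omega]
  have huncut : σ.mob = cycleWeight (m + 2) * rest := by
    rw [mob_eq_prod_cycleWeight, cycleType_eq_cons hx, hm, Multiset.map_cons, Multiset.prod_cons]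
  rw [sum_filter_sameCycle _ hx, hm, Finset.sum_range_succ', pow_zero, Perm.one_apply,
    swap_self, ← Perm.one_def, one_mul, huncut, Finset.sum_congr rfl hcut,
    ← Finset.sum_mul, ← Finset.Nat.sum_antidiagonal_eq_sum_range_succ
      (fun i j => cycleWeight (i + 1) * cycleWeight (j + 1)),
    sum_antidiagonal_cycleWeight_mul_cycleWeight]
  ring

end CycleWeight

section GenusMatrix

variable {α : Type*} [DecidableEq α] [Fintype α] {R : Type*} [CommRing R]

/-- The matrix with entries `x ^ genus τ σ`. At `x = 0` it is the zeta matrix of the order on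
permutations in which `τ ≤ σ` when `τ` lies on a geodesic from `1` to `σ`. -/
def genusMatrix (x : R) : Matrix (Perm α) (Perm α) R :=
  .of fun τ σ => x ^ genus τ σ

theorem genusMatrix_zero_apply_eq_zero {τ σ : Perm α}
    (h : reflectionLength σ < reflectionLength τ) : genusMatrix (0 : R) τ σ = 0 := by
  have := reflectionLength_add_reflectionLength_mul_inv τ σ
  exact zero_pow (by omega)

theorem genusMatrix_zero_apply_of_reflectionLength_eq {τ σ : Perm α}
    (h : reflectionLength σ = reflectionLength τ) :
    genusMatrix (0 : R) τ σ = if τ = σ then 1 else 0 := by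
  have hgenus := reflectionLength_add_reflectionLength_mul_inv τ σ
  split_ifs with heq
  · subst heq
    rw [mul_inv_cancel, reflectionLength_one] at hgenus
    simp [genusMatrix, show genus τ τ = 0 by omega]
  · have : reflectionLength (σ * τ⁻¹) ≠ 0 := fun h0 =>
      heq (mul_inv_eq_one.1 (eq_one_of_reflectionLength_eq_zero h0)).symm
    exact zero_pow (by omega)

theorem det_genusMatrix_zero : (genusMatrix (0 : R) : Matrix (Perm α) (Perm α) R).det = 1 := by
  have htriangular : (genusMatrix (0 : R) : Matrix (Perm α) (Perm α) R).BlockTriangular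
      reflectionLength := fun _ _ h => genusMatrix_zero_apply_eq_zero h
  have hblock (k : ℕ) : (genusMatrix (0 : R) : Matrix (Perm α) (Perm α) R).toSquareBlock
      reflectionLength k = 1 := by
    ext ⟨τ, hτ⟩ ⟨σ, hσ⟩
    simp [Matrix.toSquareBlock_def, Matrix.one_apply,
      genusMatrix_zero_apply_of_reflectionLength_eq (hσ.trans hτ.symm)]
  simp only [htriangular.det, hblock, Matrix.det_one, Finset.prod_const_one]

end GenusMatrix

section MoebiusInversion

variable {α : Type*} [DecidableEq α] [Fintype α]

theorem sum_perm_eq_sum_filter_sum_swap_mul {M : Type*} [AddCommMonoid M] (F : Perm α → M)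
    (b x : α) : ∑ τ, F τ = ∑ π : Perm α with π b = x, ∑ y, F (swap x y * π) := by
  rw [← Finset.sum_product']
  refine (Finset.sum_bij' (fun q _ => swap x q.2 * q.1) (fun τ _ => (swap x (τ b) * τ, τ b))
    ?_ ?_ ?_ ?_ fun _ _ => rfl).symm <;> simp +contextual

theorem reflectionLength_mul_swap_of_apply_eq {ρ : Perm α} {x y : α} (hρ : ρ x = x)
    (hxy : x ≠ y) : reflectionLength (ρ * swap x y) = reflectionLength ρ + 1 := by
  rw [reflectionLength_mul_comm]
  exact reflectionLength_swap_mul_of_not_sameCycle fun h => hxy (h.eq_of_left hρ)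

variable {σ π : Perm α} {x y : α}

theorem genus_swap_mul_of_sameCycle (hfix : (σ * π⁻¹) x = x) (h : π.SameCycle x y) :
    genus (swap x y * π) σ = genus π σ := by
  obtain rfl | hxy := eq_or_ne x y
  · rw [swap_self, ← Perm.one_def, one_mul]
  have hleft := reflectionLength_swap_mul_add_one h hxy
  have hright := reflectionLength_mul_swap_of_apply_eq hfix hxy
  have hπ := reflectionLength_add_reflectionLength_mul_inv π σ
  have hτ := reflectionLength_add_reflectionLength_mul_inv (swap x y * π) σ
  rw [mul_inv_rev, swap_inv, ← mul_assoc] at hτ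
  omega

theorem genus_swap_mul_of_not_sameCycle (hfix : (σ * π⁻¹) x = x) (h : ¬ π.SameCycle x y) :
    genus (swap x y * π) σ = genus π σ + 1 := by
  have hxy : x ≠ y := by rintro rfl; exact h (.refl π x)
  have hleft := reflectionLength_swap_mul_of_not_sameCycle h
  have hright := reflectionLength_mul_swap_of_apply_eq hfix hxy
  have hπ := reflectionLength_add_reflectionLength_mul_inv π σ
  have hτ := reflectionLength_add_reflectionLength_mul_inv (swap x y * π) σ
  rw [mul_inv_rev, swap_inv, ← mul_assoc] at hτ
  omega

theorem sum_mob_swap_mul_mul_zero_pow_genus {p : ℕ} {σ π : Perm (Fin p)} {x : Fin p}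
    (hfix : (σ * π⁻¹) x = x) (hx : π x ≠ x) :
    ∑ y, (swap x y * π).mob * (0 : ℂ) ^ genus (swap x y * π) σ = 0 := by
  have hterm (y : Fin p) : (swap x y * π).mob * (0 : ℂ) ^ genus (swap x y * π) σ =
      if π.SameCycle x y then (swap x y * π).mob * 0 ^ genus π σ else 0 := by
    split_ifs with h
    · rw [genus_swap_mul_of_sameCycle hfix h]
    · rw [genus_swap_mul_of_not_sameCycle hfix h, pow_succ, mul_zero, mul_zero]
  simp only [hterm]
  rw [← Finset.sum_filter, ← Finset.sum_mul, sum_mob_swap_mul hx, zero_mul]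

theorem mob_vecMul_genusMatrix_zero (p : ℕ) :
    mob ᵥ* genusMatrix (0 : ℂ) = Pi.single (1 : Perm (Fin p)) 1 := by
  ext σ
  change ∑ τ, τ.mob * (0 : ℂ) ^ genus τ σ = _
  obtain rfl | hσ := eq_or_ne σ 1
  · rw [Pi.single_eq_same, Finset.sum_eq_single 1]
    · simp [genus, mob]
    · intro τ _ hτ
      have hlen := reflectionLength_add_reflectionLength_mul_inv τ 1
      have hpos : reflectionLength τ ≠ 0 := fun h => hτ (eq_one_of_reflectionLength_eq_zero h)
      rw [reflectionLength_one] at hlen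
      rw [zero_pow (by omega), mul_zero]
    · simp
  · obtain ⟨b, hb⟩ : ∃ b, σ b ≠ b := by simpa [Perm.ext_iff] using hσ
    rw [Pi.single_eq_of_ne hσ, sum_perm_eq_sum_filter_sum_swap_mul _ b (σ b)]
    refine Finset.sum_eq_zero fun π hπ => ?_
    have hπb : π b = σ b := (Finset.mem_filter.1 hπ).2
    have hinv : π⁻¹ (σ b) = b := Perm.inv_eq_iff_eq.2 hπb.symm
    refine sum_mob_swap_mul_mul_zero_pow_genus (by rw [Perm.mul_apply, hinv]) fun h => hb ?_
    exact π.injective (h.trans hπb.symm)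

end MoebiusInversion

section GroupAlgebra

theorem coeff_sum_single_mul_sum_single {G R : Type*} [Group G] [Fintype G] [Semiring R]
    (f g : G → R) (σ : G) :
    ((∑ τ, MonoidAlgebra.single τ (f τ)) * ∑ τ, MonoidAlgebra.single τ (g τ)).coeff σ =
      ∑ τ, f τ * g (τ⁻¹ * σ) := by
  classical
  simp only [Finset.sum_mul_sum, MonoidAlgebra.coeff_sum, Finsupp.finsetSum_apply,
    MonoidAlgebra.single_mul_single, MonoidAlgebra.coeff_single, Finsupp.single_apply,
    ← eq_inv_mul_iff_mul_eq, Finset.sum_ite_eq', Finset.mem_univ, if_true]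

theorem vecMul_genusMatrix_of_sum_single_mul_eq_one {K : Type*} [Field K] {p : ℕ} {z : K}
    (hz : z ≠ 0) {w : Perm (Fin p) → K}
    (hw : (∑ τ, MonoidAlgebra.single τ (w τ)) *
      ∑ τ : Perm (Fin p), MonoidAlgebra.single τ (z ^ τ.cycleCount) = 1) :
    (fun τ => z ^ (p + reflectionLength τ) * w τ) ᵥ* genusMatrix (z ^ 2)⁻¹ =
      Pi.single 1 1 := by
  ext σ
  have hpow (τ : Perm (Fin p)) : z ^ (p + reflectionLength τ) * (z ^ 2)⁻¹ ^ genus τ σ =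
      z ^ reflectionLength σ * z ^ (τ⁻¹ * σ).cycleCount := by
    have hgenus := reflectionLength_add_reflectionLength_mul_inv τ σ
    have hcount := cycleCount_add_reflectionLength (τ⁻¹ * σ)
    rw [reflectionLength_mul_comm] at hcount
    rw [inv_pow, ← pow_mul, mul_inv_eq_iff_eq_mul₀ (pow_ne_zero _ hz), ← pow_add, ← pow_add]
    congr 1
    omega
  have hcoeff : ∑ τ, w τ * z ^ (τ⁻¹ * σ).cycleCount = (Pi.single 1 1 : Perm (Fin p) → K) σ := by
    rw [← coeff_sum_single_mul_sum_single w fun τ => z ^ τ.cycleCount, hw, MonoidAlgebra.one_def,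
      MonoidAlgebra.coeff_single, Finsupp.single_apply, Pi.single_apply]
    simp only [eq_comm]
  calc ∑ τ, z ^ (p + reflectionLength τ) * w τ * (z ^ 2)⁻¹ ^ genus τ σ
      = z ^ reflectionLength σ * ∑ τ, w τ * z ^ (τ⁻¹ * σ).cycleCount := by
        rw [Finset.mul_sum]
        refine Finset.sum_congr rfl fun τ _ => ?_
        rw [mul_right_comm, hpow]
        ring
    _ = (Pi.single 1 1 : Perm (Fin p) → K) σ := by
        rw [hcoeff]
        obtain rfl | hσ := eq_or_ne σ 1
        · simp
        · simp [Pi.single_eq_of_ne hσ]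

end GroupAlgebra

section Perturbation

variable {ι n 𝕜 : Type*} [NormedField 𝕜] {l : Filter ι}

theorem isBigO_pow_sub_zero_pow (k : ℕ) {x : ι → 𝕜} (hx : Tendsto x l (nhds 0)) :
    (fun i => x i ^ k - 0 ^ k) =O[l] x := by
  cases k with
  | zero => simpa using isBigO_zero x l
  | succ k =>
    have hbounded : (fun i => x i ^ k) =O[l] fun _ => (1 : 𝕜) := (hx.pow k).isBigO_one 𝕜
    simpa [pow_succ] using hbounded.mul (isBigO_refl x l)

variable [Fintype n] [DecidableEq n]

theorem det_smul_sub_eq_vecMul_adjugate {R : Type*} [CommRing R] {A B : Matrix n n R}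
    {u v : n → R} (h : v ᵥ* A = u ᵥ* B) :
    A.det • (v - u) = (u ᵥ* (B - A)) ᵥ* A.adjugate := by
  rw [Matrix.vecMul_sub, ← h, ← Matrix.sub_vecMul, Matrix.vecMul_vecMul, Matrix.mul_adjugate,
    Matrix.vecMul_smul, Matrix.vecMul_one]

theorem isBigO_sub_of_vecMul_eq {A : ι → Matrix n n 𝕜} {B : Matrix n n 𝕜} {v : ι → n → 𝕜}
    {u : n → 𝕜} {f : ι → 𝕜} (hA : ∀ j k, (fun i => A i j k - B j k) =O[l] f)
    (hf : Tendsto f l (nhds 0)) (hB : B.det ≠ 0)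
    (hv : ∀ᶠ i in l, v i ᵥ* A i = u ᵥ* B) (k : n) :
    (fun i => v i k - u k) =O[l] f := by
  have hlim : Tendsto A l (nhds B) := tendsto_pi_nhds.2 fun j => tendsto_pi_nhds.2 fun k =>
    tendsto_sub_nhds_zero_iff.1 ((hA j k).trans_tendsto hf)
  have hdet : Tendsto (fun i => (A i).det) l (nhds B.det) :=
    (continuous_id.matrix_det.tendsto B).comp hlim
  have hadj (j k : n) : (fun i => (A i).adjugate j k) =O[l] fun _ => (1 : 𝕜) :=
    (((continuous_id.matrix_adjugate.matrix_elem j k).tendsto B).comp hlim).isBigO_one 𝕜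
  have hresidual (k : n) : (fun i => (u ᵥ* (B - A i)) k) =O[l] f :=
    IsBigO.fun_sum fun j _ => by simpa using (hA j k).neg_left.const_mul_left (u j)
  have hproduct : (fun i => ((u ᵥ* (B - A i)) ᵥ* (A i).adjugate) k) =O[l] f :=
    IsBigO.fun_sum fun j _ => by simpa using (hresidual j).mul (hadj j k)
  have hinv : (fun i => (A i).det⁻¹) =O[l] fun _ => (1 : 𝕜) := (hdet.inv₀ hB).isBigO_one 𝕜
  refine (hinv.mul hproduct).congr' ?_ (.of_forall fun i => one_mul (f i))
  filter_upwards [hv, hdet.eventually_ne hB] with i hi hne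
  rw [← det_smul_sub_eq_vecMul_adjugate hi, Pi.smul_apply, smul_eq_mul, inv_mul_cancel_left₀ hne,
    Pi.sub_apply]

end Perturbation

end Weingarten

open Weingarten Matrix in
theorem weingarten_asymptotics_general {ι : Type*} {l : Filter ι} {p : ℕ}
    (σ : Equiv.Perm (Fin p)) {z : ι → ℂ} (hz : Tendsto z l (Bornology.cobounded ℂ))
    {w : ι → Equiv.Perm (Fin p) → ℂ}
    (hw : ∀ᶠ i in l,
      (∑ τ : Equiv.Perm (Fin p), MonoidAlgebra.single (R := ℂ) τ (w i τ)) *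
        (∑ τ : Equiv.Perm (Fin p), MonoidAlgebra.single (R := ℂ) τ (z i ^ τ.cycleCount)) = 1) :
    Tendsto (fun i => z i ^ (p + (p - σ.cycleCount)) * w i σ) l (nhds σ.mob) ∧
      (fun i => z i ^ (p + (p - σ.cycleCount)) * w i σ - σ.mob)
        =O[l] fun i => (‖z i‖ ^ 2)⁻¹ := by
  have hx : Tendsto (fun i => (z i ^ 2)⁻¹) l (nhds 0) := by
    simpa using (tendsto_inv₀_cobounded.comp hz).pow 2
  have hsystem : ∀ᶠ i in l,
      (fun τ => z i ^ (p + reflectionLength τ) * w i τ) ᵥ* genusMatrix (z i ^ 2)⁻¹ =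
        Equiv.Perm.mob ᵥ* genusMatrix 0 := by
    filter_upwards [hw, hz.eventually_ne_cobounded 0] with i hi hne
    rw [vecMul_genusMatrix_of_sum_single_mul_eq_one hne hi, mob_vecMul_genusMatrix_zero]
  have hO := isBigO_sub_of_vecMul_eq (B := genusMatrix 0)
    (fun τ σ => isBigO_pow_sub_zero_pow (genus τ σ) hx) hx
    (by simp [det_genusMatrix_zero]) hsystem σ
  rw [show p - σ.cycleCount = reflectionLength σ by
    have := cycleCount_add_reflectionLength σ; omega]
  exact ⟨tendsto_sub_nhds_zero_iff.1 (hO.trans_tendsto hx), by simpa using hO.norm_right⟩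

/-- **First-order asymptotics of the Weingarten function**: for a fixed permutation `σ ∈ S_p`,
`n^{p+|σ|}·Wg(n,σ) → Mob(σ)` as `n → ∞`, and moreover
`Wg(n,σ) = n^{−(p+|σ|)}(Mob(σ) + O(n^{−2}))`.  Here `|σ| = p − #σ`, and `Wg(n,·)` is
characterized (for `n ≥ p`) by the fact that `Σ_τ Wg(n,τ)·τ` is the inverse of
`Σ_τ n^{#τ}·τ` in the group algebra `ℂ[S_p]` (hypothesis `hw`). -/
theorem weingarten_asymptotics
    (p : ℕ) (hp : 1 ≤ p) (σ : Equiv.Perm (Fin p))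
    (w : ℕ → Equiv.Perm (Fin p) → ℂ)
    (hw : ∀ n : ℕ, p ≤ n →
      (∑ τ : Equiv.Perm (Fin p), MonoidAlgebra.single (R := ℂ) τ (w n τ)) *
        (∑ τ : Equiv.Perm (Fin p),
          MonoidAlgebra.single (R := ℂ) τ ((n : ℂ) ^ τ.cycleCount)) = 1) :
    Tendsto (fun n : ℕ => (n : ℂ) ^ (p + (p - σ.cycleCount)) * w n σ)
        atTop (nhds σ.mob) ∧
      (fun n : ℕ => (n : ℂ) ^ (p + (p - σ.cycleCount)) * w n σ - σ.mob)
        =O[atTop] fun n : ℕ => ((n : ℝ) ^ 2)⁻¹ := by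
  simpa using weingarten_asymptotics_general σ tendsto_natCast_atTop_cobounded
    (eventually_atTop.2 ⟨p, hw⟩)
end

section
/- Let c ∈ (0,∞) and let (s_d)_{d≥1} be positive integers with s_d/d → c as d → ∞. On a common probability space, let (X_d)_{d≥1} be independent random matrices, where X_d ∈ M_{d×s_d}(ℂ) has i.i.d. standard complex Gaussian entries, and set W_d = X_d X_d*. Then almost surely, the empirical eigenvalue distribution of W_d/d converges weakly to the Marčenko–Pastur distribution π_c: for every bounded continuous f : ℝ → ℝ, (1/d) Σ_{i=1}^d f(λ_i(W_d/d)) → ∫ f dπ_c almost surely, where λ₁,…,λ_d are the eigenvalues of the positive-semidefinite matrix W_d/d and π_c = max(1−c,0)·δ₀ + [√((b−x)(x−a))/(2πx)]·1_{(a,b)}(x) dx with a = (1−√c)² and b = (1+√c)². -/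
open MeasureTheory ProbabilityTheory Filter

/-- The standard complex Gaussian distribution: the law of `(g₁ + i·g₂)/√2` where `g₁, g₂` are
independent real `N(0,1)` variables; it satisfies `E|z|² = 1`. -/
noncomputable def stdComplexGaussian : Measure ℂ :=
  Measure.map (fun p : ℝ × ℝ => (p.1 + p.2 * Complex.I) / (Real.sqrt 2 : ℝ))
    ((gaussianReal 0 1).prod (gaussianReal 0 1))

/-- The Marčenko–Pastur distribution `π_c = max(1−c,0)·δ₀ + √((b−x)(x−a))/(2πx)·1_{(a,b)} dx`
with `a = (1−√c)²`, `b = (1+√c)²`. -/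
noncomputable def marchenkoPastur (c : ℝ) : Measure ℝ :=
  ENNReal.ofReal (max (1 - c) 0) • Measure.dirac 0 +
    volume.withDensity fun x =>
      ENNReal.ofReal
        (if (1 - Real.sqrt c) ^ 2 < x ∧ x < (1 + Real.sqrt c) ^ 2 then
          Real.sqrt (((1 + Real.sqrt c) ^ 2 - x) * (x - (1 - Real.sqrt c) ^ 2)) /
            (2 * Real.pi * x)
        else 0)

/-!
Fix `t > 0`, write `Y = X_d`, and let `g = tr (Y Y* + d t)⁻¹`, which is the Stieltjes transform of
the empirical eigenvalue distribution of `W_d / d` at `-t`. Expanding `tr ((Y Y* + d t)⁻¹ Y Y*)`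
over the columns `y_k` of `Y` and removing `y_k` by the Sherman–Morrison formula gives
`d - d t g = ∑ q_k / (1 + q_k)`, where `q_k` is the value at `y_k` of the quadratic form of the
resolvent of `Y Y* - y_k y_k*`. Since `y_k` is independent of that resolvent, a fourth moment bound
for Gaussian quadratic forms and Borel–Cantelli show that, on average over `k`, `q_k` is almost
surely close to the trace of that resolvent, hence to `g`, because a rank one perturbation changes
the trace by at most `1 / (d t)`. So `g` almost solves `1 = t x + c x / (1 + x)`. This equation is
stable, and its nonnegative solution is the Stieltjes transform of `π_c` at `-t`. Almost sure
convergence of the Stieltjes transforms at all positive rationals then yields weak convergence: it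
gives tightness and, through the resolvent identity, convergence of the integrals of all
polynomials in `(x + 1)⁻¹`.
-/

open scoped ComplexOrder

lemma abs_div_one_add_sub_div_one_add_le {x y : ℝ} (hx : 0 ≤ x) (hy : 0 ≤ y) :
    |x / (1 + x) - y / (1 + y)| ≤ |x - y| := by
  have : x / (1 + x) - y / (1 + y) = (x - y) / ((1 + x) * (1 + y)) := by field_simp; ring
  rw [this, abs_div, abs_of_pos (a := (1 + x) * (1 + y)) (by positivity)]
  exact div_le_self (abs_nonneg _) (by nlinarith)

section Resolvent

open Matrix

variable {n m 𝕜 : Type*} [RCLike 𝕜]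

lemma posDef_add_ofReal_smul_one [DecidableEq n] {t : ℝ} (ht : 0 < t) {B : Matrix n n 𝕜}
    (hB : B.PosSemidef) : (B + (t : 𝕜) • 1).PosDef :=
  PosDef.posSemidef_add hB (PosDef.one.smul (by exact_mod_cast ht))

lemma mul_conjTranspose_eq_sum_vecMulVec [Fintype m] (Y : Matrix n m 𝕜) :
    Y * Yᴴ = ∑ k, vecMulVec (Y.col k) (star (Y.col k)) := by
  ext i j
  simp [mul_apply, Matrix.sum_apply, vecMulVec_apply]

lemma mul_conjTranspose_eq_updateCol_add [Fintype m] [DecidableEq m] (Y : Matrix n m 𝕜)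
    (k : m) :
    Y * Yᴴ = Y.updateCol k 0 * (Y.updateCol k 0)ᴴ + vecMulVec (Y.col k) (star (Y.col k)) := by
  rw [mul_conjTranspose_eq_sum_vecMulVec, mul_conjTranspose_eq_sum_vecMulVec,
    ← Finset.sum_erase_add _ _ (Finset.mem_univ k),
    ← Finset.sum_erase_add _ (fun l => vecMulVec ((Y.updateCol k 0).col l) _) (Finset.mem_univ k)]
  have col_self : (Y.updateCol k 0).col k = 0 := by ext i; simp
  have col_ne (l : m) (hl : l ∈ Finset.univ.erase k) : (Y.updateCol k 0).col l = Y.col l := by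
    ext i; simp [updateCol_ne (Finset.ne_of_mem_erase hl)]
  rw [col_self, zero_vecMulVec, add_zero]
  congr 1
  exact Finset.sum_congr rfl fun l hl => by rw [col_ne l hl]

variable [Fintype n]

/-- The real part of the quadratic form `x* M x`, which is the full quadratic form when `M` is
Hermitian. -/
noncomputable def quadForm (M : Matrix n n 𝕜) (x : n → 𝕜) : ℝ :=
  RCLike.re (star x ⬝ᵥ M *ᵥ x)

lemma ofReal_quadForm {M : Matrix n n 𝕜} (hM : M.IsHermitian) (x : n → 𝕜) :
    (quadForm M x : 𝕜) = star x ⬝ᵥ M *ᵥ x :=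
  RCLike.ext (by simp [quadForm]) (by simp [hM.im_star_dotProduct_mulVec_self])

lemma quadForm_nonneg {M : Matrix n n 𝕜} (hM : M.PosSemidef) (x : n → 𝕜) : 0 ≤ quadForm M x :=
  hM.re_dotProduct_nonneg x

lemma quadForm_add_ofReal_smul_one [DecidableEq n] (M : Matrix n n 𝕜) (t : ℝ) (x : n → 𝕜) :
    quadForm (M + (t : 𝕜) • 1) x = quadForm M x + t * RCLike.re (star x ⬝ᵥ x) := by
  simp only [quadForm, add_mulVec, smul_mulVec, one_mulVec, dotProduct_add, dotProduct_smul,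
    smul_eq_mul, map_add, RCLike.re_ofReal_mul]

variable [DecidableEq n]

/-- The resolvent `(B + t)⁻¹` of a matrix `B` at the point `-t`. For positive semidefinite `B` and
`t > 0` the inverse is a genuine one. -/
noncomputable def negResolvent (t : ℝ) (B : Matrix n n 𝕜) : Matrix n n 𝕜 :=
  (B + (t : 𝕜) • 1)⁻¹

variable {t : ℝ} {B : Matrix n n 𝕜}

lemma negResolvent_posDef (ht : 0 < t) (hB : B.PosSemidef) : (negResolvent t B).PosDef :=
  (posDef_add_ofReal_smul_one ht hB).inv

lemma re_trace_negResolvent_nonneg (ht : 0 < t) (hB : B.PosSemidef) :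
    0 ≤ RCLike.re (negResolvent t B).trace :=
  (RCLike.nonneg_iff.1 (negResolvent_posDef ht hB).posSemidef.trace_nonneg).1

lemma negResolvent_mul_cancel (ht : 0 < t) (hB : B.PosSemidef) :
    negResolvent t B * (B + (t : 𝕜) • 1) = 1 :=
  nonsing_inv_mul _ ((isUnit_iff_isUnit_det _).1 (posDef_add_ofReal_smul_one ht hB).isUnit)

lemma mul_negResolvent_cancel (ht : 0 < t) (hB : B.PosSemidef) :
    (B + (t : 𝕜) • 1) * negResolvent t B = 1 :=
  mul_nonsing_inv _ ((isUnit_iff_isUnit_det _).1 (posDef_add_ofReal_smul_one ht hB).isUnit)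

lemma star_negResolvent_mulVec (ht : 0 < t) (hB : B.PosSemidef) (x : n → 𝕜) :
    star (negResolvent t B *ᵥ x) = star x ᵥ* negResolvent t B := by
  rw [star_mulVec, (negResolvent_posDef ht hB).isHermitian]

lemma one_add_quadForm_negResolvent_pos (ht : 0 < t) (hB : B.PosSemidef) (x : n → 𝕜) :
    0 < 1 + quadForm (negResolvent t B) x := by
  linarith [quadForm_nonneg (negResolvent_posDef ht hB).posSemidef x]

lemma negResolvent_add_vecMulVec_mulVec (ht : 0 < t) (hB : B.PosSemidef) (x : n → 𝕜) :
    negResolvent t (B + vecMulVec x (star x)) *ᵥ x =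
      ((1 + quadForm (negResolvent t B) x : ℝ) : 𝕜)⁻¹ • negResolvent t B *ᵥ x := by
  have hA : (B + vecMulVec x (star x)).PosSemidef := hB.add (posSemidef_vecMulVec_self_star x)
  have hq := (one_add_quadForm_negResolvent_pos ht hB x).ne'
  set q := quadForm (negResolvent t B) x
  set y := negResolvent t B *ᵥ x with hy
  have apply_y : (B + vecMulVec x (star x) + (t : 𝕜) • 1) *ᵥ y = ((1 + q : ℝ) : 𝕜) • x := by
    rw [add_right_comm, add_mulVec, vecMulVec_mulVec, hy, mulVec_mulVec,
      mul_negResolvent_cancel ht hB, one_mulVec,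
      ← ofReal_quadForm (negResolvent_posDef ht hB).isHermitian, op_smul_eq_smul]
    push_cast
    rw [add_smul, one_smul]
  calc negResolvent t (B + vecMulVec x (star x)) *ᵥ x
      = ((1 + q : ℝ) : 𝕜)⁻¹ • negResolvent t (B + vecMulVec x (star x)) *ᵥ
          ((1 + q : ℝ) : 𝕜) • x := by
        rw [mulVec_smul, inv_smul_smul₀ (by exact_mod_cast hq)]
    _ = ((1 + q : ℝ) : 𝕜)⁻¹ • y := by
        rw [← apply_y, mulVec_mulVec, negResolvent_mul_cancel ht hA, one_mulVec]

lemma quadForm_negResolvent_add_vecMulVec (ht : 0 < t) (hB : B.PosSemidef) (x : n → 𝕜) :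
    quadForm (negResolvent t (B + vecMulVec x (star x))) x =
      quadForm (negResolvent t B) x / (1 + quadForm (negResolvent t B) x) := by
  rw [quadForm, negResolvent_add_vecMulVec_mulVec ht hB, dotProduct_smul, ← RCLike.ofReal_inv,
    smul_eq_mul, RCLike.re_ofReal_mul, ← quadForm, inv_mul_eq_div]

lemma negResolvent_sub_negResolvent_add_vecMulVec (ht : 0 < t) (hB : B.PosSemidef) (x : n → 𝕜) :
    negResolvent t B - negResolvent t (B + vecMulVec x (star x)) =
      ((1 + quadForm (negResolvent t B) x : ℝ) : 𝕜)⁻¹ •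
        vecMulVec (negResolvent t B *ᵥ x) (star (negResolvent t B *ᵥ x)) := by
  have hA : (B + vecMulVec x (star x)).PosSemidef := hB.add (posSemidef_vecMulVec_self_star x)
  set A := B + vecMulVec x (star x) with hA_def
  have resolvent_identity : negResolvent t B - negResolvent t A =
      negResolvent t A * vecMulVec x (star x) * negResolvent t B := by
    rw [show vecMulVec x (star x) = (A + (t : 𝕜) • 1) - (B + (t : 𝕜) • 1) by rw [hA_def]; abel,
      mul_sub, sub_mul, negResolvent_mul_cancel ht hA, mul_assoc, mul_negResolvent_cancel ht hB,
      one_mul, mul_one]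
  rw [resolvent_identity, mul_vecMulVec, vecMulVec_mul, negResolvent_add_vecMulVec_mulVec ht hB,
    smul_vecMulVec, star_negResolvent_mulVec ht hB]

lemma mul_re_star_dotProduct_negResolvent_mulVec_le (ht : 0 < t) (hB : B.PosSemidef) (x : n → 𝕜) :
    t * RCLike.re (star (negResolvent t B *ᵥ x) ⬝ᵥ negResolvent t B *ᵥ x) ≤
      quadForm (negResolvent t B) x := by
  set y := negResolvent t B *ᵥ x with hy
  have hy_form : quadForm (B + (t : 𝕜) • 1) y = quadForm (negResolvent t B) x := by
    rw [quadForm, quadForm, hy, mulVec_mulVec, mul_negResolvent_cancel ht hB, one_mulVec,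
      star_negResolvent_mulVec ht hB, dotProduct_mulVec]
  linarith [quadForm_add_ofReal_smul_one B t y, quadForm_nonneg hB y]

lemma abs_re_trace_negResolvent_add_vecMulVec_sub_le (ht : 0 < t) (hB : B.PosSemidef) (x : n → 𝕜) :
    |RCLike.re (negResolvent t (B + vecMulVec x (star x))).trace -
      RCLike.re (negResolvent t B).trace| ≤ 1 / t := by
  have hle := mul_re_star_dotProduct_negResolvent_mulVec_le ht hB x
  have hq := one_add_quadForm_negResolvent_pos ht hB x
  have trace_sub_eq : RCLike.re (negResolvent t B).trace -
      RCLike.re (negResolvent t (B + vecMulVec x (star x))).trace =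
        RCLike.re (star (negResolvent t B *ᵥ x) ⬝ᵥ negResolvent t B *ᵥ x) /
          (1 + quadForm (negResolvent t B) x) := by
    rw [← map_sub, ← trace_sub, negResolvent_sub_negResolvent_add_vecMulVec ht hB, trace_smul,
      trace_vecMulVec, dotProduct_comm, ← RCLike.ofReal_inv, smul_eq_mul, RCLike.re_ofReal_mul,
      inv_mul_eq_div]
  have hy : 0 ≤ RCLike.re (star (negResolvent t B *ᵥ x) ⬝ᵥ negResolvent t B *ᵥ x) :=
    (RCLike.nonneg_iff.1 (dotProduct_star_self_nonneg _)).1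
  rw [abs_sub_comm, trace_sub_eq, abs_of_nonneg (by positivity), div_le_div_iff₀ hq ht]
  linarith

variable [Fintype m]

lemma card_eq_mul_re_trace_negResolvent_add_sum {t : ℝ} (ht : 0 < t) (Y : Matrix n m 𝕜) :
    (Fintype.card n : ℝ) = t * RCLike.re (negResolvent t (Y * Yᴴ)).trace +
      ∑ k, quadForm (negResolvent t (Y * Yᴴ)) (Y.col k) := by
  set R := negResolvent t (Y * Yᴴ)
  have trace_one_eq : (Fintype.card n : 𝕜) = (R * (Y * Yᴴ + (t : 𝕜) • 1)).trace := by
    rw [negResolvent_mul_cancel ht (posSemidef_self_mul_conjTranspose Y), trace_one]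
  have trace_gram : (R * (Y * Yᴴ)).trace = ∑ k, star (Y.col k) ⬝ᵥ R *ᵥ Y.col k := by
    rw [mul_conjTranspose_eq_sum_vecMulVec, Finset.mul_sum, trace_sum]
    exact Finset.sum_congr rfl fun k _ => by
      rw [mul_vecMulVec, trace_vecMulVec, dotProduct_comm]
  have re_eq := congrArg RCLike.re trace_one_eq
  rw [mul_add, trace_add, trace_gram, Matrix.mul_smul, mul_one, trace_smul, smul_eq_mul, map_add,
    map_sum, RCLike.re_ofReal_mul, RCLike.natCast_re] at re_eq
  rw [re_eq, add_comm]
  rfl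

/-- How far the quadratic form of the resolvent of the Gram matrix `VV*` at `x` is from the trace
of that resolvent, which is its mean when `x` is random with identity covariance. -/
noncomputable def gramFormDefect (t : ℝ) (V : Matrix n m 𝕜) (x : n → 𝕜) : ℝ :=
  quadForm (negResolvent t (V * Vᴴ)) x - RCLike.re (negResolvent t (V * Vᴴ)).trace

variable [DecidableEq m]

/-- The defect `gramFormDefect` of `Y` with column `k` left out, taken at the removed column. -/
noncomputable def leaveOneOutDefect (t : ℝ) (Y : Matrix n m 𝕜) (k : m) : ℝ :=
  gramFormDefect t (Y.updateCol k 0) (Y.col k)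

lemma abs_quadForm_negResolvent_sub_le {t : ℝ} (ht : 0 < t) (Y : Matrix n m 𝕜) (k : m) :
    |quadForm (negResolvent t (Y * Yᴴ)) (Y.col k) -
      RCLike.re (negResolvent t (Y * Yᴴ)).trace /
        (1 + RCLike.re (negResolvent t (Y * Yᴴ)).trace)| ≤
      |leaveOneOutDefect t Y k| + 1 / t := by
  have hB := posSemidef_self_mul_conjTranspose (Y.updateCol k 0)
  have htrace := re_trace_negResolvent_nonneg ht (posSemidef_self_mul_conjTranspose Y)
  have trace_sub_le := abs_re_trace_negResolvent_add_vecMulVec_sub_le ht hB (Y.col k)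
  have form_eq := quadForm_negResolvent_add_vecMulVec ht hB (Y.col k)
  rw [← mul_conjTranspose_eq_updateCol_add] at trace_sub_le form_eq
  rw [abs_sub_comm] at trace_sub_le
  rw [form_eq]
  calc _ ≤ |quadForm (negResolvent t (Y.updateCol k 0 * (Y.updateCol k 0)ᴴ)) (Y.col k) -
        RCLike.re (negResolvent t (Y * Yᴴ)).trace| :=
        abs_div_one_add_sub_div_one_add_le
          (quadForm_nonneg (negResolvent_posDef ht hB).posSemidef _) htrace
    _ ≤ |leaveOneOutDefect t Y k| + 1 / t :=
        (abs_sub_le _ _ _).trans (add_le_add_right trace_sub_le _)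

lemma abs_card_sub_re_trace_negResolvent_le {t : ℝ} (ht : 0 < t) (Y : Matrix n m 𝕜) :
    |Fintype.card n - t * RCLike.re (negResolvent t (Y * Yᴴ)).trace -
      Fintype.card m * (RCLike.re (negResolvent t (Y * Yᴴ)).trace /
        (1 + RCLike.re (negResolvent t (Y * Yᴴ)).trace))| ≤
      ∑ k, |leaveOneOutDefect t Y k| + Fintype.card m * (1 / t) := by
  set g := RCLike.re (negResolvent t (Y * Yᴴ)).trace
  have eq_sum : (Fintype.card n : ℝ) - t * g - Fintype.card m * (g / (1 + g)) =
      ∑ k, (quadForm (negResolvent t (Y * Yᴴ)) (Y.col k) - g / (1 + g)) := by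
    rw [Finset.sum_sub_distrib, Finset.sum_const, Finset.card_univ, nsmul_eq_mul,
      card_eq_mul_re_trace_negResolvent_add_sum ht Y]
    ring
  calc _ ≤ ∑ k, |quadForm (negResolvent t (Y * Yᴴ)) (Y.col k) - g / (1 + g)| :=
        eq_sum ▸ Finset.abs_sum_le_sum_abs _ _
    _ ≤ ∑ k, (|leaveOneOutDefect t Y k| + 1 / t) :=
        Finset.sum_le_sum fun k _ => abs_quadForm_negResolvent_sub_le ht Y k
    _ = _ := by rw [Finset.sum_add_distrib, Finset.sum_const, Finset.card_univ, nsmul_eq_mul]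

section Spectral

variable {A : Matrix n n 𝕜}

lemma trace_cfc (hA : A.IsHermitian) (f : ℝ → ℝ) :
    (cfc f A).trace = ∑ i, (f (hA.eigenvalues i) : 𝕜) := by
  rw [hA.cfc_eq, IsHermitian.cfc, Unitary.conjStarAlgAut_apply, trace_mul_comm, ← mul_assoc,
    Unitary.coe_star_mul_self, one_mul, trace_diagonal]
  rfl

lemma re_trace_mul_self (hA : A.IsHermitian) :
    RCLike.re (A * A).trace = ∑ i, hA.eigenvalues i ^ 2 := by
  have hcont : ContinuousOn (fun x : ℝ => x) (spectrum ℝ A) := continuousOn_id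
  have hsa : IsSelfAdjoint A := hA
  conv_lhs => rw [← cfc_id' ℝ A, ← cfc_mul _ _ A hcont hcont, trace_cfc hA, map_sum]
  simp only [RCLike.ofReal_re, sq]

lemma quadForm_eq_sum_eigenvalues_mul_norm_sq (hA : A.IsHermitian) (x : n → 𝕜) :
    quadForm A x = ∑ i, hA.eigenvalues i *
      ‖(star (hA.eigenvectorUnitary : Matrix n n 𝕜) *ᵥ x) i‖ ^ 2 := by
  set U := (hA.eigenvectorUnitary : Matrix n n 𝕜) with hU
  have hconj : star x ⬝ᵥ A *ᵥ x =
      star (star U *ᵥ x) ⬝ᵥ diagonal (RCLike.ofReal ∘ hA.eigenvalues) *ᵥ (star U *ᵥ x) := by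
    conv_lhs => rw [hA.spectral_theorem, Unitary.conjStarAlgAut_apply, ← hU]
    rw [star_mulVec, star_eq_conjTranspose U, conjTranspose_conjTranspose, ← dotProduct_mulVec,
      mulVec_mulVec, mulVec_mulVec]
  rw [quadForm, hconj, dotProduct, map_sum]
  refine Finset.sum_congr rfl fun i _ => ?_
  rw [mulVec_diagonal, Function.comp_apply, Pi.star_apply, mul_left_comm, RCLike.re_ofReal_mul,
    RCLike.star_def, RCLike.conj_mul, ← RCLike.ofReal_pow, RCLike.ofReal_re]

lemma negResolvent_eq_cfc {t : ℝ} (ht : 0 < t) (hA : A.PosSemidef) :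
    negResolvent t A = cfc (fun x : ℝ => (x + t)⁻¹) A := by
  have hsa : IsSelfAdjoint A := hA.isHermitian
  have hcont (f : ℝ → ℝ) : ContinuousOn f (spectrum ℝ A) :=
    A.finite_real_spectrum.continuousOn f
  have pos_of_mem_spectrum (x : ℝ) (hx : x ∈ spectrum ℝ A) : 0 < x + t := by
    rw [hA.isHermitian.spectrum_real_eq_range_eigenvalues] at hx
    obtain ⟨i, rfl⟩ := hx
    linarith [hA.eigenvalues_nonneg i]
  have shift_eq_cfc : A + (t : 𝕜) • 1 = cfc (fun x : ℝ => x + t) A := by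
    rw [cfc_add_const t (fun x => x) A (hcont _), cfc_id' ℝ A, Algebra.algebraMap_eq_smul_one]
    simp
  refine inv_eq_right_inv ?_
  rw [shift_eq_cfc, ← cfc_mul _ _ A (hcont _) (hcont _),
    cfc_congr (g := fun _ => 1) fun x hx => mul_inv_cancel₀ (pos_of_mem_spectrum x hx).ne',
    cfc_const_one ℝ A]

lemma re_trace_negResolvent {t : ℝ} (ht : 0 < t) (hA : A.PosSemidef) :
    RCLike.re (negResolvent t A).trace = ∑ i, (hA.isHermitian.eigenvalues i + t)⁻¹ := by
  rw [negResolvent_eq_cfc ht hA, trace_cfc hA.isHermitian, map_sum]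
  simp only [RCLike.ofReal_re]

lemma re_trace_negResolvent_mul_self_le {t : ℝ} (ht : 0 < t) (hA : A.PosSemidef) :
    RCLike.re (negResolvent t A * negResolvent t A).trace ≤ Fintype.card n / t ^ 2 := by
  have hcont (f : ℝ → ℝ) : ContinuousOn f (spectrum ℝ A) :=
    A.finite_real_spectrum.continuousOn f
  rw [negResolvent_eq_cfc ht hA, ← cfc_mul _ _ A (hcont _) (hcont _), trace_cfc hA.isHermitian,
    map_sum, div_eq_mul_inv, ← nsmul_eq_mul, ← Finset.card_univ, ← Finset.sum_const]
  refine Finset.sum_le_sum fun i _ => ?_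
  rw [RCLike.ofReal_re, ← sq, ← inv_pow]
  have := hA.eigenvalues_nonneg i
  gcongr
  linarith

end Spectral

end Resolvent

section FourthMoment

variable {Ω ι : Type*} [MeasurableSpace Ω] {μ : Measure Ω}

lemma integral_finsetSum_eq_zero {ξ : ι → Ω → ℝ} (hintegrable : ∀ i, Integrable (ξ i) μ)
    (hmean : ∀ i, ∫ ω, ξ i ω ∂μ = 0) (T : Finset ι) : ∫ ω, ∑ i ∈ T, ξ i ω ∂μ = 0 := by
  rw [integral_finsetSum _ fun i _ => hintegrable i]
  exact Finset.sum_eq_zero fun i _ => hmean i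

variable [IsProbabilityMeasure μ]

lemma integrable_pow_of_memLp {p : ENNReal} {f : Ω → ℝ} (hf : MemLp f p μ) {k : ℕ}
    (hk : (k : ENNReal) ≤ p) : Integrable (fun ω => f ω ^ k) μ := by
  have hf_pow := (hf.mono_exponent hk).integrable_norm_pow'
  exact (integrable_norm_iff (hf.1.pow k)).1 (by simpa using hf_pow)

lemma integral_add_pow_four {X Y : Ω → ℝ} (hXY : IndepFun X Y μ) (hX : MemLp X 4 μ)
    (hY : MemLp Y 4 μ) (hX₀ : ∫ ω, X ω ∂μ = 0) (hY₀ : ∫ ω, Y ω ∂μ = 0) :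
    ∫ ω, (X ω + Y ω) ^ 4 ∂μ = ∫ ω, X ω ^ 4 ∂μ +
      6 * ((∫ ω, X ω ^ 2 ∂μ) * ∫ ω, Y ω ^ 2 ∂μ) + ∫ ω, Y ω ^ 4 ∂μ := by
  have hX_int {k : ℕ} (hk : k ≤ 4) := integrable_pow_of_memLp hX (k := k) (by exact_mod_cast hk)
  have hY_int {k : ℕ} (hk : k ≤ 4) := integrable_pow_of_memLp hY (k := k) (by exact_mod_cast hk)
  have indep_pow (k l : ℕ) : IndepFun (fun ω => X ω ^ k) (fun ω => Y ω ^ l) μ :=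
    hXY.comp (φ := (· ^ k)) (ψ := (· ^ l)) (by fun_prop) (by fun_prop)
  have mul_int {k l : ℕ} (hk : k ≤ 4) (hl : l ≤ 4) :
      Integrable (fun ω => X ω ^ k * Y ω ^ l) μ :=
    (indep_pow k l).integrable_mul (hX_int hk) (hY_int hl)
  have integral_mul {k l : ℕ} (hk : k ≤ 4) (hl : l ≤ 4) :
      ∫ ω, X ω ^ k * Y ω ^ l ∂μ = (∫ ω, X ω ^ k ∂μ) * ∫ ω, Y ω ^ l ∂μ :=
    (indep_pow k l).integral_fun_mul_eq_mul_integral (hX_int hk).1 (hY_int hl).1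
  have cross_31 : ∫ ω, X ω ^ 3 * Y ω ^ 1 ∂μ = 0 := by
    rw [integral_mul (by norm_num) (by norm_num)]; simp [hY₀]
  have cross_13 : ∫ ω, X ω ^ 1 * Y ω ^ 3 ∂μ = 0 := by
    rw [integral_mul (by norm_num) (by norm_num)]; simp [hX₀]
  have expand (ω : Ω) : (X ω + Y ω) ^ 4 = X ω ^ 4 + 4 * (X ω ^ 3 * Y ω ^ 1) +
      6 * (X ω ^ 2 * Y ω ^ 2) + 4 * (X ω ^ 1 * Y ω ^ 3) + Y ω ^ 4 := by ring
  have int_40 := hX_int (k := 4) le_rfl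
  have int_31 := (mul_int (k := 3) (l := 1) (by norm_num) (by norm_num)).const_mul 4
  have int_22 := (mul_int (k := 2) (l := 2) (by norm_num) (by norm_num)).const_mul 6
  have int_13 := (mul_int (k := 1) (l := 3) (by norm_num) (by norm_num)).const_mul 4
  simp_rw [expand]
  rw [integral_add (((int_40.fun_add int_31).fun_add int_22).fun_add int_13) (hY_int le_rfl),
    integral_add ((int_40.fun_add int_31).fun_add int_22) int_13,
    integral_add (int_40.fun_add int_31) int_22, integral_add int_40 int_31]
  simp only [integral_const_mul, cross_31, cross_13, integral_mul (k := 2) (l := 2) (by norm_num)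
    (by norm_num), mul_zero, add_zero]

variable {ξ : ι → Ω → ℝ}

lemma integral_sq_finsetSum (hind : iIndepFun ξ μ) (hL2 : ∀ i, MemLp (ξ i) 2 μ)
    (hmean : ∀ i, ∫ ω, ξ i ω ∂μ = 0) (T : Finset ι) :
    ∫ ω, (∑ i ∈ T, ξ i ω) ^ 2 ∂μ = ∑ i ∈ T, ∫ ω, ξ i ω ^ 2 ∂μ := by
  have mean_sum := integral_finsetSum_eq_zero (fun i => (hL2 i).integrable one_le_two) hmean T
  have variance_sum := IndepFun.variance_sum (s := T) (fun i _ => hL2 i)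
    fun i _ j _ hij => hind.indepFun hij
  simp only [← Finset.sum_apply] at mean_sum
  rw [variance_of_integral_eq_zero (memLp_finsetSum' _ fun i _ => hL2 i).1.aemeasurable
    mean_sum] at variance_sum
  simpa only [variance_of_integral_eq_zero (hL2 _).1.aemeasurable (hmean _), Finset.sum_apply]
    using variance_sum

lemma integral_pow_four_finsetSum_le (hind : iIndepFun ξ μ) (hL4 : ∀ i, MemLp (ξ i) 4 μ)
    (hmean : ∀ i, ∫ ω, ξ i ω ∂μ = 0) (T : Finset ι) :
    ∫ ω, (∑ i ∈ T, ξ i ω) ^ 4 ∂μ ≤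
      3 * (∑ i ∈ T, ∫ ω, ξ i ω ^ 2 ∂μ) ^ 2 + ∑ i ∈ T, ∫ ω, ξ i ω ^ 4 ∂μ := by
  classical
  have hL2 (i : ι) : MemLp (ξ i) 2 μ := (hL4 i).mono_exponent (by norm_num)
  induction T using Finset.induction_on with
  | empty => simp
  | insert j T hj ih =>
    have hI : IndepFun (fun ω => ∑ i ∈ T, ξ i ω) (ξ j) μ := by
      simpa only [Finset.sum_fn] using
        hind.indepFun_finsetSum_of_notMem₀ (fun i => (hL4 i).1.aemeasurable) hj
    simp only [Finset.sum_insert hj, add_comm (ξ j _), add_comm (∫ _, ξ j _ ^ _ ∂μ)]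
    rw [integral_add_pow_four hI (memLp_finsetSum _ fun i _ => hL4 i) (hL4 j)
      (integral_finsetSum_eq_zero (fun i => (hL2 i).integrable one_le_two) hmean T) (hmean j),
      integral_sq_finsetSum hind hL2 hmean]
    nlinarith [sq_nonneg (∫ ω, ξ j ω ^ 2 ∂μ)]

lemma integral_pow_four_sum_const_mul_le [Fintype ι] (hind : iIndepFun ξ μ)
    (hL4 : ∀ i, MemLp (ξ i) 4 μ) (hmean : ∀ i, ∫ ω, ξ i ω ∂μ = 0) {v κ : ℝ}
    (hv : ∀ i, ∫ ω, ξ i ω ^ 2 ∂μ = v) (hκ : ∀ i, ∫ ω, ξ i ω ^ 4 ∂μ = κ) (a : ι → ℝ) :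
    ∫ ω, (∑ i, a i * ξ i ω) ^ 4 ∂μ ≤ (3 * v ^ 2 + κ) * (∑ i, a i ^ 2) ^ 2 := by
  rcases isEmpty_or_nonempty ι with h | ⟨⟨i₀⟩⟩
  · simp
  have hκ_nonneg : 0 ≤ κ := hκ i₀ ▸ integral_nonneg fun ω => by positivity
  have hind_mul : iIndepFun (fun i ω => a i * ξ i ω) μ :=
    hind.comp (fun i x => a i * x) fun i => by fun_prop
  have sum_pow_four_le : ∑ i, a i ^ 4 ≤ (∑ i, a i ^ 2) ^ 2 := by
    simpa only [← pow_mul] using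
      Finset.sum_sq_le_sq_sum_of_nonneg (s := Finset.univ) (f := fun i => a i ^ 2)
        fun i _ => sq_nonneg _
  calc _ ≤ 3 * (∑ i, ∫ ω, (a i * ξ i ω) ^ 2 ∂μ) ^ 2 + ∑ i, ∫ ω, (a i * ξ i ω) ^ 4 ∂μ :=
        integral_pow_four_finsetSum_le hind_mul (fun i => (hL4 i).const_mul (a i))
          (fun i => by rw [integral_const_mul, hmean, mul_zero]) _
    _ = 3 * v ^ 2 * (∑ i, a i ^ 2) ^ 2 + κ * ∑ i, a i ^ 4 := by
        simp only [mul_pow, integral_const_mul, hv, hκ, ← Finset.sum_mul]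
        ring
    _ ≤ 3 * v ^ 2 * (∑ i, a i ^ 2) ^ 2 + κ * (∑ i, a i ^ 2) ^ 2 := by gcongr
    _ = (3 * v ^ 2 + κ) * (∑ i, a i ^ 2) ^ 2 := by ring

end FourthMoment

section GaussianVectors

open Matrix

instance : IsProbabilityMeasure stdComplexGaussian :=
  Measure.isProbabilityMeasure_map (by fun_prop)

instance : IsGaussian stdComplexGaussian := by
  let L : ℝ × ℝ →L[ℝ] ℂ :=
    (Real.sqrt 2)⁻¹ • Complex.equivRealProdCLM.symm.toContinuousLinearMap
  have hL : stdComplexGaussian = ((gaussianReal 0 1).prod (gaussianReal 0 1)).map L := by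
    rw [stdComplexGaussian]
    congr with p
    simp [L, Complex.equivRealProdCLM_symm_apply, div_eq_inv_mul, mul_add]
  rw [hL]
  infer_instance

lemma charFun_stdComplexGaussian (w : ℂ) :
    charFun stdComplexGaussian w = Complex.exp (-(‖w‖ ^ 2 : ℝ) / 4) := by
  have hsqrt : ((Real.sqrt 2 : ℝ) : ℂ) ^ 2 = 2 := by
    rw [← Complex.ofReal_pow, Real.sq_sqrt zero_le_two, Complex.ofReal_ofNat]
  have hsplit (p : ℝ × ℝ) :
      Complex.exp (inner ℝ (((p.1 : ℂ) + p.2 * Complex.I) / (Real.sqrt 2 : ℝ)) w * Complex.I) =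
        Complex.exp ((w.re / Real.sqrt 2 : ℝ) * p.1 * Complex.I) *
          Complex.exp ((w.im / Real.sqrt 2 : ℝ) * p.2 * Complex.I) := by
    rw [← Complex.exp_add, Complex.inner]
    congr 1
    simp [Complex.div_ofReal_re, Complex.div_ofReal_im]
    ring
  rw [stdComplexGaussian, charFun_apply, integral_map (by fun_prop) (by fun_prop)]
  simp_rw [hsplit]
  rw [integral_prod_mul (fun x : ℝ => Complex.exp ((w.re / Real.sqrt 2 : ℝ) * x * Complex.I))
      (fun x : ℝ => Complex.exp ((w.im / Real.sqrt 2 : ℝ) * x * Complex.I)),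
    ← charFun_apply_real, ← charFun_apply_real, charFun_gaussianReal, charFun_gaussianReal,
    ← Complex.exp_add, Complex.sq_norm, Complex.normSq_apply]
  congr 1
  push_cast
  simp only [div_pow, hsqrt]
  ring

lemma memLp_norm_sq_sub_one_stdComplexGaussian :
    MemLp (fun z : ℂ => ‖z‖ ^ 2 - 1) 4 stdComplexGaussian := by
  have hnorm : MemLp (fun z : ℂ => ‖z‖) 8 stdComplexGaussian :=
    (IsGaussian.memLp_id stdComplexGaussian 8 (by simp)).norm
  have hdiv : (8 : ENNReal) / 2 = 4 := by
    rw [eq_comm, ENNReal.eq_div_iff (by simp) (by simp)]; norm_num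
  refine MemLp.sub ?_ (memLp_const 1)
  simpa [hdiv] using hnorm.norm_rpow_div 2

lemma integral_sq_gaussianReal_zero_one : ∫ x, x ^ 2 ∂gaussianReal 0 1 = 1 := by
  have hvar := variance_id_gaussianReal (μ := 0) (v := 1)
  rw [variance_of_integral_eq_zero (by fun_prop) (by simp)] at hvar
  simpa using hvar

lemma integral_norm_sq_sub_one_stdComplexGaussian :
    ∫ z : ℂ, (‖z‖ ^ 2 - 1) ∂stdComplexGaussian = 0 := by
  have hintegrable : Integrable (fun x : ℝ => x ^ 2 / 2) (gaussianReal 0 1) := by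
    simpa using (memLp_id_gaussianReal (μ := 0) (v := 1) 2).integrable_sq.div_const 2
  have hnorm (p : ℝ × ℝ) : ‖((p.1 : ℂ) + p.2 * Complex.I) / (Real.sqrt 2 : ℝ)‖ ^ 2 - 1 =
      p.1 ^ 2 / 2 + p.2 ^ 2 / 2 - 1 := by
    rw [norm_div, div_pow, Complex.sq_norm, Complex.normSq_add_mul_I]
    simp [add_div]
  rw [stdComplexGaussian, integral_map (by fun_prop) (by fun_prop)]
  simp_rw [hnorm]
  rw [integral_sub ((hintegrable.comp_fst _).fun_add (hintegrable.comp_snd _)) (integrable_const 1),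
    integral_add (hintegrable.comp_fst _) (hintegrable.comp_snd _),
    integral_fun_fst (fun x : ℝ => x ^ 2 / 2),
    integral_fun_snd (fun x : ℝ => x ^ 2 / 2)]
  simp only [integral_div, integral_sq_gaussianReal_zero_one]
  norm_num

/-- The law on `ι → ℂ` of a vector of independent standard complex Gaussians. -/
noncomputable def stdComplexGaussianVec (ι : Type*) [Fintype ι] : Measure (ι → ℂ) :=
  Measure.pi fun _ => stdComplexGaussian

/-- The constant `3 E[(|z|² - 1)²]² + E[(|z|² - 1)⁴]` of the fourth moment bound
`lintegral_quadForm_sub_trace_pow_four_le`, for a standard complex Gaussian `z`. -/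
noncomputable def quadFormMomentConst : ℝ :=
  3 * (∫ z : ℂ, (‖z‖ ^ 2 - 1) ^ 2 ∂stdComplexGaussian) ^ 2 +
    ∫ z : ℂ, (‖z‖ ^ 2 - 1) ^ 4 ∂stdComplexGaussian

lemma quadFormMomentConst_nonneg : 0 ≤ quadFormMomentConst :=
  add_nonneg (by positivity) (integral_nonneg fun z => by positivity)

variable {n : Type*} [Fintype n]

instance : IsProbabilityMeasure (stdComplexGaussianVec n) := by
  unfold stdComplexGaussianVec; infer_instance

lemma charFun_map_toLp_stdComplexGaussianVec (t : EuclideanSpace ℂ n) :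
    charFun ((stdComplexGaussianVec n).map (WithLp.toLp 2)) t =
      Complex.exp (-(‖t‖ ^ 2 : ℝ) / 4) := by
  rw [stdComplexGaussianVec, charFun_pi]
  simp only [charFun_stdComplexGaussian, ← Complex.exp_sum, EuclideanSpace.norm_sq_eq,
    ← Finset.sum_div, ← Finset.sum_neg_distrib, Complex.ofReal_sum]

lemma inner_toLp_mulVec (A : Matrix n n ℂ) (x y : n → ℂ) :
    inner ℝ (WithLp.toLp 2 (A *ᵥ x)) (WithLp.toLp 2 y) =
      inner ℝ (WithLp.toLp 2 x) (WithLp.toLp 2 (Aᴴ *ᵥ y)) := by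
  have hinner (u v : n → ℂ) :
      inner ℝ (WithLp.toLp 2 u : EuclideanSpace ℂ n) (WithLp.toLp 2 v) = (star u ⬝ᵥ v).re := by
    simp [PiLp.inner_apply, Complex.inner, dotProduct, mul_comm]
  rw [hinner, hinner, star_mulVec, dotProduct_mulVec]

lemma map_mulVec_stdComplexGaussianVec [DecidableEq n] {U : Matrix n n ℂ}
    (hU : U ∈ unitaryGroup n ℂ) :
    (stdComplexGaussianVec n).map (U *ᵥ ·) = stdComplexGaussianVec n := by
  have hmeas : Measurable (U *ᵥ ·) := (Continuous.matrix_mulVec continuous_const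
    continuous_id).measurable
  have hnorm (t : EuclideanSpace ℂ n) : ‖WithLp.toLp 2 (Uᴴ *ᵥ t.ofLp)‖ ^ 2 = ‖t‖ ^ 2 := by
    rw [← real_inner_self_eq_norm_sq, ← inner_toLp_mulVec, mulVec_mulVec,
      ← star_eq_conjTranspose, mem_unitaryGroup_iff.1 hU, one_mulVec, real_inner_self_eq_norm_sq]
  have : IsProbabilityMeasure ((stdComplexGaussianVec n).map (U *ᵥ ·)) :=
    Measure.isProbabilityMeasure_map hmeas.aemeasurable
  apply (MeasurableEquiv.toLp 2 (n → ℂ)).map_measurableEquiv_injective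
  simp only [MeasurableEquiv.coe_toLp]
  refine Measure.ext_of_charFun (funext fun t => ?_)
  calc charFun (((stdComplexGaussianVec n).map (U *ᵥ ·)).map (WithLp.toLp 2)) t
      = charFun ((stdComplexGaussianVec n).map (WithLp.toLp 2)) (WithLp.toLp 2 (Uᴴ *ᵥ t.ofLp)) := by
        simp only [charFun_apply, ← MeasurableEquiv.coe_toLp, integral_map_equiv]
        rw [integral_map hmeas.aemeasurable (by fun_prop)]
        simp only [MeasurableEquiv.coe_toLp, ← inner_toLp_mulVec, WithLp.toLp_ofLp]
    _ = charFun ((stdComplexGaussianVec n).map (WithLp.toLp 2)) t := by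
        rw [charFun_map_toLp_stdComplexGaussianVec, charFun_map_toLp_stdComplexGaussianVec, hnorm]

lemma lintegral_sum_mul_norm_sq_sub_one_pow_four_le (a : n → ℝ) :
    ∫⁻ x, ENNReal.ofReal ((∑ i, a i * (‖x i‖ ^ 2 - 1)) ^ 4) ∂stdComplexGaussianVec n ≤
      ENNReal.ofReal (quadFormMomentConst * (∑ i, a i ^ 2) ^ 2) := by
  have heval (i : n) : MeasurePreserving (Function.eval i) (stdComplexGaussianVec n)
      stdComplexGaussian := measurePreserving_eval (fun _ : n => stdComplexGaussian) i
  have hintegral (i : n) (g : ℂ → ℝ) (hg : Continuous g) :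
      ∫ x, g (x i) ∂stdComplexGaussianVec n = ∫ z, g z ∂stdComplexGaussian := by
    rw [← (heval i).map_eq, integral_map (heval i).aemeasurable hg.aestronglyMeasurable]
  have hL4 (i : n) : MemLp (fun x : n → ℂ => ‖x i‖ ^ 2 - 1) 4 (stdComplexGaussianVec n) :=
    memLp_norm_sq_sub_one_stdComplexGaussian.comp_measurePreserving (heval i)
  have hintegrable : Integrable (fun x : n → ℂ => (∑ i, a i * (‖x i‖ ^ 2 - 1)) ^ 4)
      (stdComplexGaussianVec n) :=
    integrable_pow_of_memLp (memLp_finsetSum _ fun i _ => (hL4 i).const_mul (a i)) le_rfl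
  rw [← ofReal_integral_eq_lintegral_ofReal hintegrable (.of_forall fun x => by positivity)]
  refine ENNReal.ofReal_le_ofReal (integral_pow_four_sum_const_mul_le ?_ hL4 (fun i => ?_)
    (fun i => hintegral i (fun z => (‖z‖ ^ 2 - 1) ^ 2) (by fun_prop))
    (fun i => hintegral i (fun z => (‖z‖ ^ 2 - 1) ^ 4) (by fun_prop)) a)
  · exact iIndepFun_pi (X := fun _ z => ‖z‖ ^ 2 - 1) fun _ => by fun_prop
  · rw [hintegral i (fun z => ‖z‖ ^ 2 - 1) (by fun_prop),
      integral_norm_sq_sub_one_stdComplexGaussian]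

lemma lintegral_quadForm_sub_trace_pow_four_le {A : Matrix n n ℂ} (hA : A.IsHermitian) :
    ∫⁻ x, ENNReal.ofReal ((quadForm A x - RCLike.re A.trace) ^ 4) ∂stdComplexGaussianVec n ≤
      ENNReal.ofReal (quadFormMomentConst * RCLike.re (A * A).trace ^ 2) := by
  classical
  let U : Matrix n n ℂ := hA.eigenvectorUnitary
  have hquad (x : n → ℂ) : quadForm A x - RCLike.re A.trace =
      ∑ i, hA.eigenvalues i * (‖(star U *ᵥ x) i‖ ^ 2 - 1) := by
    simp [quadForm_eq_sum_eigenvalues_mul_norm_sq hA, hA.trace_eq_sum_eigenvalues, mul_sub, U]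
  have hmeas : Measurable (star U *ᵥ ·) := (Continuous.matrix_mulVec continuous_const
    continuous_id).measurable
  calc _ = ∫⁻ x, ENNReal.ofReal ((∑ i, hA.eigenvalues i * (‖x i‖ ^ 2 - 1)) ^ 4)
        ∂(stdComplexGaussianVec n).map (star U *ᵥ ·) := by
        rw [lintegral_map (by fun_prop) hmeas]
        simp_rw [hquad]
    _ ≤ _ := by
        rw [map_mulVec_stdComplexGaussianVec (U := star U) (star hA.eigenvectorUnitary).2,
          re_trace_mul_self hA]
        exact lintegral_sum_mul_norm_sq_sub_one_pow_four_le _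

end GaussianVectors

section RandomMatrices

open Matrix

variable {n m Ω : Type*} [MeasurableSpace Ω] {P : Measure Ω}

/-- A random matrix whose entries are independent standard complex Gaussians (a rectangular
complex Ginibre matrix). -/
structure IsGinibre (Z : Ω → Matrix n m ℂ) (P : Measure Ω) : Prop where
  indep : iIndepFun (fun (p : n × m) ω => Z ω p.1 p.2) P
  map_entry : ∀ p : n × m, P.map (fun ω => Z ω p.1 p.2) = stdComplexGaussian

namespace IsGinibre

variable {Z : Ω → Matrix n m ℂ}

lemma aemeasurable_entry (hZ : IsGinibre Z P) (i : n) (k : m) :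
    AEMeasurable (fun ω => Z ω i k) P := by
  apply AEMeasurable.of_map_ne_zero
  rw [hZ.map_entry (i, k)]
  exact IsProbabilityMeasure.ne_zero _

lemma aemeasurable_col [Countable n] (hZ : IsGinibre Z P) (k : m) :
    AEMeasurable (fun ω => (Z ω).col k) P :=
  aemeasurable_pi_lambda _ fun i => hZ.aemeasurable_entry i k

lemma map_col [Fintype n] [IsProbabilityMeasure P] (hZ : IsGinibre Z P) (k : m) :
    P.map (fun ω => (Z ω).col k) = stdComplexGaussianVec n := by
  have hind : iIndepFun (fun (i : n) ω => Z ω i k) P :=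
    hZ.indep.precomp (g := fun i : n => (i, k)) fun i j hij => by simpa using hij
  calc _ = Measure.pi fun i => P.map fun ω => Z ω i k :=
        (iIndepFun_iff_map_fun_eq_pi_map fun i => hZ.aemeasurable_entry i k).1 hind
    _ = _ := by simp only [hZ.map_entry (_, k), stdComplexGaussianVec]

variable [DecidableEq m]

lemma aemeasurable_updateCol_zero [Countable n] [Countable m] (hZ : IsGinibre Z P) (k : m) :
    AEMeasurable (fun ω => (show n → m → ℂ from (Z ω).updateCol k 0)) P := by
  refine aemeasurable_pi_lambda _ fun i => aemeasurable_pi_lambda _ fun j => ?_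
  rcases eq_or_ne j k with rfl | hj
  · simp
  · simpa [hj] using hZ.aemeasurable_entry i j

lemma indepFun_col_updateCol_zero [Finite n] [Finite m] (hZ : IsGinibre Z P) (k : m) :
    IndepFun (fun ω => (Z ω).col k) (fun ω => (show n → m → ℂ from (Z ω).updateCol k 0)) P := by
  classical
  cases nonempty_fintype n
  cases nonempty_fintype m
  let S : Finset (n × m) := {p | p.2 = k}
  let T : Finset (n × m) := {p | p.2 ≠ k}
  have hindep := hZ.indep.indepFun_finset₀ S T (Finset.disjoint_filter_filter_not _ _ _)
    fun p => hZ.aemeasurable_entry p.1 p.2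
  let φ : (S → ℂ) → n → ℂ := fun x i => x ⟨(i, k), by simp [S]⟩
  let ψ : (T → ℂ) → n → m → ℂ := fun x i j =>
    if hj : j ≠ k then x ⟨(i, j), by simp [T, hj]⟩ else 0
  have hφ : Measurable φ := measurable_pi_lambda _ fun i => measurable_pi_apply _
  have hψ : Measurable ψ := by
    refine measurable_pi_lambda _ fun i => measurable_pi_lambda _ fun j => ?_
    by_cases hj : j ≠ k
    · simpa only [ψ, hj, ne_eq, not_false_eq_true, dite_true] using measurable_pi_apply _
    · simp only [ψ, hj, dite_false, measurable_const]
  convert! hindep.comp hφ hψ using 1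
  ext ω i j
  rcases eq_or_ne j k with rfl | hj
  · simp [ψ]
  · simp [ψ, hj]

end IsGinibre

section

variable [Fintype n] [DecidableEq n] [Fintype m]

lemma continuous_negResolvent_mul_conjTranspose {t : ℝ} (ht : 0 < t) :
    Continuous fun V : Matrix n m ℂ => negResolvent t (V * Vᴴ) := by
  have hdet (V : Matrix n m ℂ) : (V * Vᴴ + (t : ℂ) • 1).det ≠ 0 :=
    (posDef_add_ofReal_smul_one ht (posSemidef_self_mul_conjTranspose V)).det_pos.ne'
  have hcont : Continuous fun V : Matrix n m ℂ => V * Vᴴ + (t : ℂ) • (1 : Matrix n n ℂ) := by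
    fun_prop
  simp only [negResolvent, inv_def, Ring.inverse_eq_inv']
  exact (hcont.matrix_det.inv₀ hdet).smul hcont.matrix_adjugate

lemma measurable_gramFormDefect {t : ℝ} (ht : 0 < t) :
    Measurable fun p : (n → ℂ) × (n → m → ℂ) => gramFormDefect t (of p.2) p.1 := by
  have hres : Continuous fun p : (n → ℂ) × (n → m → ℂ) => negResolvent t (of p.2 * (of p.2)ᴴ) :=
    (continuous_negResolvent_mul_conjTranspose ht).comp continuous_snd
  have hform : Continuous fun p : (n → ℂ) × (n → m → ℂ) =>
      star p.1 ⬝ᵥ negResolvent t (of p.2 * (of p.2)ᴴ) *ᵥ p.1 :=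
    continuous_fst.star.dotProduct (hres.matrix_mulVec continuous_fst)
  exact ((Complex.continuous_re.comp hform).sub
    (Complex.continuous_re.comp hres.matrix_trace)).measurable

lemma lintegral_gramFormDefect_pow_four_le {t : ℝ} (ht : 0 < t) (V : Matrix n m ℂ) :
    ∫⁻ x, ENNReal.ofReal (gramFormDefect t V x ^ 4) ∂stdComplexGaussianVec n ≤
      ENNReal.ofReal (quadFormMomentConst * (Fintype.card n / t ^ 2) ^ 2) := by
  have hB := posSemidef_self_mul_conjTranspose V
  have hR := negResolvent_posDef ht hB
  have htrace_nonneg :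
      0 ≤ RCLike.re (negResolvent t (V * Vᴴ) * negResolvent t (V * Vᴴ)).trace := by
    rw [re_trace_mul_self hR.isHermitian]
    positivity
  have := quadFormMomentConst_nonneg
  refine (lintegral_quadForm_sub_trace_pow_four_le hR.isHermitian).trans ?_
  gcongr
  exact re_trace_negResolvent_mul_self_le ht hB

end

namespace IsGinibre

variable [Fintype n] [DecidableEq n] [Fintype m] [DecidableEq m]
  {Z : Ω → Matrix n m ℂ} {t : ℝ}

lemma aemeasurable_leaveOneOutDefect (hZ : IsGinibre Z P) (ht : 0 < t) (k : m) :
    AEMeasurable (fun ω => leaveOneOutDefect t (Z ω) k) P := by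
  have hpair := (hZ.aemeasurable_col k).prodMk (hZ.aemeasurable_updateCol_zero k)
  have hcomp := (measurable_gramFormDefect ht).comp_aemeasurable hpair
  exact hcomp

variable [IsProbabilityMeasure P]

lemma lintegral_leaveOneOutDefect_pow_four_le (hZ : IsGinibre Z P) (ht : 0 < t) (k : m) :
    ∫⁻ ω, ENNReal.ofReal (leaveOneOutDefect t (Z ω) k ^ 4) ∂P ≤
      ENNReal.ofReal (quadFormMomentConst * (Fintype.card n / t ^ 2) ^ 2) := by
  have hcol := hZ.aemeasurable_col k
  have hrest := hZ.aemeasurable_updateCol_zero k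
  set ν := P.map fun ω => (show n → m → ℂ from (Z ω).updateCol k 0)
  have : IsProbabilityMeasure ν := Measure.isProbabilityMeasure_map hrest
  have hlaw : P.map (fun ω => ((Z ω).col k, (show n → m → ℂ from (Z ω).updateCol k 0))) =
      (stdComplexGaussianVec n).prod ν := by
    rw [← hZ.map_col k]
    exact (indepFun_iff_map_prod_eq_prod_map_map hcol hrest).1 (hZ.indepFun_col_updateCol_zero k)
  have hmeas := ((measurable_gramFormDefect (n := n) (m := m) ht).pow_const
    4).ennreal_ofReal
  calc _ = ∫⁻ p, ENNReal.ofReal (gramFormDefect t (of p.2) p.1 ^ 4)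
        ∂(stdComplexGaussianVec n).prod ν := by
        rw [← hlaw, lintegral_map' hmeas.aemeasurable (hcol.prodMk hrest)]
        rfl
    _ ≤ ∫⁻ _, ENNReal.ofReal (quadFormMomentConst * (Fintype.card n / t ^ 2) ^ 2) ∂ν := by
        rw [lintegral_prod_symm' _ hmeas]
        exact lintegral_mono fun V => lintegral_gramFormDefect_pow_four_le ht (of V)
    _ = _ := by simp

lemma lintegral_sum_abs_leaveOneOutDefect_pow_four_le (hZ : IsGinibre Z P) (ht : 0 < t) :
    ∫⁻ ω, ENNReal.ofReal ((∑ k, |leaveOneOutDefect t (Z ω) k|) ^ 4) ∂P ≤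
      ENNReal.ofReal (Fintype.card m ^ 4 *
        (quadFormMomentConst * (Fintype.card n / t ^ 2) ^ 2)) := by
  have hpow (ω : Ω) : ENNReal.ofReal ((∑ k, |leaveOneOutDefect t (Z ω) k|) ^ 4) ≤
      ENNReal.ofReal (Fintype.card m ^ 3) *
        ∑ k, ENNReal.ofReal (leaveOneOutDefect t (Z ω) k ^ 4) := by
    rw [← ENNReal.ofReal_sum_of_nonneg (fun k _ => by positivity),
      ← ENNReal.ofReal_mul (by positivity)]
    refine ENNReal.ofReal_le_ofReal ?_
    simpa [Even.pow_abs (show Even 4 by decide)] using pow_sum_le_card_mul_sum_pow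
      (s := Finset.univ) (f := fun k => |leaveOneOutDefect t (Z ω) k|) (fun k _ => abs_nonneg _) 3
  calc _ ≤ ENNReal.ofReal (Fintype.card m ^ 3) *
        ∑ k, ∫⁻ ω, ENNReal.ofReal (leaveOneOutDefect t (Z ω) k ^ 4) ∂P := by
        refine (lintegral_mono hpow).trans_eq ?_
        rw [lintegral_const_mul' _ _ ENNReal.ofReal_ne_top, lintegral_finsetSum' _ fun k _ =>
          ((hZ.aemeasurable_leaveOneOutDefect ht k).pow_const 4).ennreal_ofReal]
    _ ≤ ENNReal.ofReal (Fintype.card m ^ 3) *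
        ∑ _k : m, ENNReal.ofReal (quadFormMomentConst * (Fintype.card n / t ^ 2) ^ 2) := by
        gcongr with k
        exact hZ.lintegral_leaveOneOutDefect_pow_four_le ht k
    _ = _ := by
        rw [Finset.sum_const, Finset.card_univ, nsmul_eq_mul, ← mul_assoc,
          ← ENNReal.ofReal_natCast, ← ENNReal.ofReal_mul (by positivity),
          ← ENNReal.ofReal_mul (by positivity), ← pow_succ]

end IsGinibre

end RandomMatrices

section SelfConsistentEquation

open Matrix

/-- How far `x` is from solving the self-consistent equation `1 = t x + c x / (1 + x)` of the
Stieltjes transform, evaluated at `-t`, of the Marčenko–Pastur distribution of ratio `c`. -/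
noncomputable def selfConsistencyDefect (c t x : ℝ) : ℝ :=
  1 - t * x - c * (x / (1 + x))

variable {c t x : ℝ}

lemma abs_selfConsistencyDefect_sub_le (c c' t : ℝ) (hx : 0 ≤ x) :
    |selfConsistencyDefect c t x - selfConsistencyDefect c' t x| ≤ |c - c'| := by
  have hfrac : |x / (1 + x)| ≤ 1 := by
    rw [abs_of_nonneg (by positivity), div_le_one (by positivity)]
    linarith
  calc _ = |c - c'| * |x / (1 + x)| := by
        rw [abs_sub_comm, ← abs_mul]
        congr 1
        simp only [selfConsistencyDefect]
        ring
    _ ≤ |c - c'| := mul_le_of_le_one_right (abs_nonneg _) hfrac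

lemma mul_abs_sub_le_abs_selfConsistencyDefect_sub {y : ℝ} (hc : 0 ≤ c) (hx : 0 ≤ x)
    (hy : 0 ≤ y) :
    t * |x - y| ≤ |selfConsistencyDefect c t x - selfConsistencyDefect c t y| := by
  have hsub : selfConsistencyDefect c t x - selfConsistencyDefect c t y =
      -((t + c / ((1 + x) * (1 + y))) * (x - y)) := by
    simp only [selfConsistencyDefect]
    field_simp
    ring
  rw [hsub, abs_neg, abs_mul]
  gcongr
  exact (le_add_of_nonneg_right (by positivity)).trans (le_abs_self _)

lemma abs_selfConsistencyDefect_re_trace_negResolvent_le {𝕜 n m : Type*} [RCLike 𝕜] [Fintype n]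
    [Nonempty n] [DecidableEq n] [Fintype m] [DecidableEq m] (ht : 0 < t) (Y : Matrix n m 𝕜) :
    |selfConsistencyDefect (Fintype.card m / Fintype.card n) t
      (RCLike.re (negResolvent (Fintype.card n * t) (Y * Yᴴ)).trace)| ≤
      (∑ k, |leaveOneOutDefect (Fintype.card n * t) Y k|) / Fintype.card n +
        Fintype.card m / Fintype.card n * (1 / (Fintype.card n * t)) := by
  have hn : (0 : ℝ) < Fintype.card n := Nat.cast_pos.2 Fintype.card_pos
  have hbound := abs_card_sub_re_trace_negResolvent_le (mul_pos hn ht) Y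
  set μ := RCLike.re (negResolvent (Fintype.card n * t) (Y * Yᴴ)).trace
  have hscale : selfConsistencyDefect (Fintype.card m / Fintype.card n) t μ =
      (Fintype.card n - Fintype.card n * t * μ - Fintype.card m * (μ / (1 + μ))) /
        Fintype.card n := by
    rw [selfConsistencyDefect, sub_div, sub_div, div_self hn.ne', mul_assoc,
      mul_div_cancel_left₀ _ hn.ne', div_mul_eq_mul_div]
  rw [hscale, abs_div, abs_of_pos hn, div_mul_eq_mul_div, ← add_div]
  gcongr

end SelfConsistentEquation

section AlmostSureConvergence

open Matrix

variable {Ω : Type*} [MeasurableSpace Ω] {P : Measure Ω}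

lemma ae_tendsto_zero_of_tsum_lintegral_pow_ne_top {E : ℕ → Ω → ℝ} {k : ℕ} (hk : k ≠ 0)
    (hE : ∀ d, AEMeasurable (E d) P)
    (hsum : ∑' d, ∫⁻ ω, ENNReal.ofReal (|E d ω| ^ k) ∂P ≠ ⊤) :
    ∀ᵐ ω ∂P, Tendsto (fun d => E d ω) atTop (nhds 0) := by
  have hmeas (d : ℕ) : AEMeasurable (fun ω => ENNReal.ofReal (|E d ω| ^ k)) P :=
    ((continuous_abs.measurable.comp_aemeasurable (hE d)).pow_const k).ennreal_ofReal
  rw [← lintegral_tsum hmeas] at hsum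
  filter_upwards [ae_lt_top' (AEMeasurable.tsum hmeas) hsum] with ω hω
  have hpow : Tendsto (fun d => |E d ω| ^ k) atTop (nhds 0) := by
    refine ((ENNReal.tendsto_toReal ENNReal.zero_ne_top).comp
      (ENNReal.tendsto_atTop_zero_of_tsum_ne_top hω.ne)).congr fun d => ?_
    exact ENNReal.toReal_ofReal (by positivity)
  refine (tendsto_zero_iff_abs_tendsto_zero _).2 ?_
  have hroot := hpow.rpow_const (p := (k : ℝ)⁻¹) (.inr (by positivity))
  rw [Real.zero_rpow (inv_ne_zero (Nat.cast_ne_zero.2 hk))] at hroot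
  exact hroot.congr fun d => Real.pow_rpow_inv_natCast (abs_nonneg _) hk

variable [IsProbabilityMeasure P] {s : ℕ → ℕ} {X : ∀ d : ℕ, Ω → Matrix (Fin d) (Fin (s d)) ℂ}
  {c t : ℝ}

lemma lintegral_average_leaveOneOutDefect_pow_four_le {d m : ℕ} {Z : Ω → Matrix (Fin d) (Fin m) ℂ}
    (hZ : IsGinibre Z P) (ht : 0 < t) :
    ∫⁻ ω, ENNReal.ofReal (|(∑ k, |leaveOneOutDefect (d * t) (Z ω) k|) / d| ^ 4) ∂P ≤
      ENNReal.ofReal ((m / d) ^ 4 * (quadFormMomentConst / t ^ 4) * (1 / (d : ℝ) ^ 2)) := by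
  rcases Nat.eq_zero_or_pos d with rfl | hd
  · simp
  have hd : (0 : ℝ) < d := Nat.cast_pos.2 hd
  calc _ = ENNReal.ofReal (((d : ℝ) ^ 4)⁻¹) *
        ∫⁻ ω, ENNReal.ofReal ((∑ k, |leaveOneOutDefect (d * t) (Z ω) k|) ^ 4) ∂P := by
        rw [← lintegral_const_mul' _ _ ENNReal.ofReal_ne_top]
        refine lintegral_congr fun ω => ?_
        rw [← ENNReal.ofReal_mul (by positivity), Even.pow_abs (by decide), div_pow,
          inv_mul_eq_div]
    _ ≤ ENNReal.ofReal (((d : ℝ) ^ 4)⁻¹) * ENNReal.ofReal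
        (m ^ 4 * (quadFormMomentConst * (d / (d * t) ^ 2) ^ 2)) := by
        gcongr
        simpa using hZ.lintegral_sum_abs_leaveOneOutDefect_pow_four_le (mul_pos hd ht)
    _ = _ := by
        rw [← ENNReal.ofReal_mul (by positivity)]
        congr 1
        field_simp

lemma ae_tendsto_average_leaveOneOutDefect (hX : ∀ d, IsGinibre (X d) P)
    (hsc : Tendsto (fun d : ℕ => (s d : ℝ) / d) atTop (nhds c)) (ht : 0 < t) :
    ∀ᵐ ω ∂P, Tendsto (fun d : ℕ => (∑ k, |leaveOneOutDefect (d * t) (X d ω) k|) / d)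
      atTop (nhds 0) := by
  have hmeas (d : ℕ) :
      AEMeasurable (fun ω => (∑ k, |leaveOneOutDefect (d * t) (X d ω) k|) / d) P := by
    rcases Nat.eq_zero_or_pos d with rfl | hd
    · simp
    refine (Finset.aemeasurable_fun_sum _ fun k _ => ?_).div_const _
    exact continuous_abs.measurable.comp_aemeasurable
      ((hX d).aemeasurable_leaveOneOutDefect (mul_pos (Nat.cast_pos.2 hd) ht) k)
  obtain ⟨C, hC⟩ : ∃ C, ∀ d : ℕ, (s d : ℝ) / d ≤ C := by
    obtain ⟨C, hC⟩ := hsc.bddAbove_range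
    exact ⟨C, fun d => hC ⟨d, rfl⟩⟩
  have hbound (d : ℕ) :
      ∫⁻ ω, ENNReal.ofReal (|(∑ k, |leaveOneOutDefect (d * t) (X d ω) k|) / d| ^ 4) ∂P ≤
        ENNReal.ofReal (C ^ 4 * (quadFormMomentConst / t ^ 4) * (1 / (d : ℝ) ^ 2)) := by
    have := quadFormMomentConst_nonneg
    refine (lintegral_average_leaveOneOutDefect_pow_four_le (hX d) ht).trans ?_
    gcongr
    exact hC d
  refine ae_tendsto_zero_of_tsum_lintegral_pow_ne_top four_ne_zero hmeas
    (ne_top_of_le_ne_top ?_ (ENNReal.tsum_le_tsum hbound))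
  exact ((Real.summable_one_div_nat_pow.2 one_lt_two).mul_left _).tsum_ofReal_ne_top

lemma ae_tendsto_re_trace_negResolvent (hX : ∀ d, IsGinibre (X d) P) (hc : 0 ≤ c)
    (hsc : Tendsto (fun d : ℕ => (s d : ℝ) / d) atTop (nhds c)) (ht : 0 < t) {x : ℝ}
    (hx : 0 ≤ x) (hx_eq : selfConsistencyDefect c t x = 0) :
    ∀ᵐ ω ∂P, Tendsto (fun d : ℕ => RCLike.re (negResolvent (d * t) (X d ω * (X d ω)ᴴ)).trace)
      atTop (nhds x) := by
  filter_upwards [ae_tendsto_average_leaveOneOutDefect hX hsc ht] with ω hω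
  have hbound_tendsto : Tendsto (fun d : ℕ =>
      ((∑ k, |leaveOneOutDefect (d * t) (X d ω) k|) / d + (s d : ℝ) / d * (1 / (d * t)) +
        |c - (s d : ℝ) / d|) / t) atTop (nhds 0) := by
    have hinv : Tendsto (fun d : ℕ => (1 / (d * t) : ℝ)) atTop (nhds 0) :=
      tendsto_const_nhds.div_atTop (tendsto_natCast_atTop_atTop.atTop_mul_const ht)
    simpa using ((hω.add (hsc.mul hinv)).add (hsc.const_sub c).abs).div_const t
  refine tendsto_iff_norm_sub_tendsto_zero.2 (squeeze_zero' (.of_forall fun d => norm_nonneg _) ?_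
    hbound_tendsto)
  filter_upwards [eventually_gt_atTop 0] with d hd
  have : Nonempty (Fin d) := Fin.pos_iff_nonempty.1 hd
  have hdt : 0 < d * t := mul_pos (Nat.cast_pos.2 hd) ht
  have hdefect := abs_selfConsistencyDefect_re_trace_negResolvent_le ht (X d ω)
  simp only [Fintype.card_fin] at hdefect
  have hμ : 0 ≤ RCLike.re (negResolvent (d * t) (X d ω * (X d ω)ᴴ)).trace :=
    re_trace_negResolvent_nonneg hdt (posSemidef_self_mul_conjTranspose _)
  set μ := RCLike.re (negResolvent (d * t) (X d ω * (X d ω)ᴴ)).trace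
  rw [Real.norm_eq_abs, le_div_iff₀' ht]
  calc t * |μ - x| ≤ |selfConsistencyDefect c t μ| := by
        simpa [hx_eq] using mul_abs_sub_le_abs_selfConsistencyDefect_sub (t := t) hc hμ hx
    _ ≤ |selfConsistencyDefect (s d / d) t μ| +
          |selfConsistencyDefect c t μ - selfConsistencyDefect (s d / d) t μ| := by
        simpa using abs_add_le (selfConsistencyDefect (s d / d) t μ)
          (selfConsistencyDefect c t μ - selfConsistencyDefect (s d / d) t μ)
    _ ≤ _ := add_le_add hdefect (abs_selfConsistencyDefect_sub_le _ _ _ hμ)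

end AlmostSureConvergence

section CosineIntegrals

open Real Set

variable {p r θ : ℝ}

lemma add_mul_cos_pos (h : |r| < p) : 0 < p + r * cos θ := by
  have hcos : |r * cos θ| ≤ |r| := by
    rw [abs_mul]
    exact mul_le_of_le_one_right (abs_nonneg r) (abs_cos_le_one θ)
  linarith [neg_abs_le (r * cos θ)]

lemma hasDerivAt_sub_two_mul_arctan {q : ℝ} (hq : q ^ 2 = p ^ 2 - r ^ 2)
    (hpq : p + q ≠ 0) (hp_add : p + r * cos θ ≠ 0) (hpq_add : p + q + r * cos θ ≠ 0) :
    HasDerivAt (fun θ => θ - 2 * arctan (r * sin θ / (p + q + r * cos θ)))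
      (q / (p + r * cos θ)) θ := by
  have hquot := ((hasDerivAt_sin θ).const_mul r).div
    (((hasDerivAt_cos θ).const_mul r).const_add (p + q)) hpq_add
  refine ((hasDerivAt_id θ).sub (hquot.arctan.const_mul 2)).congr_deriv ?_
  have hnorm : (p + q + r * cos θ) ^ 2 + (r * sin θ) ^ 2 = 2 * (p + q) * (p + r * cos θ) := by
    linear_combination r ^ 2 * sin_sq_add_cos_sq θ + hq
  have hone_add : 1 + (r * sin θ / (p + q + r * cos θ)) ^ 2 =
      2 * (p + q) * (p + r * cos θ) / (p + q + r * cos θ) ^ 2 := by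
    rw [← hnorm]
    field_simp
  simp only [Pi.div_apply]
  rw [hone_add]
  field_simp
  linear_combination -r ^ 2 * sin_sq_add_cos_sq θ - hq

lemma integral_inv_add_mul_cos (h : |r| < p) :
    ∫ θ in 0..π, (p + r * cos θ)⁻¹ = π / √(p ^ 2 - r ^ 2) := by
  have hp : 0 < p := (abs_nonneg r).trans_lt h
  have hsub_pos : 0 < p ^ 2 - r ^ 2 := sub_pos.2 (sq_lt_sq' (abs_lt.1 h).1 (abs_lt.1 h).2)
  have hsq := sq_sqrt hsub_pos.le
  have hq := sqrt_pos.2 hsub_pos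
  set q := √(p ^ 2 - r ^ 2)
  have hderiv : ∀ θ ∈ uIcc 0 π, HasDerivAt
      (fun θ => q⁻¹ * (θ - 2 * arctan (r * sin θ / (p + q + r * cos θ)))) (p + r * cos θ)⁻¹ θ := by
    intro θ _
    have hpos : 0 < p + r * cos θ := add_mul_cos_pos h
    refine ((hasDerivAt_sub_two_mul_arctan hsq (by positivity) hpos.ne'
      (by linarith)).const_mul q⁻¹).congr_deriv ?_
    field_simp
  have hcont : Continuous fun θ => (p + r * cos θ)⁻¹ :=
    Continuous.inv₀ (by fun_prop) fun _ => (add_mul_cos_pos h).ne'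
  rw [intervalIntegral.integral_eq_sub_of_hasDerivAt hderiv (hcont.intervalIntegrable _ _)]
  simp [div_eq_inv_mul]

lemma integral_sub_mul_cos (p r : ℝ) : ∫ θ in 0..π, (p - r * cos θ) = π * p := by
  simp [intervalIntegral.integral_sub]

lemma mul_sin_sq_div_add_mul_cos (h : p + r * cos θ ≠ 0) :
    (r * sin θ) ^ 2 / (p + r * cos θ) =
      p - r * cos θ - (p ^ 2 - r ^ 2) * (p + r * cos θ)⁻¹ := by
  field_simp
  linear_combination r ^ 2 * sin_sq_add_cos_sq θ

lemma integral_mul_sin_sq_div_add_mul_cos (h : |r| ≤ p) :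
    ∫ θ in 0..π, (r * sin θ) ^ 2 / (p + r * cos θ) = π * (p - √(p ^ 2 - r ^ 2)) := by
  rcases h.eq_or_lt with rfl | hlt
  · have hdiv : ∀ θ ∈ Ioo 0 π, (r * sin θ) ^ 2 / (|r| + r * cos θ) = |r| - r * cos θ := by
      intro θ hθ
      rcases eq_or_ne r 0 with rfl | hr
      · simp
      have hcos : |r * cos θ| < |r| := by
        rw [abs_mul]
        exact mul_lt_of_lt_one_right (abs_pos.2 hr) (abs_lt.2 (mapsTo_cos_Ioo hθ))
      rw [mul_sin_sq_div_add_mul_cos (by linarith [neg_abs_le (r * cos θ)]), sq_abs, sub_self,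
        zero_mul, sub_zero]
    rw [intervalIntegral.integral_congr_Ioo_of_le pi_pos.le hdiv, integral_sub_mul_cos]
    simp
  · have hpos : ∀ θ, 0 < p + r * cos θ := fun _ => add_mul_cos_pos hlt
    have hcont : Continuous fun θ => (p ^ 2 - r ^ 2) * (p + r * cos θ)⁻¹ :=
      continuous_const.mul (Continuous.inv₀ (by fun_prop) fun θ => (hpos θ).ne')
    simp only [fun θ => mul_sin_sq_div_add_mul_cos (hpos θ).ne']
    rw [intervalIntegral.integral_sub (Continuous.intervalIntegrable (by fun_prop) _ _)
      (hcont.intervalIntegrable _ _), integral_sub_mul_cos, intervalIntegral.integral_const_mul,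
      integral_inv_add_mul_cos hlt, mul_div_left_comm, div_sqrt, mul_sub]

lemma integral_eq_integral_comp_add_mul_cos {E : Type*} [NormedAddCommGroup E] [NormedSpace ℝ E]
    (m : ℝ) (hr : 0 ≤ r) (f : ℝ → E) :
    ∫ x in m - r..m + r, f x = ∫ θ in 0..π, (r * sin θ) • f (m + r * cos θ) := by
  have hsubst := integral_Icc_deriv_smul_of_deriv_nonpos (f := fun θ => m + r * cos θ)
    (f' := fun θ => r * -sin θ) (g := f) (by fun_prop)
    (fun θ _ => ((hasDerivAt_cos θ).const_mul r).const_add m)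
    (fun θ hθ => mul_nonpos_of_nonneg_of_nonpos hr
      (neg_nonpos.2 (sin_pos_of_mem_Ioo hθ).le)) pi_pos.le
  simp only [mul_neg, neg_smul, integral_neg, neg_inj, cos_pi, cos_zero, mul_one,
    ← sub_eq_add_neg] at hsubst
  rw [intervalIntegral.integral_of_le (by linarith), intervalIntegral.integral_of_le pi_pos.le,
    ← integral_Icc_eq_integral_Ioc, ← integral_Icc_eq_integral_Ioc, hsubst]

end CosineIntegrals

section SemicircleIntegral

open Real Set

variable {a b u : ℝ}

lemma integral_sqrt_mul_div_add (hab : a ≤ b) (hau : 0 ≤ a + u) :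
    ∫ x in a..b, √((b - x) * (x - a)) / (x + u) =
      π * ((a + b) / 2 + u - √((a + u) * (b + u))) := by
  obtain ⟨m, r, rfl, rfl⟩ : ∃ m r, a = m - r ∧ b = m + r :=
    ⟨(a + b) / 2, (b - a) / 2, by ring, by ring⟩
  have hr : 0 ≤ r := by linarith
  have hsubst : ∀ θ ∈ Ioo 0 π, (r * sin θ) • (√((m + r - (m + r * cos θ)) *
      (m + r * cos θ - (m - r))) / (m + r * cos θ + u)) =
      (r * sin θ) ^ 2 / (m + u + r * cos θ) := by
    intro θ hθ
    have hsq : (m + r - (m + r * cos θ)) * (m + r * cos θ - (m - r)) = (r * sin θ) ^ 2 := by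
      linear_combination (-r ^ 2) * sin_sq_add_cos_sq θ
    rw [hsq, sqrt_sq (mul_nonneg hr (sin_pos_of_mem_Ioo hθ).le), smul_eq_mul, ← mul_div_assoc,
      ← sq, add_right_comm m]
  rw [integral_eq_integral_comp_add_mul_cos m hr,
    intervalIntegral.integral_congr_Ioo_of_le pi_pos.le hsubst,
    integral_mul_sin_sq_div_add_mul_cos (by rw [abs_of_nonneg hr]; linarith)]
  congr 3
  · ring
  · ring_nf

lemma intervalIntegrable_sqrt_mul_div_add (hab : a ≤ b) (hau : 0 ≤ a + u) :
    IntervalIntegrable (fun x => √((b - x) * (x - a)) / (x + u)) volume a b := by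
  rcases hab.eq_or_lt with rfl | hlt
  · exact IntervalIntegrable.refl
  refine intervalIntegral.intervalIntegrable_of_integral_ne_zero ?_
  have hsqrt : √((a + u) * (b + u)) < (a + b) / 2 + u := by
    rw [sqrt_lt' (by linarith)]
    nlinarith [sq_pos_of_pos (sub_pos.2 hlt)]
  rw [integral_sqrt_mul_div_add hab hau]
  exact (mul_pos pi_pos (sub_pos.2 hsqrt)).ne'

end SemicircleIntegral

section StieltjesTransform

/-- The Stieltjes transform `∫ (x - z)⁻¹ ∂μ` of `μ` at the point `z = -t`. It is used for `0 < t`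
and measures carried by `[0, ∞)`, where the integrand is bounded. -/
noncomputable def stieltjesAtNeg (μ : Measure ℝ) (t : ℝ) : ℝ :=
  ∫ x, (x + t)⁻¹ ∂μ

variable {μ : Measure ℝ} {t : ℝ}

lemma integrable_inv_add [IsFiniteMeasure μ] (hμ : ∀ᵐ x ∂μ, 0 ≤ x) (ht : 0 < t) :
    Integrable (fun x => (x + t)⁻¹) μ := by
  refine Integrable.of_bound (C := t⁻¹) (by fun_prop) ?_
  filter_upwards [hμ] with x hx
  rw [Real.norm_of_nonneg (by positivity)]
  gcongr
  linarith

lemma stieltjesAtNeg_nonneg (hμ : ∀ᵐ x ∂μ, 0 ≤ x) (ht : 0 < t) : 0 ≤ stieltjesAtNeg μ t := by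
  refine integral_nonneg_of_ae ?_
  filter_upwards [hμ] with x hx
  simp only [Pi.zero_apply]
  positivity

end StieltjesTransform

section MarchenkoPasturLaw

open Real Set

/-- The density of the absolutely continuous part of the Marčenko–Pastur distribution. -/
noncomputable def marchenkoPasturDensity (c x : ℝ) : ℝ :=
  if (1 - √c) ^ 2 < x ∧ x < (1 + √c) ^ 2 then
    √(((1 + √c) ^ 2 - x) * (x - (1 - √c) ^ 2)) / (2 * π * x)
  else 0

lemma marchenkoPastur_eq (c : ℝ) : marchenkoPastur c =
    ENNReal.ofReal (max (1 - c) 0) • Measure.dirac 0 +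
      volume.withDensity fun x => ENNReal.ofReal (marchenkoPasturDensity c x) :=
  rfl

variable {c t : ℝ}

lemma marchenkoPasturDensity_eq_indicator (c : ℝ) : marchenkoPasturDensity c =
    (Ioo ((1 - √c) ^ 2) ((1 + √c) ^ 2)).indicator
      fun x => √(((1 + √c) ^ 2 - x) * (x - (1 - √c) ^ 2)) / (2 * π * x) := by
  ext x
  simp only [marchenkoPasturDensity, indicator_apply, mem_Ioo]

lemma measurable_marchenkoPasturDensity (c : ℝ) : Measurable (marchenkoPasturDensity c) := by
  rw [marchenkoPasturDensity_eq_indicator]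
  exact Measurable.indicator (by fun_prop) measurableSet_Ioo

lemma marchenkoPasturDensity_of_nonpos (c : ℝ) {x : ℝ} (hx : x ≤ 0) :
    marchenkoPasturDensity c x = 0 :=
  if_neg fun h => (hx.trans (sq_nonneg _)).not_gt h.1

lemma marchenkoPasturDensity_nonneg (c x : ℝ) : 0 ≤ marchenkoPasturDensity c x := by
  rcases le_or_gt x 0 with hx | hx
  · rw [marchenkoPasturDensity_of_nonpos c hx]
  · unfold marchenkoPasturDensity
    positivity

lemma edge_sub_le_edge_add (c : ℝ) : (1 - √c) ^ 2 ≤ (1 + √c) ^ 2 := by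
  nlinarith [sqrt_nonneg c]

lemma setIntegral_sqrt_edges_div_add (hc : 0 ≤ c) (ht : 0 ≤ t) :
    ∫ x in Ioo ((1 - √c) ^ 2) ((1 + √c) ^ 2),
      √(((1 + √c) ^ 2 - x) * (x - (1 - √c) ^ 2)) / (x + t) =
      π * (1 + c + t - √((1 + c + t) ^ 2 - 4 * c)) := by
  have hsq := sq_sqrt hc
  rw [← integral_Ioc_eq_integral_Ioo, ← intervalIntegral.integral_of_le (edge_sub_le_edge_add c),
    integral_sqrt_mul_div_add (edge_sub_le_edge_add c) (by positivity)]
  congr 3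
  · linear_combination hsq
  · linear_combination (√c ^ 2 + c - 2 + 2 * t) * hsq

lemma integrableOn_sqrt_edges_div_add (c : ℝ) (ht : 0 ≤ t) :
    IntegrableOn (fun x => √(((1 + √c) ^ 2 - x) * (x - (1 - √c) ^ 2)) / (x + t))
      (Ioo ((1 - √c) ^ 2) ((1 + √c) ^ 2)) := by
  rw [← integrableOn_Ioc_iff_integrableOn_Ioo,
    ← intervalIntegrable_iff_integrableOn_Ioc_of_le (edge_sub_le_edge_add c)]
  exact intervalIntegrable_sqrt_mul_div_add (edge_sub_le_edge_add c) (by positivity)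

lemma integrable_marchenkoPasturDensity (c : ℝ) : Integrable (marchenkoPasturDensity c) := by
  rw [marchenkoPasturDensity_eq_indicator, integrable_indicator_iff measurableSet_Ioo]
  refine ((integrableOn_sqrt_edges_div_add c le_rfl).const_mul (2 * π)⁻¹).congr
    (ae_of_all _ fun x => ?_)
  simp only [add_zero]
  field_simp

lemma integral_marchenkoPasturDensity (hc : 0 ≤ c) :
    ∫ x, marchenkoPasturDensity c x = min c 1 := by
  have hsqrt : √((1 + c + 0) ^ 2 - 4 * c) = |1 - c| := by
    rw [← sqrt_sq_eq_abs]
    ring_nf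
  have hmin : 1 + c - |1 - c| = 2 * min c 1 := by
    rw [two_mul, ← two_nsmul, two_nsmul_inf_eq_add_sub_abs_sub, add_comm c 1, abs_sub_comm]
  calc ∫ x, marchenkoPasturDensity c x
      = (2 * π)⁻¹ * ∫ x in Ioo ((1 - √c) ^ 2) ((1 + √c) ^ 2),
          √(((1 + √c) ^ 2 - x) * (x - (1 - √c) ^ 2)) / (x + 0) := by
        rw [marchenkoPasturDensity_eq_indicator, integral_indicator measurableSet_Ioo,
          ← integral_const_mul]
        refine setIntegral_congr_fun measurableSet_Ioo fun x _ => ?_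
        simp only [add_zero]
        field_simp
    _ = min c 1 := by
        rw [setIntegral_sqrt_edges_div_add hc le_rfl, hsqrt, add_zero, hmin]
        field_simp

lemma isProbabilityMeasure_marchenkoPastur (hc : 0 ≤ c) :
    IsProbabilityMeasure (marchenkoPastur c) := by
  constructor
  rw [marchenkoPastur_eq, Measure.add_apply, Measure.smul_apply, measure_univ, smul_eq_mul, mul_one,
    withDensity_apply _ MeasurableSet.univ, Measure.restrict_univ,
    ← ofReal_integral_eq_lintegral_ofReal (integrable_marchenkoPasturDensity c)
      (ae_of_all _ (marchenkoPasturDensity_nonneg c)),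
    integral_marchenkoPasturDensity hc, ← ENNReal.ofReal_add (le_max_right _ _) (by positivity),
    ENNReal.ofReal_eq_one]
  grind

lemma ae_nonneg_marchenkoPastur (c : ℝ) : ∀ᵐ x ∂marchenkoPastur c, 0 ≤ x := by
  rw [marchenkoPastur_eq, ae_add_measure_iff]
  constructor
  · refine Measure.ae_smul_measure ?_ _
    rw [ae_dirac_iff measurableSet_Ici]
  · rw [ae_withDensity_iff (measurable_marchenkoPasturDensity c).ennreal_ofReal]
    refine ae_of_all _ fun x hx => le_of_not_ge fun hneg => hx ?_
    rw [marchenkoPasturDensity_of_nonpos c hneg, ENNReal.ofReal_zero]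

lemma integral_marchenkoPasturDensity_mul_inv_add (hc : 0 ≤ c) (ht : 0 < t) :
    ∫ x, marchenkoPasturDensity c x * (x + t)⁻¹ =
      (min c 1 - (1 + c + t - √((1 + c + t) ^ 2 - 4 * c)) / 2) / t := by
  have hpartial : ∀ x, marchenkoPasturDensity c x * (x + t)⁻¹ =
      t⁻¹ * marchenkoPasturDensity c x - (Ioo ((1 - √c) ^ 2) ((1 + √c) ^ 2)).indicator
        (fun x => (2 * π * t)⁻¹ * (√(((1 + √c) ^ 2 - x) * (x - (1 - √c) ^ 2)) / (x + t))) x := by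
    intro x
    rw [marchenkoPasturDensity_eq_indicator]
    by_cases hx : x ∈ Ioo ((1 - √c) ^ 2) ((1 + √c) ^ 2)
    · have hx_pos : 0 < x := (sq_nonneg _).trans_lt hx.1
      rw [indicator_of_mem hx, indicator_of_mem hx]
      field_simp
      ring
    · rw [indicator_of_notMem hx, indicator_of_notMem hx, zero_mul, mul_zero, sub_zero]
  simp only [hpartial]
  rw [integral_sub ((integrable_marchenkoPasturDensity c).const_mul _)
      ((integrable_indicator_iff measurableSet_Ioo).2
        ((integrableOn_sqrt_edges_div_add c ht.le).const_mul _)),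
    integral_const_mul, integral_marchenkoPasturDensity hc, integral_indicator measurableSet_Ioo,
    integral_const_mul, setIntegral_sqrt_edges_div_add hc ht.le]
  field_simp

lemma stieltjesAtNeg_marchenkoPastur (hc : 0 ≤ c) (ht : 0 < t) :
    stieltjesAtNeg (marchenkoPastur c) t =
      (1 - c - t + √((1 + c + t) ^ 2 - 4 * c)) / (2 * t) := by
  have := isProbabilityMeasure_marchenkoPastur hc
  have hintegrable := integrable_inv_add (ae_nonneg_marchenkoPastur c) ht
  rw [marchenkoPastur_eq] at hintegrable
  rw [stieltjesAtNeg, marchenkoPastur_eq,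
    integral_add_measure hintegrable.left_of_add_measure hintegrable.right_of_add_measure,
    integral_smul_measure, integral_dirac, ENNReal.toReal_ofReal (le_max_right _ _), smul_eq_mul,
    integral_withDensity_eq_integral_toReal_smul
      (measurable_marchenkoPasturDensity c).ennreal_ofReal
      (ae_of_all _ fun _ => ENNReal.ofReal_lt_top)]
  simp only [ENNReal.toReal_ofReal (marchenkoPasturDensity_nonneg _ _), smul_eq_mul]
  rw [integral_marchenkoPasturDensity_mul_inv_add hc ht]
  have hmass : max (1 - c) 0 + min c 1 = 1 := by grind
  field_simp
  linear_combination 2 * t * hmass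

lemma selfConsistencyDefect_stieltjesAtNeg_marchenkoPastur (hc : 0 ≤ c) (ht : 0 < t) :
    selfConsistencyDefect c t (stieltjesAtNeg (marchenkoPastur c) t) = 0 := by
  have hnonneg := stieltjesAtNeg_nonneg (ae_nonneg_marchenkoPastur c) ht
  have hformula := stieltjesAtNeg_marchenkoPastur hc ht
  have hsqrt : √((1 + c + t) ^ 2 - 4 * c) ^ 2 = (1 + c + t) ^ 2 - 4 * c :=
    sq_sqrt (by nlinarith [sq_nonneg (1 - c)])
  set S := stieltjesAtNeg (marchenkoPastur c) t
  have hroot : √((1 + c + t) ^ 2 - 4 * c) = 2 * t * S - (1 - c - t) := by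
    rw [hformula]
    field_simp
    ring
  rw [hroot] at hsqrt
  have hquad : (1 - t * S) * (1 + S) - c * S = 0 := by
    refine (mul_eq_zero_iff_left (a := 4 * t) (by positivity)).1 ?_
    linear_combination -hsqrt
  rw [selfConsistencyDefect]
  field_simp
  linear_combination hquad

end MarchenkoPasturLaw

section ConvergenceOfIntegrals

variable {E ι : Type*} [TopologicalSpace E] [MeasurableSpace E] [OpensMeasurableSpace E]

/-- The bounded continuous functions whose integrals against `μ i` converge along `l` to their
integral against `ν`. -/
def convergentIntegrals (μ : ι → ProbabilityMeasure E) (l : Filter ι) (ν : ProbabilityMeasure E) :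
    Submodule ℝ (BoundedContinuousFunction E ℝ) where
  carrier := {f | Tendsto (fun i => ∫ x, f x ∂(μ i : Measure E)) l (nhds (∫ x, f x ∂ν))}
  zero_mem' := by simp [tendsto_const_nhds]
  add_mem' {f g} hf hg := by
    simpa [integral_add (f.integrable _) (g.integrable _)] using hf.add hg
  smul_mem' a f hf := by
    simpa [integral_const_mul] using hf.const_mul a

variable {μ : ι → ProbabilityMeasure E} {l : Filter ι} {ν : ProbabilityMeasure E}

lemma mem_convergentIntegrals {f : BoundedContinuousFunction E ℝ} :
    f ∈ convergentIntegrals μ l ν ↔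
      Tendsto (fun i => ∫ x, f x ∂(μ i : Measure E)) l (nhds (∫ x, f x ∂ν)) :=
  Iff.rfl

lemma one_mem_convergentIntegrals : 1 ∈ convergentIntegrals μ l ν := by
  simp [mem_convergentIntegrals, tendsto_const_nhds]

lemma dist_integral_le_dist (ρ : ProbabilityMeasure E) (f g : BoundedContinuousFunction E ℝ) :
    dist (∫ x, f x ∂(ρ : Measure E)) (∫ x, g x ∂ρ) ≤ dist f g := by
  rw [dist_eq_norm, dist_eq_norm, ← integral_sub (f.integrable _) (g.integrable _)]
  simpa using (f - g).norm_integral_le_norm (ρ : Measure E)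

lemma isClosed_convergentIntegrals :
    IsClosed (convergentIntegrals μ l ν : Set (BoundedContinuousFunction E ℝ)) := by
  refine isClosed_of_closure_subset fun f hf => ?_
  have hunif : TendstoUniformly
      (fun (g : BoundedContinuousFunction E ℝ) i => ∫ x, g x ∂(μ i : Measure E))
      (fun i => ∫ x, f x ∂(μ i : Measure E)) (nhdsWithin f (convergentIntegrals μ l ν)) := by
    rw [Metric.tendstoUniformly_iff]
    intro ε hε
    filter_upwards [mem_nhdsWithin_of_mem_nhds (Metric.ball_mem_nhds f hε)] with g hg i
    rw [dist_comm]
    exact (dist_integral_le_dist (μ i) g f).trans_lt hg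
  have := mem_closure_iff_nhdsWithin_neBot.1 hf
  refine hunif.tendsto_of_eventually_tendsto eventually_mem_nhdsWithin ?_
  refine Metric.tendsto_nhds.2 fun ε hε => ?_
  filter_upwards [mem_nhdsWithin_of_mem_nhds (Metric.ball_mem_nhds f hε)] with g hg
  exact (dist_integral_le_dist ν g f).trans_lt hg

lemma mem_convergentIntegrals_congr {f g : BoundedContinuousFunction E ℝ} {s : Set E}
    (hμ : ∀ i, ∀ᵐ x ∂(μ i : Measure E), x ∈ s) (hν : ∀ᵐ x ∂(ν : Measure E), x ∈ s)
    (hfg : Set.EqOn f g s) (hf : f ∈ convergentIntegrals μ l ν) :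
    g ∈ convergentIntegrals μ l ν := by
  rw [mem_convergentIntegrals] at hf ⊢
  rw [← integral_congr_ae (hν.mono hfg)]
  exact hf.congr fun i => integral_congr_ae ((hμ i).mono hfg)

end ConvergenceOfIntegrals

section StieltjesContinuity

variable {ι : Type*}

/-- The bounded continuous function on `ℝ` which equals `(x + t)⁻¹` for `x ≥ 0` and is constant on
the negative half-line. -/
noncomputable def clampedInvAdd {t : ℝ} (ht : 0 < t) : BoundedContinuousFunction ℝ ℝ :=
  .ofNormedAddCommGroup (fun x => (max x 0 + t)⁻¹)
    (Continuous.inv₀ (by fun_prop) fun x => by positivity) t⁻¹ fun x => by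
      rw [norm_inv, Real.norm_of_nonneg (by positivity)]
      exact inv_anti₀ ht (le_add_of_nonneg_left (le_max_right x 0))

lemma clampedInvAdd_apply {t : ℝ} (ht : 0 < t) (x : ℝ) :
    clampedInvAdd ht x = (max x 0 + t)⁻¹ := rfl

lemma clampedInvAdd_of_nonneg {t x : ℝ} (ht : 0 < t) (hx : 0 ≤ x) :
    clampedInvAdd ht x = (x + t)⁻¹ := by
  rw [clampedInvAdd_apply, max_eq_left hx]

lemma norm_clampedInvAdd_le {t : ℝ} (ht : 0 < t) : ‖clampedInvAdd ht‖ ≤ t⁻¹ :=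
  BoundedContinuousFunction.norm_ofNormedAddCommGroup_le _ (by positivity) _

lemma clampedInvAdd_sub_clampedInvAdd {t u : ℝ} (ht : 0 < t) (hu : 0 < u) :
    clampedInvAdd ht - clampedInvAdd hu = (u - t) • (clampedInvAdd ht * clampedInvAdd hu) := by
  ext x
  have hxt : max x 0 + t ≠ 0 := by positivity
  have hxu : max x 0 + u ≠ 0 := by positivity
  simp only [BoundedContinuousFunction.coe_sub, BoundedContinuousFunction.coe_smul,
    BoundedContinuousFunction.coe_mul, Pi.sub_apply, Pi.mul_apply, clampedInvAdd_apply,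
    smul_eq_mul]
  field_simp
  ring

lemma tendsto_clampedInvAdd {t : ℝ} (ht : 0 < t) {u : ℕ → ℝ} (hu : ∀ n, 0 < u n)
    (hut : Tendsto u atTop (nhds t)) :
    Tendsto (fun n => clampedInvAdd (hu n)) atTop (nhds (clampedInvAdd ht)) := by
  refine tendsto_iff_norm_sub_tendsto_zero.2 <| squeeze_zero (fun n => norm_nonneg _)
    (g := fun n => |t - u n| * ((u n)⁻¹ * t⁻¹)) (fun n => ?_) ?_
  · rw [clampedInvAdd_sub_clampedInvAdd, norm_smul, Real.norm_eq_abs]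
    gcongr
    exact (norm_mul_le _ _).trans <| mul_le_mul (norm_clampedInvAdd_le _)
      (norm_clampedInvAdd_le _) (norm_nonneg _) (inv_nonneg.2 (hu n).le)
  · simpa using (hut.const_sub t).abs.mul ((hut.inv₀ ht.ne').mul_const t⁻¹)

variable {μ : ι → ProbabilityMeasure ℝ} {ν : ProbabilityMeasure ℝ}

lemma integral_clampedInvAdd {ρ : Measure ℝ} (hρ : ∀ᵐ x ∂ρ, 0 ≤ x) {t : ℝ} (ht : 0 < t) :
    ∫ x, clampedInvAdd ht x ∂ρ = stieltjesAtNeg ρ t :=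
  integral_congr_ae <| hρ.mono fun _ hx => clampedInvAdd_of_nonneg ht hx

lemma clampedInvAdd_one_pow_mul_mem_convergentIntegrals {l : Filter ι}
    (h : ∀ q : ℚ, ∀ hq : (0 : ℝ) < q, clampedInvAdd hq ∈ convergentIntegrals μ l ν) (k : ℕ) :
    ∀ q : ℚ, ∀ hq : (0 : ℝ) < q,
      clampedInvAdd one_pos ^ k * clampedInvAdd hq ∈ convergentIntegrals μ l ν := by
  induction k with
  | zero => simpa using h
  | succ k ih =>
    have hne : ∀ q : ℚ, q ≠ 1 → ∀ hq : (0 : ℝ) < q,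
        clampedInvAdd one_pos ^ (k + 1) * clampedInvAdd hq ∈ convergentIntegrals μ l ν := by
      intro q hq1 hq
      have hq1' : (q : ℝ) - 1 ≠ 0 := sub_ne_zero.2 (by exact_mod_cast hq1)
      have heq : clampedInvAdd one_pos ^ (k + 1) * clampedInvAdd hq = ((q : ℝ) - 1)⁻¹ •
          (clampedInvAdd one_pos ^ k * clampedInvAdd one_pos -
            clampedInvAdd one_pos ^ k * clampedInvAdd hq) := by
        rw [← mul_sub, clampedInvAdd_sub_clampedInvAdd, mul_smul_comm, inv_smul_smul₀ hq1',
          pow_succ, mul_assoc]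
      rw [heq]
      exact Submodule.smul_mem _ _ (sub_mem (by simpa using ih 1 (by simp)) (ih q hq))
    intro q hq
    rcases ne_or_eq q 1 with hq1 | rfl
    · exact hne q hq1 hq
    have hpos : ∀ n : ℕ, (0 : ℝ) < ((1 + 1 / (n + 1) : ℚ) : ℝ) := fun n => by positivity
    refine isClosed_convergentIntegrals.mem_of_tendsto (tendsto_const_nhds.mul
      (tendsto_clampedInvAdd hq hpos ?_)) (Eventually.of_forall fun n => hne _ ?_ _)
    · simpa using tendsto_one_div_add_atTop_nhds_zero_nat (𝕜 := ℝ).const_add 1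
    · exact ne_of_gt (lt_add_of_pos_right 1 (by positivity))

/-- An injective bounded continuous function on `ℝ` equal to `(x + 1)⁻¹` for `x ≥ 0`. -/
noncomputable def injectiveInvAddOne : BoundedContinuousFunction ℝ ℝ :=
  .ofNormedAddCommGroup (fun x => 1 - x / (1 + |x|))
    (continuous_const.sub (continuous_id.div (by fun_prop) fun x => by positivity)) 2 fun x => by
      have hx : |x / (1 + |x|)| ≤ 1 := by
        rw [abs_div, abs_of_pos (by positivity : 0 < 1 + |x|)]
        exact div_le_one_of_le₀ (by linarith) (by positivity)
      rw [Real.norm_eq_abs, abs_le]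
      constructor <;> linarith [abs_le.1 hx]

lemma injectiveInvAddOne_of_nonneg {x : ℝ} (hx : 0 ≤ x) : injectiveInvAddOne x = (x + 1)⁻¹ := by
  change 1 - x / (1 + |x|) = (x + 1)⁻¹
  rw [abs_of_nonneg hx]
  field_simp
  ring

lemma injective_injectiveInvAddOne : Function.Injective injectiveInvAddOne := by
  intro x y hxy
  have h : x / (1 + |x|) = y / (1 + |y|) := sub_right_injective hxy
  have hx : (1 + |x|) ≠ 0 := by positivity
  have hy : (1 + |y|) ≠ 0 := by positivity
  rw [div_eq_div_iff hx hy] at h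
  rcases abs_cases x with ⟨hx, _⟩ | ⟨hx, _⟩ <;> rcases abs_cases y with ⟨hy, _⟩ | ⟨hy, _⟩ <;>
    rw [hx, hy] at h <;> nlinarith

/-- The algebra of polynomials in `injectiveInvAddOne`. -/
noncomputable def invAddOneAlgebra : StarSubalgebra ℝ (BoundedContinuousFunction ℝ ℝ) :=
  StarAlgebra.adjoin ℝ {injectiveInvAddOne}

lemma separatesPoints_invAddOneAlgebra :
    (invAddOneAlgebra.map
      (BoundedContinuousFunction.toContinuousMapStarₐ ℝ)).SeparatesPoints := by
  intro x y hxy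
  refine ⟨injectiveInvAddOne, ⟨injectiveInvAddOne.toContinuousMap, ?_, rfl⟩,
    injective_injectiveInvAddOne.ne hxy⟩
  exact ⟨injectiveInvAddOne, StarAlgebra.self_mem_adjoin_singleton ℝ _, rfl⟩

lemma invAddOneAlgebra_le_convergentIntegrals {l : Filter ι}
    (hμ : ∀ i, ∀ᵐ x ∂(μ i : Measure ℝ), 0 ≤ x) (hν : ∀ᵐ x ∂(ν : Measure ℝ), 0 ≤ x)
    (h : ∀ q : ℚ, 0 < q →
      Tendsto (fun i => stieltjesAtNeg (μ i) q) l (nhds (stieltjesAtNeg ν q))) :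
    Subalgebra.toSubmodule invAddOneAlgebra.toSubalgebra ≤ convergentIntegrals μ l ν := by
  have hstieltjes : ∀ q : ℚ, ∀ hq : (0 : ℝ) < q,
      clampedInvAdd hq ∈ convergentIntegrals μ l ν := fun q hq => by
    simpa only [mem_convergentIntegrals, integral_clampedInvAdd, hμ, hν] using
      h q (by exact_mod_cast hq)
  have hstar : star ({injectiveInvAddOne} : Set (BoundedContinuousFunction ℝ ℝ)) =
      {injectiveInvAddOne} := by
    rw [Set.star_singleton]
    congr
  rw [invAddOneAlgebra, StarAlgebra.adjoin_toSubalgebra, hstar, Set.union_self,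
    Algebra.adjoin_eq_span, Submodule.span_le]
  intro g hg
  obtain ⟨k, rfl⟩ := Submonoid.mem_closure_singleton.1 hg
  rcases k with _ | k
  · exact one_mem_convergentIntegrals
  refine mem_convergentIntegrals_congr (s := Set.Ici 0) hμ hν (fun x hx => ?_)
    (clampedInvAdd_one_pow_mul_mem_convergentIntegrals hstieltjes k 1 (by simp))
  simp [clampedInvAdd_of_nonneg _ hx, injectiveInvAddOne_of_nonneg hx, pow_succ]

lemma measureReal_norm_gt_le_two_mul {ρ : Measure ℝ} [IsProbabilityMeasure ρ] (hρ : ∀ᵐ x ∂ρ, 0 ≤ x)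
    {t : ℝ} (ht : 0 < t) :
    ρ.real {x | t < ‖x‖} ≤ 2 * (1 - t * stieltjesAtNeg ρ t) := by
  have hintegrable : Integrable (fun x => 1 - t * (x + t)⁻¹) ρ :=
    (integrable_const 1).sub ((integrable_inv_add hρ ht).const_mul t)
  have hsub : {x | t < ‖x‖} ≤ᵐ[ρ] {x | 1 / 2 ≤ 1 - t * (x + t)⁻¹} := by
    filter_upwards [hρ] with x hx htx
    change 1 / 2 ≤ 1 - t * (x + t)⁻¹
    have htx' : t < x := Real.norm_of_nonneg hx ▸ htx
    rw [← div_eq_mul_inv, le_sub_comm, div_le_iff₀ (by linarith)]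
    linarith
  have hmarkov := mul_meas_ge_le_integral_of_nonneg (μ := ρ)
    (f := fun x => 1 - t * (x + t)⁻¹) ?_ hintegrable (1 / 2)
  · rw [integral_sub (integrable_const 1) ((integrable_inv_add hρ ht).const_mul t),
      integral_const_mul] at hmarkov
    simp only [integral_const, probReal_univ, smul_eq_mul, mul_one] at hmarkov
    have hmono := ENNReal.toReal_mono (measure_ne_top ρ _) (measure_mono_ae hsub)
    change ρ.real _ ≤ ρ.real _ at hmono
    rw [stieltjesAtNeg]
    linarith
  · filter_upwards [hρ] with x hx
    change 0 ≤ 1 - t * (x + t)⁻¹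
    rw [sub_nonneg, ← div_eq_mul_inv]
    exact div_le_one_of_le₀ (by linarith) (by positivity)

lemma tendsto_mul_stieltjesAtNeg_atTop {ρ : Measure ℝ} [IsProbabilityMeasure ρ]
    (hρ : ∀ᵐ x ∂ρ, 0 ≤ x) :
    Tendsto (fun t => t * stieltjesAtNeg ρ t) atTop (nhds 1) := by
  have hdom : Tendsto (fun t => ∫ x, t * (x + t)⁻¹ ∂ρ) atTop (nhds (∫ _, 1 ∂ρ)) := by
    refine tendsto_integral_filter_of_dominated_convergence (fun _ => 1)
      (Eventually.of_forall fun t => by fun_prop) ?_ (integrable_const 1) ?_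
    · filter_upwards [eventually_gt_atTop 0] with t ht
      filter_upwards [hρ] with x hx
      rw [← div_eq_mul_inv, Real.norm_of_nonneg (by positivity)]
      exact div_le_one_of_le₀ (by linarith) (by positivity)
    · filter_upwards [hρ] with x hx
      have hlim : Tendsto (fun t => 1 - x * (x + t)⁻¹) atTop (nhds (1 - x * 0)) :=
        have hinv := (tendsto_atTop_add_const_left atTop x tendsto_id).inv_tendsto_atTop
        (hinv.const_mul x).const_sub 1
      rw [mul_zero, sub_zero] at hlim
      refine hlim.congr' ?_
      filter_upwards [eventually_gt_atTop 0] with t ht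
      field_simp
      ring
  simpa [stieltjesAtNeg, integral_const_mul] using hdom

variable {μ : ℕ → ProbabilityMeasure ℝ}

lemma limsup_measure_norm_gt_le (hμ : ∀ n, ∀ᵐ x ∂(μ n : Measure ℝ), 0 ≤ x) {t r : ℝ} (ht : 0 < t)
    (htr : t ≤ r) {x : ℝ} (h : Tendsto (fun n => stieltjesAtNeg (μ n) t) atTop (nhds x)) :
    limsup (fun n => (μ n : Measure ℝ) {x | r < ‖x‖}) atTop ≤
      ENNReal.ofReal (2 * (1 - t * x)) := by
  have hlim : Tendsto (fun n => ENNReal.ofReal (2 * (1 - t * stieltjesAtNeg (μ n) t))) atTop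
      (nhds (ENNReal.ofReal (2 * (1 - t * x)))) :=
    ENNReal.tendsto_ofReal (((h.const_mul t).const_sub 1).const_mul 2)
  refine (limsup_le_limsup (Eventually.of_forall fun n => ?_)).trans hlim.limsup_eq.le
  calc (μ n : Measure ℝ) {x | r < ‖x‖}
      ≤ (μ n : Measure ℝ) {x | t < ‖x‖} := measure_mono fun x hx => htr.trans_lt hx
    _ = ENNReal.ofReal ((μ n : Measure ℝ).real {x | t < ‖x‖}) := by simp
    _ ≤ _ := ENNReal.ofReal_le_ofReal (measureReal_norm_gt_le_two_mul (hμ n) ht)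

lemma isTightMeasureSet_of_tendsto_stieltjesAtNeg
    (hμ : ∀ n, ∀ᵐ x ∂(μ n : Measure ℝ), 0 ≤ x) (hν : ∀ᵐ x ∂(ν : Measure ℝ), 0 ≤ x)
    (h : ∀ m : ℕ, 0 < m →
      Tendsto (fun n => stieltjesAtNeg (μ n) m) atTop (nhds (stieltjesAtNeg ν m))) :
    IsTightMeasureSet (Set.range fun n => (μ n : Measure ℝ)) := by
  have hbound : Tendsto (fun r : ℝ => ENNReal.ofReal (2 * (1 - ⌊r⌋₊ * stieltjesAtNeg ν ⌊r⌋₊)))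
      atTop (nhds 0) := by
    have hfloor := (tendsto_mul_stieltjesAtNeg_atTop hν).comp
      (tendsto_natCast_atTop_atTop.comp (tendsto_nat_floor_atTop (α := ℝ)))
    simpa using ENNReal.tendsto_ofReal ((hfloor.const_sub 1).const_mul 2)
  refine isTightMeasureSet_range_of_tendsto_limsup_measure_norm_gt <|
    tendsto_of_tendsto_of_tendsto_of_le_of_le' tendsto_const_nhds hbound
      (Eventually.of_forall fun _ => zero_le) ?_
  filter_upwards [eventually_ge_atTop 1] with r hr
  have hfloor : 0 < ⌊r⌋₊ := Nat.floor_pos.2 hr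
  exact limsup_measure_norm_gt_le hμ (by exact_mod_cast hfloor) (Nat.floor_le (by linarith))
    (h _ hfloor)

theorem tendsto_of_tendsto_stieltjesAtNeg
    (hμ : ∀ n, ∀ᵐ x ∂(μ n : Measure ℝ), 0 ≤ x) (hν : ∀ᵐ x ∂(ν : Measure ℝ), 0 ≤ x)
    (h : ∀ q : ℚ, 0 < q →
      Tendsto (fun n => stieltjesAtNeg (μ n) q) atTop (nhds (stieltjesAtNeg ν q))) :
    Tendsto μ atTop (nhds ν) := by
  have htight := isTightMeasureSet_of_tendsto_stieltjesAtNeg hμ hν fun m hm => by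
    simpa using h m (by exact_mod_cast hm)
  exact ProbabilityMeasure.tendsto_of_tight_of_separatesPoints ℝ htight
    separatesPoints_invAddOneAlgebra (invAddOneAlgebra_le_convergentIntegrals hμ hν h)

end StieltjesContinuity

section EmpiricalMeasure

variable {n : Type*} [Fintype n]

/-- The empirical distribution of a finite family of points: the uniform probability measure on
the family, counted with multiplicity. It is the zero measure for the empty family. -/
noncomputable def empiricalMeasure (x : n → ℝ) : Measure ℝ :=
  (Fintype.card n : ENNReal)⁻¹ • ∑ i, Measure.dirac (x i)

instance [Nonempty n] (x : n → ℝ) : IsProbabilityMeasure (empiricalMeasure x) :=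
  ⟨by simp [empiricalMeasure, ENNReal.inv_mul_cancel]⟩

lemma integral_empiricalMeasure (x : n → ℝ) (f : ℝ → ℝ) :
    ∫ y, f y ∂empiricalMeasure x = (Fintype.card n : ℝ)⁻¹ * ∑ i, f (x i) := by
  rw [empiricalMeasure, integral_smul_measure, integral_finsetSum_measure]
  · simp
  · exact fun i _ => integrable_dirac (by simp)

lemma ae_nonneg_empiricalMeasure {x : n → ℝ} (hx : ∀ i, 0 ≤ x i) :
    ∀ᵐ y ∂empiricalMeasure x, 0 ≤ y :=
  Measure.ae_smul_measure (by
    rw [ae_finsetSum_measure_iff]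
    exact fun i _ => (ae_dirac_iff measurableSet_Ici).2 (hx i)) _

variable {𝕜 : Type*} [RCLike 𝕜] [DecidableEq n] [Nonempty n] {A : Matrix n n 𝕜} {t : ℝ}

lemma stieltjesAtNeg_empiricalMeasure_eigenvalues (hA : A.PosSemidef) (ht : 0 < t) :
    stieltjesAtNeg (empiricalMeasure fun i => hA.isHermitian.eigenvalues i / Fintype.card n) t =
      RCLike.re (negResolvent (Fintype.card n * t) A).trace := by
  have hcard : (0 : ℝ) < Fintype.card n := by exact_mod_cast Fintype.card_pos
  rw [re_trace_negResolvent (by positivity) hA, stieltjesAtNeg, integral_empiricalMeasure,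
    Finset.mul_sum]
  refine Finset.sum_congr rfl fun i _ => ?_
  rw [← mul_inv, mul_add, mul_div_cancel₀ _ hcard.ne']

lemma tendsto_average_eigenvalues_of_tendsto_re_trace_negResolvent
    {A : ∀ d : ℕ, Matrix (Fin d) (Fin d) 𝕜} (hA : ∀ d, (A d).PosSemidef) {ν : Measure ℝ}
    [IsProbabilityMeasure ν] (hν : ∀ᵐ x ∂ν, 0 ≤ x)
    (h : ∀ q : ℚ, 0 < q → Tendsto (fun d : ℕ => RCLike.re (negResolvent (d * q) (A d)).trace)
      atTop (nhds (stieltjesAtNeg ν q))) (f : BoundedContinuousFunction ℝ ℝ) :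
    Tendsto (fun d : ℕ => (1 / d : ℝ) * ∑ i, f ((hA d).isHermitian.eigenvalues i / d)) atTop
      (nhds (∫ x, f x ∂ν)) := by
  let μ : ℕ → ProbabilityMeasure ℝ := fun d =>
    ⟨empiricalMeasure fun i => (hA (d + 1)).isHermitian.eigenvalues i / Fintype.card (Fin (d + 1)),
      inferInstance⟩
  have hμ : ∀ d, ∀ᵐ x ∂(μ d : Measure ℝ), 0 ≤ x := fun d =>
    ae_nonneg_empiricalMeasure fun i =>
      div_nonneg ((hA (d + 1)).eigenvalues_nonneg i) (Nat.cast_nonneg _)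
  have hweak : Tendsto μ atTop (nhds (⟨ν, inferInstance⟩ : ProbabilityMeasure ℝ)) := by
    refine tendsto_of_tendsto_stieltjesAtNeg hμ hν fun q hq => ?_
    refine ((tendsto_add_atTop_iff_nat 1).2 (h q hq)).congr fun d => ?_
    simpa [μ] using (stieltjesAtNeg_empiricalMeasure_eigenvalues (hA (d + 1))
      (by exact_mod_cast hq : (0 : ℝ) < q)).symm
  rw [← tendsto_add_atTop_iff_nat 1]
  refine (ProbabilityMeasure.tendsto_iff_forall_integral_tendsto.1 hweak f).congr fun d => ?_
  simp [μ, integral_empiricalMeasure]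

end EmpiricalMeasure

theorem marchenko_pastur_strong_law_general {Ω : Type*} [MeasurableSpace Ω] (P : Measure Ω)
    [IsProbabilityMeasure P] (c : ℝ) (s : ℕ → ℕ)
    (hsc : Tendsto (fun d : ℕ => (s d : ℝ) / d) atTop (nhds c))
    (X : ∀ d : ℕ, Ω → Matrix (Fin d) (Fin (s d)) ℂ) (hX : ∀ d, IsGinibre (X d) P) :
    ∀ᵐ ω ∂P, ∀ f : BoundedContinuousFunction ℝ ℝ,
      Tendsto (fun d : ℕ => (1 / d : ℝ) * ∑ i : Fin d,
          f ((Matrix.isHermitian_mul_conjTranspose_self (X d ω)).eigenvalues i / d))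
        atTop (nhds (∫ x, f x ∂(marchenkoPastur c))) := by
  have hc : 0 ≤ c := ge_of_tendsto' hsc fun d => by positivity
  have hprob : IsProbabilityMeasure (marchenkoPastur c) := isProbabilityMeasure_marchenkoPastur hc
  have hstieltjes : ∀ᵐ ω ∂P, ∀ q : ℚ, 0 < q →
      Tendsto (fun d : ℕ => RCLike.re (negResolvent (d * q) (X d ω * (X d ω).conjTranspose)).trace)
        atTop (nhds (stieltjesAtNeg (marchenkoPastur c) q)) := by
    refine ae_all_iff.2 fun q => eventually_imp_distrib_left.2 fun hq => ?_
    have hq' : (0 : ℝ) < q := by exact_mod_cast hq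
    exact ae_tendsto_re_trace_negResolvent hX hc hsc hq'
      (stieltjesAtNeg_nonneg (ae_nonneg_marchenkoPastur c) hq')
      (selfConsistencyDefect_stieltjesAtNeg_marchenkoPastur hc hq')
  filter_upwards [hstieltjes] with ω hω f
  exact tendsto_average_eigenvalues_of_tendsto_re_trace_negResolvent
    (fun d => Matrix.posSemidef_self_mul_conjTranspose (X d ω)) (ae_nonneg_marchenkoPastur c) hω f

/-- **Marčenko–Pastur theorem, almost sure weak convergence.**  Let `s_d ∼ c·d` and let `X_d` be
`d × s_d` random matrices whose entries (over all `d`) form an i.i.d. family of standard complex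
Gaussian variables; set `W_d = X_d X_d*`.  Then, almost surely, the empirical eigenvalue
distribution of `W_d/d` converges weakly to `π_c`: for every bounded continuous `f : ℝ → ℝ`,
`(1/d) Σ_i f(λ_i(W_d)/d) → ∫ f dπ_c`. -/
theorem marchenko_pastur_strong_law
    {Ω : Type*} [MeasurableSpace Ω] (P : Measure Ω) [IsProbabilityMeasure P]
    (c : ℝ) (hc : 0 < c) (s : ℕ → ℕ) (hs : ∀ d, 0 < s d)
    (hsc : Tendsto (fun d : ℕ => (s d : ℝ) / d) atTop (nhds c))
    (X : ∀ d : ℕ, Ω → Matrix (Fin d) (Fin (s d)) ℂ)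
    (hindep : iIndepFun
      (fun (q : Σ d : ℕ, Fin d × Fin (s d)) ω => X q.1 ω q.2.1 q.2.2) P)
    (hgauss : ∀ q : Σ d : ℕ, Fin d × Fin (s d),
      Measure.map (fun ω => X q.1 ω q.2.1 q.2.2) P = stdComplexGaussian) :
    ∀ᵐ ω ∂P, ∀ f : BoundedContinuousFunction ℝ ℝ,
      Tendsto (fun d : ℕ => (1 / d : ℝ) * ∑ i : Fin d,
          f ((Matrix.isHermitian_mul_conjTranspose_self (X d ω)).eigenvalues i / d))
        atTop (nhds (∫ x, f x ∂(marchenkoPastur c))) :=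
  marchenko_pastur_strong_law_general P c s hsc X fun d =>
    ⟨hindep.precomp (sigma_mk_injective (i := d)), fun p => hgauss ⟨d, p⟩⟩
end
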